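/- arXiv:1707.06047 — 6 statements merged into one kernel-verified Lean document; each statement's English description precedes it below -/
import Mathlib

section
/- Let s and k be natural numbers with k ≥ 3 and 1 ≤ s ≤ (k²−1)/2. Then for each ε > 0 one has I_{s,k,1}(X) ≪ X^{s+ε}, i.e. there is a constant C = C(s,k,ε) such that I_{s,k,1}(X) ≤ C·X^{s+ε} for all sufficiently large real X. -/
open Finset

/-- `vinogradovSliceCount s k r X` is the number of integral solutions of the system
`x_1^j + ⋯ + x_s^j = y_1^j + ⋯ + y_s^j` for `1 ≤ j ≤ k`, `j ≠ r`, with `1 ≤ x_i, y_i ≤ X`. -/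
noncomputable def vinogradovSliceCount (s k r : ℕ) (X : ℝ) : ℕ :=
  {p : (Fin s → ℤ) × (Fin s → ℤ) |
      (∀ i, 1 ≤ p.1 i ∧ (p.1 i : ℝ) ≤ X) ∧
      (∀ i, 1 ≤ p.2 i ∧ (p.2 i : ℝ) ≤ X) ∧
      ∀ j ∈ Finset.Icc 1 k, j ≠ r →
        ∑ i, (p.1 i) ^ j = ∑ i, (p.2 i) ^ j}.ncard

namespace VMV
open Polynomial

section algebra
variable {p : ℕ} [Fact p.Prime]

/-- Curves congruent to the moment curve modulo `p`. -/
def Good {k : ℕ} (φ : Fin k → ℤ_[p][X]) : Prop :=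
  ∀ j, (φ j).map PadicInt.toZMod = X ^ (j.val + 1)

/-- The matrix of Taylor coefficients at `ξ`. -/
noncomputable def wmat {l : ℕ} (ψ : Fin l → ℤ_[p][X]) (ξ : ℤ_[p]) : Matrix (Fin l) (Fin l) ℤ_[p] :=
  Matrix.of fun i j => (taylor ξ (ψ i)).coeff (j.val + 1)

lemma comb {l : ℕ} (ψ : Fin l → ℤ_[p][X]) (ξ : ℤ_[p]) (hdet : IsUnit (wmat ψ ξ).det) :
    ∃ (N : Matrix (Fin l) (Fin l) ℤ_[p]) (c : Fin l → ℤ_[p]) (Q : Fin l → ℤ_[p][X]),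
      ∀ j, ∑ i, C (N j i) * taylor ξ (ψ i) = C (c j) + X ^ (j.val + 1) + X ^ (l + 1) * Q j := by
  have hN := Matrix.nonsing_inv_mul _ hdet
  set N := (wmat ψ ξ)⁻¹ with hNdef
  have key : ∀ j : Fin l, (X : ℤ_[p][X]) ^ (l + 1) ∣
      (∑ i, C (N j i) * taylor ξ (ψ i)) - C ((∑ i, C (N j i) * taylor ξ (ψ i)).coeff 0)
        - X ^ (j.val + 1) := by
    intro j
    rw [X_pow_dvd_iff]
    intro d hd
    rcases d with _ | d
    · simp
    · have hd' : d < l := by omega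
      have h1 := congrFun (congrFun hN j) ⟨d, hd'⟩
      rw [Matrix.mul_apply] at h1
      simp only [wmat, Matrix.of_apply] at h1
      simp only [coeff_sub, finsetSum_coeff, coeff_C_mul, coeff_C_succ, coeff_X_pow, sub_zero]
      rw [h1, Matrix.one_apply]
      by_cases hjd : j = ⟨d, hd'⟩
      · subst hjd; simp
      · have : ¬ (d + 1 = j.val + 1) := by
          intro h; apply hjd; ext; simp; omega
        simp only [hjd, if_false, this]; simp
  choose Q hQ using key
  refine ⟨N, fun j => (∑ i, C (N j i) * taylor ξ (ψ i)).coeff 0, Q, fun j => ?_⟩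
  rw [← hQ j]; ring

lemma comb_transfer {l : ℕ} (ψ : Fin l → ℤ_[p][X]) (ξ : ℤ_[p]) (N : Matrix (Fin l) (Fin l) ℤ_[p])
    {s : ℕ} (x y : Fin s → ℤ_[p]) (d : ℤ_[p])
    (h : ∀ i, d ∣ ∑ t, ((ψ i).eval (x t) - (ψ i).eval (y t))) (j : Fin l) :
    d ∣ ∑ t, ((∑ i, C (N j i) * taylor ξ (ψ i)).eval (x t - ξ)
        - (∑ i, C (N j i) * taylor ξ (ψ i)).eval (y t - ξ)) := by
  have : ∑ t, ((∑ i, C (N j i) * taylor ξ (ψ i)).eval (x t - ξ)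
        - (∑ i, C (N j i) * taylor ξ (ψ i)).eval (y t - ξ))
      = ∑ i, N j i * ∑ t, ((ψ i).eval (x t) - (ψ i).eval (y t)) := by
    simp only [eval_finsetSum, eval_mul, eval_C, taylor_eval, sub_add_cancel, mul_sum]
    rw [sum_comm]
    apply sum_congr rfl; intro t _
    rw [← sum_sub_distrib]
    apply sum_congr rfl; intro i _
    ring
  rw [this]
  exact dvd_sum fun i _ => Dvd.dvd.mul_left (h i) _

lemma rescale {l : ℕ} (ψ : Fin l → ℤ_[p][X]) (ξ : ℤ) (hdet : IsUnit (wmat ψ (ξ : ℤ_[p])).det)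
    (a : ℕ) (ha : 1 ≤ a) :
    ∃ χ : Fin l → ℤ_[p][X], Good χ ∧ ∀ (s : ℕ) (x y : Fin s → ℤ) (B : ℕ),
      (∀ i, (p : ℤ_[p]) ^ B ∣ ∑ t, ((ψ i).eval ((ξ + (p : ℤ) ^ a * x t : ℤ) : ℤ_[p])
          - (ψ i).eval ((ξ + (p : ℤ) ^ a * y t : ℤ) : ℤ_[p]))) →
      ∀ j : Fin l, (p : ℤ_[p]) ^ B ∣ (p : ℤ_[p]) ^ (a * (j.val + 1)) *
        ∑ t, ((χ j).eval (x t : ℤ_[p]) - (χ j).eval (y t : ℤ_[p])) := by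
  obtain ⟨N, c, Q, hQ⟩ := comb ψ ξ hdet
  refine ⟨fun j => X ^ (j.val + 1) + C ((p : ℤ_[p]) ^ (a * (l - j.val))) * X ^ (l + 1) *
    (Q j).comp (C ((p : ℤ_[p]) ^ a) * X), ?_, ?_⟩
  · intro j
    have : 1 ≤ a * (l - j.val) := Nat.mul_pos ha (by have := j.2; omega)
    simp [Polynomial.map_add, Polynomial.map_mul]
    have := j.2
    omega
  · intro s x y B h j
    have := comb_transfer ψ ξ N (fun t => ((ξ + (p : ℤ) ^ a * x t : ℤ) : ℤ_[p]))
      (fun t => ((ξ + (p : ℤ) ^ a * y t : ℤ) : ℤ_[p])) _ h j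
    convert this using 1
    rw [mul_sum]
    apply sum_congr rfl
    intro t _
    rw [hQ j]
    have e : a * (l + 1) = a * (j.val + 1) + a * (l - j.val) := by
      rw [← mul_add]; congr 1; have := j.2; omega
    have key : ∀ u : ℤ_[p], ((p : ℤ_[p]) ^ a * u) ^ (l + 1) =
      (p : ℤ_[p]) ^ (a * (j.val + 1)) * ((p : ℤ_[p]) ^ (a * (l - j.val)) * u ^ (l + 1)) := by
      intro u
      rw [mul_pow, ← pow_mul, e, pow_add]; ring
    simp only [Int.cast_add, Int.cast_mul, Int.cast_pow, Int.cast_natCast, add_sub_cancel_left,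
      eval_add, eval_mul, eval_C, eval_pow, eval_X, eval_comp]
    rw [key, key, mul_pow, mul_pow, ← pow_mul]
    ring

lemma norm_at {k : ℕ} (φ : Fin k → ℤ_[p][X]) (hφ : Good φ) (η : ℤ)
    (hdet : IsUnit (wmat φ (η : ℤ_[p])).det) :
    ∃ θ : Fin k → ℤ_[p][X],
      (∀ j, (θ j).map PadicInt.toZMod = taylor (-(η : ZMod p)) (X ^ (j.val + 1))) ∧
      (∀ (j : Fin k) (b : ℕ) (y : ℤ), (p : ℤ) ^ b ∣ y - η →
        (p : ℤ_[p]) ^ (b * (j.val + 1)) ∣ (θ j).eval (y : ℤ_[p])) ∧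
      (∀ (s : ℕ) (x y : Fin s → ℤ) (B : ℕ),
      (∀ i, (p : ℤ_[p]) ^ B ∣ ∑ t, ((φ i).eval (x t : ℤ_[p]) - (φ i).eval (y t : ℤ_[p]))) →
      ∀ j : Fin k, (p : ℤ_[p]) ^ B ∣
        ∑ t, ((θ j).eval (x t : ℤ_[p]) - (θ j).eval (y t : ℤ_[p]))) := by
  obtain ⟨N, c, Q, hQ⟩ := comb φ η hdet
  refine ⟨fun j => taylor (-(η : ℤ_[p])) (∑ i, C (N j i) * taylor (η : ℤ_[p]) (φ i) - C (c j)),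
    ?_, ?_, ?_⟩
  · intro j
    rw [map_taylor]
    simp only [map_neg, map_intCast]
    congr 1
    ext d
    rcases d with _ | d
    · rw [hQ j]; simp
    · by_cases hd : d < k
      · rw [hQ j]
        simp only [Polynomial.map_sub, Polynomial.map_add, map_C, Polynomial.map_pow, map_X,
          Polynomial.map_mul, coeff_sub, coeff_add, coeff_C_succ, coeff_X_pow]
        rw [coeff_X_pow_mul']
        simp [show ¬ (k ≤ d) by omega]
      · rw [coeff_X_pow, if_neg (by have := j.2; omega)]
        apply coeff_eq_zero_of_natDegree_lt
        refine lt_of_le_of_lt (b := k) ?_ (by omega)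
        rw [Polynomial.map_sub, map_C, natDegree_sub_C, Polynomial.map_sum]
        apply natDegree_sum_le_of_forall_le
        intro i _
        rw [Polynomial.map_mul, map_C, map_taylor, hφ i]
        refine (natDegree_C_mul_le _ _).trans ?_
        rw [natDegree_taylor]
        refine (natDegree_X_pow_le _).trans ?_
        have := i.2; omega
  · intro j b y hy
    obtain ⟨u, hu⟩ := hy
    show _ ∣ eval (y : ℤ_[p])
      (taylor (-(η : ℤ_[p])) (∑ i, C (N j i) * taylor (η : ℤ_[p]) (φ i) - C (c j)))
    rw [hQ j]
    simp only [taylor_eval]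
    have : (y : ℤ_[p]) + -(η : ℤ_[p]) = (p : ℤ_[p]) ^ b * u := by
      have := congrArg (fun z : ℤ => (z : ℤ_[p])) hu
      push_cast at this
      rw [← this]; ring
    rw [this]
    simp only [eval_add, eval_sub, eval_mul, eval_C, eval_pow, eval_X]
    rw [show ∀ A B D : ℤ_[p], A + B + D - A = B + D by intros; ring]
    apply dvd_add
    · rw [mul_pow, ← pow_mul]; exact dvd_mul_right _ _
    · rw [mul_pow, ← pow_mul]
      apply Dvd.dvd.mul_right
      apply Dvd.dvd.mul_right
      apply pow_dvd_pow
      apply Nat.mul_le_mul_left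
      have := j.2; omega
  · intro s x y B h j
    have := comb_transfer φ η N (fun t => (x t : ℤ_[p])) (fun t => (y t : ℤ_[p])) _ h j
    convert this using 1
    apply sum_congr rfl
    intro t _
    simp only [taylor_eval, eval_sub, eval_C]
    ring_nf

lemma isUnit_of_toZMod (z : ℤ_[p]) (h : PadicInt.toZMod z ≠ 0) : IsUnit z :=
  isUnit_of_map_unit PadicInt.toZMod z (isUnit_iff_ne_zero.mpr h)

lemma det_good {k : ℕ} (φ : Fin k → ℤ_[p][X]) (hφ : Good φ) (η : ℤ_[p]) :
    IsUnit (wmat φ η).det := by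
  apply isUnit_of_toZMod
  rw [RingHom.map_det]
  intro h
  obtain ⟨v, hv, hv0⟩ := Matrix.exists_vecMul_eq_zero_iff.mpr h
  apply hv
  set P : (ZMod p)[X] := ∑ i, C (v i) * X ^ (i.val + 1) with hP
  have hcoef : ∀ j : Fin k, (taylor (PadicInt.toZMod η) P).coeff (j.val + 1) = 0 := by
    intro j
    have := congrFun hv0 j
    simp only [Matrix.vecMul, dotProduct, RingHom.mapMatrix_apply, Matrix.map_apply, wmat,
      Matrix.of_apply, Pi.zero_apply] at this
    rw [hP, map_sum, finsetSum_coeff, ← this]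
    apply sum_congr rfl
    intro i _
    rw [taylor_mul, taylor_C, coeff_C_mul, ← coeff_map, map_taylor, hφ i]
  have hdeg : P.natDegree ≤ k := by
    apply natDegree_sum_le_of_forall_le
    intro i _
    refine (natDegree_C_mul_X_pow_le _ _).trans ?_
    have := i.2; omega
  have hconst : taylor (PadicInt.toZMod η) P = C ((taylor (PadicInt.toZMod η) P).coeff 0) := by
    ext d
    rcases d with _ | d
    · simp
    · rw [coeff_C_succ]
      by_cases hd : d < k
      · exact hcoef ⟨d, hd⟩
      · apply coeff_eq_zero_of_natDegree_lt
        rw [natDegree_taylor]; omega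
  have hPc : P = C ((taylor (PadicInt.toZMod η) P).coeff 0) := by
    apply taylor_injective (PadicInt.toZMod η)
    rw [taylor_C]; exact hconst
  funext i
  have h1 : P.coeff (i.val + 1) = v i := by
    rw [hP, finsetSum_coeff]
    simp only [coeff_C_mul, coeff_X_pow, mul_ite, mul_one, mul_zero]
    rw [sum_eq_single i]
    · simp
    · intro b _ hb
      rw [if_neg]
      intro h; apply hb; ext; omega
    · simp
  rw [← h1, hPc, coeff_C_succ]; rfl

lemma det_proj {k l : ℕ} (hl : l ≤ k) (hk : k < p) (ψ : Fin l → ℤ_[p][X]) (η ξ : ℤ)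
    (hne : ¬ (p : ℤ) ∣ ξ - η)
    (hψ : ∀ i, (ψ i).map PadicInt.toZMod
      = taylor (-(η : ZMod p)) (X ^ (k - l + i.val + 1))) :
    IsUnit (wmat ψ (ξ : ℤ_[p])).det := by
  apply isUnit_of_toZMod
  rw [RingHom.map_det]
  intro h
  obtain ⟨v, hv, hv0⟩ := Matrix.exists_vecMul_eq_zero_iff.mpr h
  apply hv
  set ζ : ZMod p := (ξ : ZMod p) - η with hζ
  have hζ0 : ζ ≠ 0 := by
    rw [hζ, ← Int.cast_sub]
    rwa [Ne, ZMod.intCast_zmod_eq_zero_iff_dvd]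
  set P : (ZMod p)[X] := ∑ i, C (v i) * X ^ (k - l + i.val + 1) with hP
  have hcoef : ∀ j : Fin l, (taylor ζ P).coeff (j.val + 1) = 0 := by
    intro j
    have := congrFun hv0 j
    simp only [Matrix.vecMul, dotProduct, RingHom.mapMatrix_apply, Matrix.map_apply, wmat,
      Matrix.of_apply, Pi.zero_apply] at this
    rw [hP, map_sum, finsetSum_coeff, ← this]
    apply sum_congr rfl
    intro i _
    rw [taylor_mul, taylor_C, coeff_C_mul, ← coeff_map, map_taylor, hψ i, taylor_taylor,
      map_intCast, hζ, sub_eq_add_neg]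
  -- derivative
  set R : (ZMod p)[X] := ∑ i : Fin l, C (v i * ((k - l + i.val + 1 : ℕ) : ZMod p)) * X ^ i.val with hR
  have hder : derivative P = X ^ (k - l) * R := by
    rw [hP, hR, derivative_sum, mul_sum]
    apply sum_congr rfl
    intro i _
    rw [derivative_C_mul_X_pow]
    simp only [Nat.add_sub_cancel]
    rw [pow_add]; ring
  have hdvd : (X : (ZMod p)[X]) ^ l ∣ taylor ζ (derivative P) := by
    rw [X_pow_dvd_iff]
    intro d hd
    have e : taylor ζ (derivative P) = derivative (taylor ζ P) := by
      simp [taylor_apply, derivative_comp]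
    rw [e, coeff_derivative, hcoef ⟨d, hd⟩, zero_mul]
  have hdvd2 : (X : (ZMod p)[X]) ^ l ∣ taylor ζ R := by
    rw [hder, taylor_mul] at hdvd
    refine IsCoprime.dvd_of_dvd_mul_left ?_ hdvd
    apply IsCoprime.pow_left
    rw [show taylor ζ ((X : (ZMod p)[X]) ^ (k - l)) = (X + C ζ) ^ (k - l) by simp]
    apply IsCoprime.pow_right
    refine ⟨-C ζ⁻¹, C ζ⁻¹, ?_⟩
    have : C ζ⁻¹ * C ζ = (1 : (ZMod p)[X]) := by
      rw [← C_mul, inv_mul_cancel₀ hζ0, C_1]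
    linear_combination this
  have hR0 : taylor ζ R = 0 := by
    by_contra hne0
    have hl0 : l ≠ 0 := by
      rintro rfl
      apply hne0; rw [hR]; simp
    have h1 := natDegree_le_of_dvd hdvd2 hne0
    rw [natDegree_X_pow, natDegree_taylor] at h1
    have h2 : R.natDegree ≤ l - 1 := by
      apply natDegree_sum_le_of_forall_le
      intro i _
      refine (natDegree_C_mul_X_pow_le _ _).trans ?_
      have := i.2; omega
    omega
  have hR1 : R = 0 := by
    apply taylor_injective ζ
    rw [hR0, map_zero]
  funext i
  have h1 : R.coeff i.val = v i * ((k - l + i.val + 1 : ℕ) : ZMod p) := by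
    rw [hR, finsetSum_coeff]
    simp only [coeff_C_mul, coeff_X_pow, mul_ite, mul_one, mul_zero]
    rw [sum_eq_single i]
    · simp
    · intro b _ hb
      rw [if_neg]
      intro h; apply hb; ext; omega
    · simp
  rw [hR1, coeff_zero] at h1
  rcases mul_eq_zero.mp h1.symm with h2 | h2
  · exact h2
  · exfalso
    rw [ZMod.natCast_eq_zero_iff] at h2
    have := Nat.le_of_dvd (by omega) h2
    have := i.2
    omega

end algebra
end VMV

namespace VMV
open Polynomial
set_option linter.unusedSectionVars false

/-- Triangular numbers. -/
def tri (k : ℕ) : ℕ := k * (k + 1) / 2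

lemma two_tri (k : ℕ) : 2 * tri k = k * (k + 1) :=
  Nat.mul_div_cancel' (Nat.even_mul_succ_self k).two_dvd

lemma tri_pos {k : ℕ} (hk : 1 ≤ k) : 1 ≤ tri k := by
  have := two_tri k
  nlinarith

lemma tri_mono {l k : ℕ} (h : l ≤ k) : tri l ≤ tri k := by
  have h1 := two_tri k
  have h2 := two_tri l
  nlinarith

lemma tri_lt {l k : ℕ} (h : l < k) : tri l < tri k := by
  have h1 := two_tri k
  have h2 := two_tri l
  nlinarith

lemma holder {ι : Type*} (T : Finset ι) (A B : ι → ℝ) (hA : ∀ i ∈ T, 0 ≤ A i)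
    (hB : ∀ i ∈ T, 0 ≤ B i) (θ : ℝ) (h0 : 0 ≤ θ) (h1 : θ ≤ 1) :
    ∑ i ∈ T, A i ^ θ * B i ^ (1 - θ) ≤ (∑ i ∈ T, A i) ^ θ * (∑ i ∈ T, B i) ^ (1 - θ) := by
  rcases h0.eq_or_lt with rfl | h0
  · simp
  rcases h1.eq_or_lt with rfl | h1
  · simp
  have hc : (θ⁻¹).HolderConjugate ((1 - θ)⁻¹) := by
    rw [Real.holderConjugate_iff]
    refine ⟨(one_lt_inv₀ h0).mpr h1, ?_⟩
    simp
  have := Real.inner_le_Lp_mul_Lq_of_nonneg T (f := fun i => A i ^ θ) (g := fun i => B i ^ (1 - θ))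
    hc (fun i hi => Real.rpow_nonneg (hA i hi) _) (fun i hi => Real.rpow_nonneg (hB i hi) _)
  refine this.trans (le_of_eq ?_)
  simp only [one_div, inv_inv]
  congr 1
  · congr 1
    apply sum_congr rfl; intro i hi
    rw [Real.rpow_rpow_inv (hA i hi) h0.ne']
  · congr 1
    apply sum_congr rfl; intro i hi
    rw [Real.rpow_rpow_inv (hB i hi) (by linarith)]

lemma sum_pow_le {ι : Type*} (T : Finset ι) (A : ι → ℝ) (hA : ∀ i ∈ T, 0 ≤ A i) {m : ℕ}
    (hm : 1 ≤ m) :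
    (∑ i ∈ T, A i) ^ m ≤ (T.card : ℝ) ^ m * ∑ i ∈ T, A i ^ m := by
  rcases T.eq_empty_or_nonempty with rfl | hT
  · simp [show m ≠ 0 by omega]
  obtain ⟨j, hj, hmax⟩ := T.exists_max_image A hT
  have h1 : ∑ i ∈ T, A i ≤ T.card * A j := by
    have := sum_le_card_nsmul T A (A j) hmax
    simpa using this
  calc (∑ i ∈ T, A i) ^ m ≤ (T.card * A j) ^ m :=
        pow_le_pow_left₀ (sum_nonneg hA) h1 m
    _ = (T.card : ℝ) ^ m * A j ^ m := mul_pow _ _ _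
    _ ≤ _ := by
        apply mul_le_mul_of_nonneg_left _ (by positivity)
        exact single_le_sum (f := fun i => A i ^ m) (fun i hi => pow_nonneg (hA i hi) m) hj

section defs
variable {Ω : Type} [Fintype Ω]

/-- Partial sums of a family of functions. -/
noncomputable def F (f : ℤ → Ω → ℂ) (S : Finset ℤ) (ω : Ω) : ℂ := ∑ x ∈ S, f x ω

/-- The elements of `S` congruent to `c` modulo `p ^ n`. -/
def cls (p n : ℕ) (c : ℤ) (S : Finset ℤ) : Finset ℤ := S.filter (fun x => (p : ℤ) ^ n ∣ x - c)

/-- Weighted even moment. -/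
noncomputable def mom (s : ℕ) (w : Ω → ℝ) (f : ℤ → Ω → ℂ) (S : Finset ℤ) : ℝ :=
  ∑ ω, w ω * ‖F f S ω‖ ^ (2 * s)

/-- Square of the weighted even-order norm. -/
noncomputable def nm (s : ℕ) (w : Ω → ℝ) (f : ℤ → Ω → ℂ) (S : Finset ℤ) : ℝ :=
  (mom s w f S) ^ ((s : ℝ)⁻¹)

/-- The square function bound: sum of squared norms over residue classes. -/
noncomputable def q (p n s : ℕ) (w : Ω → ℝ) (f : ℤ → Ω → ℂ) (S : Finset ℤ) : ℝ :=
  ∑ c ∈ range (p ^ n), nm s w f (cls p n (c : ℤ) S)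

/-- The orthogonality hypothesis. -/
def Orth {p : ℕ} [Fact p.Prime] {k : ℕ} (s B : ℕ) (φ : Fin k → ℤ_[p][X]) (w : Ω → ℝ)
    (S : Finset ℤ) (f : ℤ → Ω → ℂ) : Prop :=
  ∀ x y : Fin s → ℤ, (∀ i, x i ∈ S) → (∀ i, y i ∈ S) →
    ∑ ω, (w ω : ℂ) * ((∏ i, f (x i) ω) * ∏ i, (starRingEnd ℂ) (f (y i) ω)) ≠ 0 →
    ∀ j, (p : ℤ_[p]) ^ B ∣ ∑ i, ((φ j).eval (x i : ℤ_[p]) - (φ j).eval (y i : ℤ_[p]))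

lemma mom_nonneg {s : ℕ} {w : Ω → ℝ} (hw : ∀ ω, 0 ≤ w ω) (f : ℤ → Ω → ℂ) (S : Finset ℤ) :
    0 ≤ mom s w f S := sum_nonneg fun ω _ => mul_nonneg (hw ω) (by positivity)

lemma nm_nonneg {s : ℕ} {w : Ω → ℝ} (hw : ∀ ω, 0 ≤ w ω) (f : ℤ → Ω → ℂ) (S : Finset ℤ) :
    0 ≤ nm s w f S := Real.rpow_nonneg (mom_nonneg hw f S) _

lemma q_nonneg {p n s : ℕ} {w : Ω → ℝ} (hw : ∀ ω, 0 ≤ w ω) (f : ℤ → Ω → ℂ) (S : Finset ℤ) :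
    0 ≤ q p n s w f S := sum_nonneg fun _ _ => nm_nonneg hw f _

lemma nm_pow {s : ℕ} (hs : 1 ≤ s) {w : Ω → ℝ} (hw : ∀ ω, 0 ≤ w ω) (f : ℤ → Ω → ℂ)
    (S : Finset ℤ) : nm s w f S ^ s = mom s w f S :=
  Real.rpow_inv_natCast_pow (mom_nonneg hw f S) (by omega)

lemma nm_empty {s : ℕ} (hs : 1 ≤ s) (w : Ω → ℝ) (f : ℤ → Ω → ℂ) : nm s w f ∅ = 0 := by
  have : mom s w f ∅ = 0 := by
    unfold mom F
    apply sum_eq_zero; intro ω _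
    simp [show s ≠ 0 by omega]
  rw [nm, this, Real.zero_rpow]
  have : (s : ℝ) ≠ 0 := by exact_mod_cast (by omega : s ≠ 0)
  exact inv_ne_zero this

lemma nm_eq_of_pow {s : ℕ} (hs : 1 ≤ s) {w : Ω → ℝ} (hw : ∀ ω, 0 ≤ w ω) (f : ℤ → Ω → ℂ)
    (S : Finset ℤ) {r : ℝ} (hr : 0 ≤ r) (h : mom s w f S ≤ r ^ s) : nm s w f S ≤ r := by
  rw [← nm_pow hs hw] at h
  exact le_of_pow_le_pow_left₀ (by omega) hr h

lemma cls_subset (p n : ℕ) (c : ℤ) (S : Finset ℤ) : cls p n c S ⊆ S := filter_subset _ _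

lemma mem_cls {p n : ℕ} {c : ℤ} {S : Finset ℤ} {x : ℤ} :
    x ∈ cls p n c S ↔ x ∈ S ∧ (p : ℤ) ^ n ∣ x - c := mem_filter

lemma cls_cls {p a n : ℕ} (h : a ≤ n) {c d : ℤ} (hcd : (p : ℤ) ^ a ∣ d - c) (S : Finset ℤ) :
    cls p n d (cls p a c S) = cls p n d S := by
  ext x
  simp only [mem_cls]
  constructor
  · rintro ⟨⟨h1, _⟩, h2⟩; exact ⟨h1, h2⟩
  · rintro ⟨h1, h2⟩
    refine ⟨⟨h1, ?_⟩, h2⟩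
    have h3 := dvd_trans (pow_dvd_pow (p : ℤ) h) h2
    have := dvd_add h3 hcd
    simpa using this

lemma cls_cls_empty {p a n : ℕ} (h : a ≤ n) {c d : ℤ} (hcd : ¬ (p : ℤ) ^ a ∣ d - c)
    (S : Finset ℤ) : cls p n d (cls p a c S) = ∅ := by
  ext x
  simp only [mem_cls, notMem_empty, iff_false]
  rintro ⟨⟨_, h1⟩, h2⟩
  apply hcd
  have h3 := dvd_trans (pow_dvd_pow (p : ℤ) h) h2
  have := dvd_sub h1 h3
  simpa using this

lemma sum_cls {p : ℕ} (hp : 0 < p) (n : ℕ) {M : Type*} [AddCommMonoid M] (S : Finset ℤ)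
    (g : ℤ → M) : ∑ c ∈ range (p ^ n), ∑ x ∈ cls p n (c : ℤ) S, g x = ∑ x ∈ S, g x := by
  have hpn : (0 : ℤ) < (p : ℤ) ^ n := by positivity
  rw [← sum_fiberwise_of_maps_to (s := S) (t := range (p ^ n))
    (g := fun x => (x % (p : ℤ) ^ n).toNat)]
  · apply sum_congr rfl
    intro c hc
    apply sum_congr _ (fun _ _ => rfl)
    ext x
    simp only [mem_cls, mem_filter, and_congr_right_iff]
    intro _
    have h1 := Int.emod_nonneg x hpn.ne'
    have hc' : (c : ℤ) < (p : ℤ) ^ n := by exact_mod_cast mem_range.mp hc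
    have e : (c : ℤ) % (p : ℤ) ^ n = c := Int.emod_eq_of_lt (by positivity) hc'
    have hiff : (p : ℤ) ^ n ∣ x - c ↔ x % (p : ℤ) ^ n = c % (p : ℤ) ^ n := by
      rw [Int.emod_eq_emod_iff_emod_sub_eq_zero, Int.dvd_iff_emod_eq_zero]
    rw [hiff, e]
    omega
  · intro x _
    have h1 := Int.emod_nonneg x hpn.ne'
    have h2 := Int.emod_lt_of_pos x hpn
    rw [mem_range]
    zify
    rw [Int.toNat_of_nonneg h1]
    exact_mod_cast h2

lemma F_cls {p : ℕ} (hp : 0 < p) (n : ℕ) (f : ℤ → Ω → ℂ) (S : Finset ℤ) (ω : Ω) :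
    F f S ω = ∑ c ∈ range (p ^ n), F f (cls p n (c : ℤ) S) ω :=
  (sum_cls hp n S (fun x => f x ω)).symm

lemma q_cls_le {p : ℕ} {a n s : ℕ} (han : a ≤ n) (hs : 1 ≤ s) {w : Ω → ℝ}
    (hw : ∀ ω, 0 ≤ w ω) (f : ℤ → Ω → ℂ) (c : ℤ) (S : Finset ℤ) :
    q p n s w f (cls p a c S) ≤ q p n s w f S := by
  apply sum_le_sum
  intro d _
  by_cases h : (p : ℤ) ^ a ∣ (d : ℤ) - c
  · rw [cls_cls han h]
  · rw [cls_cls_empty han h, nm_empty hs]; exact nm_nonneg hw f _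

lemma q_cls {p : ℕ} (hp : 0 < p) {a n s : ℕ} (han : a ≤ n) (hs : 1 ≤ s) (w : Ω → ℝ)
    (f : ℤ → Ω → ℂ) (S : Finset ℤ) :
    ∑ c ∈ range (p ^ a), q p n s w f (cls p a (c : ℤ) S) = q p n s w f S := by
  unfold q
  rw [sum_comm]
  apply sum_congr rfl
  intro d _
  have key := sum_cls hp a ({(d : ℤ)} : Finset ℤ) (fun _ => nm s w f (cls p n (d : ℤ) S))
  rw [sum_singleton] at key
  rw [← key]
  apply sum_congr rfl
  intro c _
  by_cases h : (p : ℤ) ^ a ∣ (d : ℤ) - c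
  · rw [cls_cls han h]
    have : cls p a (c : ℤ) {(d : ℤ)} = {(d : ℤ)} := by
      unfold cls; rw [filter_singleton, if_pos h]
    rw [this, sum_singleton]
  · rw [cls_cls_empty han h, nm_empty hs]
    have : cls p a (c : ℤ) {(d : ℤ)} = ∅ := by
      unfold cls; rw [filter_singleton, if_neg h]
    rw [this, sum_empty]

lemma Orth.mono {p : ℕ} [Fact p.Prime] {k s B : ℕ} {φ : Fin k → ℤ_[p][X]} {w : Ω → ℝ}
    {S T : Finset ℤ} {f : ℤ → Ω → ℂ} (h : Orth s B φ w S f) (hT : T ⊆ S) : Orth s B φ w T f :=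
  fun x y hx hy => h x y (fun i => hT (hx i)) (fun i => hT (hy i))

lemma norm_pow_expand (f : ℤ → Ω → ℂ) (T : Finset ℤ) (t : ℕ) (ω : Ω) :
    ((‖F f T ω‖ ^ (2 * t) : ℝ) : ℂ) =
      ∑ z ∈ Fintype.piFinset (fun _ : Fin t => T), ∑ z' ∈ Fintype.piFinset (fun _ : Fin t => T),
        ((∏ i, f (z i) ω) * ∏ i, (starRingEnd ℂ) (f (z' i) ω)) := by
  have h1 : ((‖F f T ω‖ ^ (2 * t) : ℝ) : ℂ) = (F f T ω) ^ t * ((starRingEnd ℂ) (F f T ω)) ^ t := by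
    rw [← mul_pow, Complex.mul_conj, Complex.normSq_eq_norm_sq, pow_mul]
    push_cast; rfl
  rw [h1, F, map_sum, sum_pow', sum_pow', sum_mul_sum]

lemma orth_reduce {p : ℕ} [Fact p.Prime] {k s t B : ℕ} {φ : Fin k → ℤ_[p][X]} {w : Ω → ℝ}
    {S T₁ T₂ : Finset ℤ} {f : ℤ → Ω → ℂ} (h : Orth (s + t) B φ w S f) (hT₁ : T₁ ⊆ S) (hT₂ : T₂ ⊆ S)
    (x y : Fin s → ℤ) (hx : ∀ i, x i ∈ T₁) (hy : ∀ i, y i ∈ T₁)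
    (hne : ∑ ω, ((w ω * ‖F f T₂ ω‖ ^ (2 * t) : ℝ) : ℂ) *
      ((∏ i, f (x i) ω) * ∏ i, (starRingEnd ℂ) (f (y i) ω)) ≠ 0) :
    ∃ z z' : Fin t → ℤ, (∀ i, z i ∈ T₂) ∧ (∀ i, z' i ∈ T₂) ∧
      ∀ j, (p : ℤ_[p]) ^ B ∣ ∑ i, ((φ j).eval ((Fin.append x z i : ℤ) : ℤ_[p])
        - (φ j).eval ((Fin.append y z' i : ℤ) : ℤ_[p])) := by
  have e : ∑ ω, ((w ω * ‖F f T₂ ω‖ ^ (2 * t) : ℝ) : ℂ) *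
      ((∏ i, f (x i) ω) * ∏ i, (starRingEnd ℂ) (f (y i) ω)) =
      ∑ z ∈ Fintype.piFinset (fun _ : Fin t => T₂), ∑ z' ∈ Fintype.piFinset (fun _ : Fin t => T₂),
        ∑ ω, (w ω : ℂ) * ((∏ i, f (Fin.append x z i) ω) *
          ∏ i, (starRingEnd ℂ) (f (Fin.append y z' i) ω)) := by
    have : ∀ ω, ((w ω * ‖F f T₂ ω‖ ^ (2 * t) : ℝ) : ℂ) *
      ((∏ i, f (x i) ω) * ∏ i, (starRingEnd ℂ) (f (y i) ω)) =
      ∑ z ∈ Fintype.piFinset (fun _ : Fin t => T₂), ∑ z' ∈ Fintype.piFinset (fun _ : Fin t => T₂),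
        (w ω : ℂ) * ((∏ i, f (Fin.append x z i) ω) *
          ∏ i, (starRingEnd ℂ) (f (Fin.append y z' i) ω)) := by
      intro ω
      rw [Complex.ofReal_mul, norm_pow_expand, mul_sum, sum_mul]
      apply sum_congr rfl; intro z _
      rw [mul_sum, sum_mul]
      apply sum_congr rfl; intro z' _
      rw [Fin.prod_univ_add, Fin.prod_univ_add]
      simp only [Fin.append_left, Fin.append_right]
      ring
    rw [sum_congr rfl (fun ω _ => this ω), sum_comm]
    apply sum_congr rfl; intro z _
    rw [sum_comm]
  rw [e] at hne
  obtain ⟨z, hz, hne⟩ := exists_ne_zero_of_sum_ne_zero hne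
  obtain ⟨z', hz', hne⟩ := exists_ne_zero_of_sum_ne_zero hne
  rw [Fintype.mem_piFinset] at hz hz'
  refine ⟨z, z', hz, hz', h _ _ ?_ ?_ hne⟩
  · intro i
    refine Fin.addCases (fun i => ?_) (fun i => ?_) i
    · rw [Fin.append_left]; exact hT₁ (hx i)
    · rw [Fin.append_right]; exact hT₂ (hz i)
  · intro i
    refine Fin.addCases (fun i => ?_) (fun i => ?_) i
    · rw [Fin.append_left]; exact hT₁ (hy i)
    · rw [Fin.append_right]; exact hT₂ (hz' i)

end defs

/-- Decoupling inequality with constant `D`. -/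
def Dec (p : ℕ) [Fact p.Prime] (k n : ℕ) (D : ℝ) : Prop :=
  ∀ (Ω : Type) [Fintype Ω] (φ : Fin k → ℤ_[p][X]) (w : Ω → ℝ) (S : Finset ℤ) (f : ℤ → Ω → ℂ),
    Good φ → (∀ ω, 0 ≤ w ω) → Orth (tri k) (k * n) φ w S f →
    mom (tri k) w f S ≤ D * q p n (tri k) w f S ^ tri k

/-- Bilinear decoupling inequality with constant `K`. -/
def Bil (p : ℕ) [Fact p.Prime] (k l n a b : ℕ) (K : ℝ) : Prop :=
  ∀ (Ω : Type) [Fintype Ω] (φ : Fin k → ℤ_[p][X]) (w : Ω → ℝ) (S : Finset ℤ) (f : ℤ → Ω → ℂ),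
    Good φ → (∀ ω, 0 ≤ w ω) → Orth (tri k) (k * n) φ w S f →
    ∀ ξ η : ℤ, ¬ (p : ℤ) ∣ ξ - η →
    ∑ ω, w ω * (‖F f (cls p a ξ S) ω‖ ^ (2 * tri l)
        * ‖F f (cls p b η S) ω‖ ^ (2 * (tri k - tri l)))
      ≤ K * (q p n (tri k) w f (cls p a ξ S) ^ tri l
        * q p n (tri k) w f (cls p b η S) ^ (tri k - tri l))

lemma Dec.mono {p : ℕ} [Fact p.Prime] {k n : ℕ} {D D' : ℝ} (h : Dec p k n D) (hD : D ≤ D') :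
    Dec p k n D' := by
  intro Ω _ φ w S f hφ hw ho
  refine (h Ω φ w S f hφ hw ho).trans ?_
  exact mul_le_mul_of_nonneg_right hD (pow_nonneg (q_nonneg hw f S) _)

lemma Bil.mono {p : ℕ} [Fact p.Prime] {k l n a b : ℕ} {D D' : ℝ} (h : Bil p k l n a b D)
    (hD : D ≤ D') : Bil p k l n a b D' := by
  intro Ω _ φ w S f hφ hw ho ξ η hne
  refine (h Ω φ w S f hφ hw ho ξ η hne).trans ?_
  exact mul_le_mul_of_nonneg_right hD (mul_nonneg (pow_nonneg (q_nonneg hw f _) _)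
    (pow_nonneg (q_nonneg hw f _) _))

end VMV

namespace VMV
open Polynomial

section steps
variable {p : ℕ} [Fact p.Prime]

lemma p_pos : 0 < p := (Fact.out : p.Prime).pos

lemma cls_congr {n : ℕ} {c d : ℤ} (h : (p : ℤ) ^ n ∣ c - d) (S : Finset ℤ) :
    cls p n c S = cls p n d S := by
  ext x
  simp only [mem_cls, and_congr_right_iff]
  intro _
  constructor
  · intro h1; have := dvd_add h1 h; simpa using this
  · intro h1; have := dvd_sub h1 h; simpa using this

lemma nm_congr {Ω : Type} [Fintype Ω] {s : ℕ} {w : Ω → ℝ} {f g : ℤ → Ω → ℂ} {S T : Finset ℤ}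
    (h : ∀ ω, F f S ω = F g T ω) : nm s w f S = nm s w g T := by
  unfold nm mom; simp only [h]

lemma dec_rescale {l m a : ℕ} {D : ℝ} (hD : 0 ≤ D) (hdec : Dec p l m D)
    (ha : 1 ≤ a) {Ω : Type} [Fintype Ω] (ψ : Fin l → ℤ_[p][X]) (ξ : ℤ)
    (hdet : IsUnit (wmat ψ (ξ : ℤ_[p])).det) (w : Ω → ℝ) (hw : ∀ ω, 0 ≤ w ω) (S : Finset ℤ)
    (hS : ∀ x ∈ S, (p : ℤ) ^ a ∣ x - ξ) (f : ℤ → Ω → ℂ)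
    (ho : Orth (tri l) (l * (a + m)) ψ w S f) :
    mom (tri l) w f S ≤ D * q p (a + m) (tri l) w f S ^ tri l := by
  have hpa : ((p : ℤ) ^ a) ≠ 0 := pow_ne_zero _ (by exact_mod_cast (p_pos (p := p)).ne')
  obtain ⟨χ, hχ, htr⟩ := rescale ψ ξ hdet a ha
  set e : ℤ → ℤ := fun u => ξ + (p : ℤ) ^ a * u with he
  have hinj : Function.Injective e := by
    intro u v h
    simp only [he, add_right_inj] at h
    exact mul_left_cancel₀ hpa h
  set g : ℤ → Ω → ℂ := fun u => f (e u) with hg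
  set S' : Finset ℤ := S.image (fun x => (x - ξ) / (p : ℤ) ^ a) with hS'
  have hmem : ∀ u, u ∈ S' ↔ e u ∈ S := by
    intro u
    rw [hS', mem_image]
    constructor
    · rintro ⟨x, hx, rfl⟩
      have : e ((x - ξ) / (p : ℤ) ^ a) = x := by
        simp only [he]; rw [Int.mul_ediv_cancel' (hS x hx)]; ring
      rwa [this]
    · intro h
      refine ⟨e u, h, ?_⟩
      simp only [he, add_sub_cancel_left]
      exact Int.mul_ediv_cancel_left _ hpa
  have himg : S = S'.image e := by
    ext x
    rw [mem_image]
    constructor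
    · intro hx
      obtain ⟨u, hu⟩ := hS x hx
      have : e u = x := by simp only [he]; rw [← hu]; ring
      exact ⟨u, (hmem u).mpr (by rwa [this]), this⟩
    · rintro ⟨u, hu, rfl⟩; exact (hmem u).mp hu
  have hF : ∀ ω, F f S ω = F g S' ω := by
    intro ω
    unfold F
    conv_lhs => rw [himg]
    rw [sum_image (fun _ _ _ _ h => hinj h)]
  have hFc : ∀ (c : ℤ) (ω : Ω), F g (cls p m c S') ω = F f (cls p (a + m) (e c) S) ω := by
    intro c ω
    have : cls p (a + m) (e c) S = (cls p m c S').image e := by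
      ext x
      simp only [mem_cls, mem_image]
      have hdv : ∀ u, (p : ℤ) ^ (a + m) ∣ e u - e c ↔ (p : ℤ) ^ m ∣ u - c := by
        intro u
        have : e u - e c = (p : ℤ) ^ a * (u - c) := by simp only [he]; ring
        rw [this, pow_add]
        exact mul_dvd_mul_iff_left hpa
      constructor
      · rintro ⟨hx, hd⟩
        have hx' := hx
        rw [himg, mem_image] at hx'
        obtain ⟨u, hu, rfl⟩ := hx'
        exact ⟨u, ⟨hu, (hdv u).mp hd⟩, rfl⟩
      · rintro ⟨u, ⟨hu, hd⟩, rfl⟩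
        exact ⟨(hmem u).mp hu, (hdv u).mpr hd⟩
    unfold F
    rw [this, sum_image (fun _ _ _ _ h => hinj h)]
  have hog : Orth (tri l) (l * m) χ w S' g := by
    intro x y hx hy hne j
    have h1 := ho (fun i => e (x i)) (fun i => e (y i)) (fun i => (hmem _).mp (hx i))
      (fun i => (hmem _).mp (hy i)) hne
    have h2 := htr (tri l) x y (l * (a + m)) h1 j
    have hle : a * (j.val + 1) + l * m ≤ l * (a + m) := by
      have := j.2
      nlinarith
    have h3 := dvd_trans (pow_dvd_pow (p : ℤ_[p]) hle) h2
    rw [pow_add] at h3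
    refine (mul_dvd_mul_iff_left ?_).mp h3
    exact pow_ne_zero _ (PadicInt.prime_p.ne_zero)
  have hmain := hdec Ω χ w S' g hχ hw hog
  have hmom : mom (tri l) w f S = mom (tri l) w g S' := by unfold mom; simp only [hF]
  rw [hmom]
  refine hmain.trans ?_
  apply mul_le_mul_of_nonneg_left _ hD
  apply pow_le_pow_left₀ (q_nonneg hw g S')
  set E : Finset ℤ := (range (p ^ m)).image (fun c : ℕ => e c) with hE
  have h1 : q p m (tri l) w g S' = ∑ x ∈ E, nm (tri l) w f (cls p (a + m) x S) := by
    rw [hE, sum_image]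
    · unfold q
      apply sum_congr rfl
      intro c _
      exact nm_congr (hFc c)
    · intro c _ d _ h
      exact_mod_cast hinj h
  rw [h1, ← sum_cls (p_pos (p := p)) (a + m) E]
  unfold q
  apply sum_le_sum
  intro d _
  have hcard : (cls p (a + m) (d : ℤ) E).card ≤ 1 := by
    rw [card_le_one]
    intro x hx y hy
    rw [mem_cls, hE, mem_image] at hx hy
    obtain ⟨⟨u, hu, rfl⟩, hx⟩ := hx
    obtain ⟨⟨v, hv, rfl⟩, hy⟩ := hy
    have h2 := dvd_sub hx hy
    have h3 : e u - d - (e v - d) = (p : ℤ) ^ a * ((u : ℤ) - v) := by simp only [he]; ring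
    rw [h3, pow_add, mul_dvd_mul_iff_left hpa] at h2
    rw [mem_range] at hu hv
    congr 2
    have hu' : (u : ℤ) < (p : ℤ) ^ m := by exact_mod_cast hu
    have hv' : (v : ℤ) < (p : ℤ) ^ m := by exact_mod_cast hv
    have := Int.eq_zero_of_abs_lt_dvd h2 (by rw [abs_lt]; constructor <;> omega)
    omega
  have h2 : ∀ x ∈ cls p (a + m) (d : ℤ) E, nm (tri l) w f (cls p (a + m) x S)
      ≤ nm (tri l) w f (cls p (a + m) d S) := by
    intro x hx
    rw [cls_congr (mem_cls.mp hx).2]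
  refine (sum_le_card_nsmul _ _ _ h2).trans ?_
  rw [nsmul_eq_mul]
  calc ((cls p (a + m) (d : ℤ) E).card : ℝ) * nm (tri l) w f (cls p (a + m) d S)
      ≤ 1 * nm (tri l) w f (cls p (a + m) d S) :=
        mul_le_mul_of_nonneg_right (by exact_mod_cast hcard) (nm_nonneg hw f _)
    _ = _ := one_mul _

lemma dec_cls {k n b : ℕ} {D : ℝ} (hD : 0 ≤ D) (hdec : Dec p k (n - b) D) (hb : 1 ≤ b)
    (hbn : b ≤ n) {Ω : Type} [Fintype Ω] (φ : Fin k → ℤ_[p][X]) (hφ : Good φ) (w : Ω → ℝ)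
    (hw : ∀ ω, 0 ≤ w ω) (S : Finset ℤ) (f : ℤ → Ω → ℂ)
    (ho : Orth (tri k) (k * n) φ w S f) (η : ℤ) :
    mom (tri k) w f (cls p b η S) ≤ D * q p n (tri k) w f (cls p b η S) ^ tri k := by
  have e : b + (n - b) = n := by omega
  have := dec_rescale hD hdec hb φ η (det_good φ hφ _) w hw (cls p b η S)
    (fun x hx => (mem_cls.mp hx).2) f (by rw [e]; exact ho.mono (cls_subset _ _ _ _))
  rwa [e] at this

lemma bil_lower {k l n a b a' : ℕ} (hl : 1 ≤ l) (hlk : l < k) (hkp : k < p) (ha : 1 ≤ a)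
    (hbn : b ≤ n) (haa : a ≤ a') (han : a' ≤ n) (hla : l * a' = (k - l + 1) * b)
    {D K : ℝ} (hD : 0 ≤ D) (hK : 0 ≤ K) (hdec : Dec p l (a' - a) D) (hB : Bil p k l n a' b K) :
    Bil p k l n a b (D * K) := by
  intro Ω _ φ w S f hφ hw ho ξ η hne
  have htl := tri_pos hl
  have htlk := tri_lt hlk
  have hp0 := p_pos (p := p)
  set t := tri k - tri l with ht
  have hst : tri k = tri l + t := by omega
  set I := cls p a ξ S with hI
  set J := cls p b η S with hJ
  set w' : Ω → ℝ := fun ω => w ω * ‖F f J ω‖ ^ (2 * t) with hw'def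
  have hw' : ∀ ω, 0 ≤ w' ω := fun ω => mul_nonneg (hw ω) (by positivity)
  obtain ⟨θ, hθ1, hθ2, hθ3⟩ := norm_at φ hφ η (det_good φ hφ _)
  set ψ : Fin l → ℤ_[p][X] := fun i => θ ⟨k - l + i.val, by have := i.2; omega⟩ with hψ
  have hdet : IsUnit (wmat ψ (ξ : ℤ_[p])).det :=
    det_proj hlk.le hkp ψ η ξ hne (fun i => hθ1 _)
  have e : a + (a' - a) = a' := by omega
  have ho' : Orth (tri l) (l * (a + (a' - a))) ψ w' I f := by
    intro x y hx hy hne0 j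
    rw [e]
    rw [hst] at ho
    obtain ⟨z, z', hz, hz', hdv⟩ := orth_reduce ho (cls_subset p a ξ S) (cls_subset p b η S)
      x y hx hy hne0
    have h1 := hθ3 _ _ _ _ hdv ⟨k - l + j.val, by have := j.2; omega⟩
    rw [Fin.sum_univ_add] at h1
    simp only [Fin.append_left, Fin.append_right] at h1
    have hle : l * a' ≤ k * n := Nat.mul_le_mul hlk.le han
    have h2 := dvd_trans (pow_dvd_pow (p : ℤ_[p]) hle) h1
    refine (dvd_add_left ?_).mp h2
    apply dvd_sum
    intro i _
    have h3 : l * a' ≤ b * (k - l + j.val + 1) := by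
      rw [hla, mul_comm]; apply Nat.mul_le_mul_left; omega
    apply dvd_sub
    · exact dvd_trans (pow_dvd_pow _ h3) (hθ2 _ b (z i) (mem_cls.mp (hz i)).2)
    · exact dvd_trans (pow_dvd_pow _ h3) (hθ2 _ b (z' i) (mem_cls.mp (hz' i)).2)
  have h1 := dec_rescale hD hdec ha ψ ξ hdet w' hw' I (fun x hx => (mem_cls.mp hx).2) f ho'
  rw [e] at h1
  have hlhs : ∑ ω, w ω * (‖F f I ω‖ ^ (2 * tri l) * ‖F f J ω‖ ^ (2 * t)) = mom (tri l) w' f I := by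
    unfold mom
    apply sum_congr rfl; intro ω _
    simp only [hw'def]; ring
  rw [hlhs]
  refine h1.trans ?_
  set qJ := q p n (tri k) w f J with hqJ
  have hqJ0 : 0 ≤ qJ := q_nonneg hw f J
  have hKq : 0 ≤ K * qJ ^ t := by positivity
  set R := (K * qJ ^ t) ^ ((tri l : ℝ)⁻¹) with hR
  have hR0 : 0 ≤ R := Real.rpow_nonneg hKq _
  have hRp : R ^ tri l = K * qJ ^ t := Real.rpow_inv_natCast_pow hKq (by omega)
  have hq : q p a' (tri l) w' f I ≤ R * q p n (tri k) w f I := by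
    rw [← q_cls hp0 han (by omega) w f I, mul_sum]
    apply sum_le_sum
    intro c _
    by_cases hc : (p : ℤ) ^ a ∣ (c : ℤ) - ξ
    · apply nm_eq_of_pow htl hw' f _ (mul_nonneg hR0 (q_nonneg hw f _))
      rw [mul_pow, hRp, hI, cls_cls haa hc]
      have hne' : ¬ (p : ℤ) ∣ (c : ℤ) - η := by
        intro h
        apply hne
        have h2 : (p : ℤ) ∣ (c : ℤ) - ξ := dvd_trans (dvd_pow_self _ (by omega)) hc
        have := dvd_sub h h2
        simpa using this
      have := hB Ω φ w S f hφ hw ho c η hne'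
      calc mom (tri l) w' f (cls p a' c S) = _ := by
            unfold mom
            apply sum_congr rfl; intro ω _
            simp only [hw'def]
            rw [mul_assoc, mul_comm (‖F f J ω‖ ^ (2 * t))]
        _ ≤ _ := this
        _ = _ := by rw [← hJ, ← hqJ]; ring
    · rw [hI, cls_cls_empty haa hc, nm_empty htl]
      exact mul_nonneg hR0 (q_nonneg hw f _)
  calc D * q p a' (tri l) w' f I ^ tri l ≤ D * (R * q p n (tri k) w f I) ^ tri l := by
        apply mul_le_mul_of_nonneg_left _ hD
        exact pow_le_pow_left₀ (q_nonneg hw' f I) hq _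
    _ = _ := by rw [mul_pow, hRp]; ring

lemma interp_pow {x : ℝ} (hx : 0 ≤ x) {m₁ m₂ m : ℕ} {θ : ℝ} (h0 : 0 ≤ θ) (h1 : θ ≤ 1)
    (h : θ * m₁ + (1 - θ) * m₂ = m) : (x ^ m₁) ^ θ * (x ^ m₂) ^ (1 - θ) = x ^ m := by
  rw [← Real.rpow_natCast, ← Real.rpow_natCast, ← Real.rpow_natCast, ← Real.rpow_mul hx,
    ← Real.rpow_mul hx, ← Real.rpow_add_of_nonneg hx (by positivity)
      (mul_nonneg (by positivity) (by linarith)), ← h]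
  congr 1; ring

/-- Interpolation of mixed moments. -/
lemma interp_mixed {Ω : Type} [Fintype Ω] (w A B : Ω → ℝ) (hw : ∀ ω, 0 ≤ w ω) (hA : ∀ ω, 0 ≤ A ω)
    (hB : ∀ ω, 0 ≤ B ω) {m₁ m₂ m n₁ n₂ n : ℕ} {θ : ℝ} (h0 : 0 ≤ θ) (h1 : θ ≤ 1)
    (hm : θ * m₁ + (1 - θ) * m₂ = m) (hn : θ * n₁ + (1 - θ) * n₂ = n)
    {K₁ K₂ P Q : ℝ} (hK₁ : 0 ≤ K₁) (hK₂ : 0 ≤ K₂) (hP : 0 ≤ P) (hQ : 0 ≤ Q)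
    (b₁ : ∑ ω, w ω * (A ω ^ (2 * m₁) * B ω ^ (2 * n₁)) ≤ K₁ * (P ^ m₁ * Q ^ n₁))
    (b₂ : ∑ ω, w ω * (A ω ^ (2 * m₂) * B ω ^ (2 * n₂)) ≤ K₂ * (P ^ m₂ * Q ^ n₂)) :
    ∑ ω, w ω * (A ω ^ (2 * m) * B ω ^ (2 * n)) ≤ (K₁ ^ θ * K₂ ^ (1 - θ)) * (P ^ m * Q ^ n) := by
  have hA' : ∀ ω, 0 ≤ A ω ^ 2 := fun ω => by positivity
  have hB' : ∀ ω, 0 ≤ B ω ^ 2 := fun ω => by positivity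
  have mulr : ∀ x y z : ℝ, 0 ≤ x → 0 ≤ y → (x * y) ^ z = x ^ z * y ^ z :=
    fun x y z hx hy => Real.mul_rpow hx hy
  have split : ∀ u x y : ℝ, ∀ v : ℝ, 0 ≤ u → 0 ≤ v → 0 ≤ x → 0 ≤ y →
      (u * (x ^ m₁ * y ^ n₁)) ^ θ * (v * (x ^ m₂ * y ^ n₂)) ^ (1 - θ) =
      (u ^ θ * v ^ (1 - θ)) * (x ^ m * y ^ n) := by
    intro u x y v hu hv hx hy
    rw [mulr _ _ _ hu (by positivity), mulr _ _ _ (by positivity) (by positivity),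
      mulr _ _ _ hv (by positivity), mulr _ _ _ (by positivity) (by positivity),
      ← interp_pow hx h0 h1 hm, ← interp_pow hy h0 h1 hn]
    ring
  have hpt : ∀ ω, w ω * (A ω ^ (2 * m) * B ω ^ (2 * n)) =
      (w ω * (A ω ^ (2 * m₁) * B ω ^ (2 * n₁))) ^ θ *
      (w ω * (A ω ^ (2 * m₂) * B ω ^ (2 * n₂))) ^ (1 - θ) := by
    intro ω
    simp only [pow_mul]
    rw [split _ _ _ _ (hw ω) (hw ω) (hA' ω) (hB' ω)]
    have := interp_pow (hw ω) (m₁ := 1) (m₂ := 1) (m := 1) h0 h1 (by push_cast; ring)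
    simp only [pow_one] at this
    rw [this]
  rw [sum_congr rfl (fun ω _ => hpt ω)]
  have nn : ∀ a b : ℕ, ∀ ω, 0 ≤ w ω * (A ω ^ (2 * a) * B ω ^ (2 * b)) := by
    intro a b ω
    have := hw ω; have := hA ω; have := hB ω
    positivity
  refine (holder univ _ _ (fun ω _ => nn _ _ ω) (fun ω _ => nn _ _ ω) θ h0 h1).trans ?_
  refine (mul_le_mul (Real.rpow_le_rpow (sum_nonneg fun ω _ => nn _ _ ω) b₁ h0)
    (Real.rpow_le_rpow (sum_nonneg fun ω _ => nn _ _ ω) b₂ (by linarith))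
    (Real.rpow_nonneg (sum_nonneg fun ω _ => nn _ _ ω) _)
    (Real.rpow_nonneg (by positivity) _)).trans ?_
  rw [split _ _ _ _ hK₁ hK₂ hP hQ]

lemma tri_real (k : ℕ) : (tri k : ℝ) = k * (k + 1) / 2 := by
  have := two_tri k
  have h : (2 : ℝ) * tri k = k * (k + 1) := by exact_mod_cast this
  linarith

lemma bil_holder {k l n a b : ℕ} (hl : 1 ≤ l) (hlk : l < k) {K₁ K₂ : ℝ} (hK₁ : 0 ≤ K₁)
    (hK₂ : 0 ≤ K₂) (h₁ : Bil p k (k - l) n b a K₁) (h₂ : Bil p k (l - 1) n a b K₂) :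
    Bil p k l n a b (K₁ ^ (1 / ((k : ℝ) - l + 1)) * K₂ ^ (1 - 1 / ((k : ℝ) - l + 1))) := by
  intro Ω _ φ w S f hφ hw ho ξ η hne
  have hne' : ¬ (p : ℤ) ∣ η - ξ := by
    intro h; apply hne; rw [← neg_sub]; exact (dvd_neg).mpr h
  have b₁ := h₁ Ω φ w S f hφ hw ho η ξ hne'
  have b₂ := h₂ Ω φ w S f hφ hw ho ξ η hne
  have hlk' : (l : ℝ) + 1 ≤ k := by exact_mod_cast hlk
  have hd : (0 : ℝ) < (k : ℝ) - l + 1 := by linarith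
  have t1 := tri_mono (show k - l ≤ k by omega)
  have t2 := tri_mono (show l - 1 ≤ k by omega)
  have t3 := tri_mono (show l ≤ k by omega)
  have c1 : ((k - l : ℕ) : ℝ) = k - l := by rw [Nat.cast_sub hlk.le]
  have c2 : ((l - 1 : ℕ) : ℝ) = l - 1 := by rw [Nat.cast_sub hl]; simp
  refine interp_mixed w _ _ hw (fun ω => norm_nonneg _) (fun ω => norm_nonneg _)
    (m₁ := tri k - tri (k - l)) (n₁ := tri (k - l)) (m₂ := tri (l - 1))
    (n₂ := tri k - tri (l - 1)) (by positivity)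
    ((div_le_one hd).mpr (by linarith)) ?_ ?_ hK₁ hK₂ (q_nonneg hw f _) (q_nonneg hw f _) ?_ b₂
  · rw [Nat.cast_sub t1]
    simp only [tri_real, c1, c2]
    field_simp; ring
  · rw [Nat.cast_sub t2, Nat.cast_sub t3]
    simp only [tri_real, c1, c2]
    field_simp; ring
  · calc _ = _ := by
          apply sum_congr rfl; intro ω _; rw [mul_comm (_ ^ (2 * (tri k - tri (k - l))))]
      _ ≤ _ := b₁
      _ = _ := by rw [mul_comm (_ ^ tri (k - l))]

lemma bil_zero {k n a b : ℕ} (hb : 1 ≤ b) (hbn : b ≤ n) {D : ℝ} (hD : 0 ≤ D)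
    (hdec : Dec p k (n - b) D) : Bil p k 0 n a b D := by
  intro Ω _ φ w S f hφ hw ho ξ η _
  have := dec_cls hD hdec hb hbn φ hφ w hw S f ho η
  have e : tri 0 = 0 := rfl
  simp only [e, mul_zero, pow_zero, one_mul, Nat.sub_zero]
  exact this

lemma bil_base {k l n a b : ℕ} (hk : 1 ≤ k) (hlk : l ≤ k) (ha : 1 ≤ a) (han : a ≤ n) (hb : 1 ≤ b)
    (hbn : b ≤ n) {D : ℝ} (hD : 0 ≤ D) (h₁ : Dec p k (n - a) D) (h₂ : Dec p k (n - b) D) :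
    Bil p k l n a b D := by
  intro Ω _ φ w S f hφ hw ho ξ η _
  have b₁ := dec_cls hD h₁ ha han φ hφ w hw S f ho ξ
  have b₂ := dec_cls hD h₂ hb hbn φ hφ w hw S f ho η
  have hk0 : (0 : ℝ) < tri k := by exact_mod_cast tri_pos hk
  have t3 := tri_mono hlk
  have t3' : (tri l : ℝ) ≤ tri k := by exact_mod_cast t3
  have h0 : (0 : ℝ) ≤ (tri l : ℝ) / tri k := by positivity
  have h1 : (tri l : ℝ) / tri k ≤ 1 := (div_le_one hk0).mpr t3'
  have := interp_mixed w (fun ω => ‖F f (cls p a ξ S) ω‖) (fun ω => ‖F f (cls p b η S) ω‖) hw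
    (fun ω => norm_nonneg _) (fun ω => norm_nonneg _)
    (m₁ := tri k) (n₁ := 0) (m₂ := 0) (n₂ := tri k) (m := tri l) (n := tri k - tri l) h0
    h1 (by push_cast; field_simp; ring)
    (by rw [Nat.cast_sub t3]; push_cast; field_simp; ring) hD hD
    (q_nonneg hw f (cls p a ξ S)) (q_nonneg hw f (cls p b η S)) (by simpa [mom] using b₁)
    (by simpa [mom] using b₂)
  refine this.trans (le_of_eq ?_)
  congr 1
  have := interp_pow hD (m₁ := 1) (m₂ := 1) (m := 1) h0 h1 (by push_cast; ring)
  simpa using this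

end steps
end VMV

namespace VMV
open Polynomial

section steps2
variable {p : ℕ} [Fact p.Prime]

lemma pow_sum_ge {ι : Type*} (T : Finset ι) (A : ι → ℝ) (hA : ∀ i ∈ T, 0 ≤ A i) {s : ℕ}
    (hs : 1 ≤ s) : ∑ i ∈ T, A i ^ s ≤ (∑ i ∈ T, A i) ^ s := by
  obtain ⟨m, rfl⟩ : ∃ m, s = m + 1 := ⟨s - 1, by omega⟩
  rw [pow_succ, mul_sum]
  apply sum_le_sum
  intro i hi
  rw [pow_succ]
  apply mul_le_mul_of_nonneg_right _ (hA i hi)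
  exact pow_le_pow_left₀ (hA i hi) (single_le_sum hA hi) _

lemma norm_F_pow_le {Ω : Type} [Fintype Ω] (n : ℕ) (f : ℤ → Ω → ℂ) (S : Finset ℤ) (ω : Ω) {m : ℕ}
    (hm : 1 ≤ m) : ‖F f S ω‖ ^ m ≤
      ((p : ℝ) ^ n) ^ m * ∑ c ∈ range (p ^ n), ‖F f (cls p n (c : ℤ) S) ω‖ ^ m := by
  rw [F_cls (p_pos (p := p)) n f S ω]
  refine (pow_le_pow_left₀ (norm_nonneg _) (norm_sum_le _ _) m).trans ?_
  have := sum_pow_le (range (p ^ n)) (fun c => ‖F f (cls p n (c : ℤ) S) ω‖)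
    (fun _ _ => norm_nonneg _) hm
  simpa using this

lemma F_empty {Ω : Type} [Fintype Ω] (f : ℤ → Ω → ℂ) (ω : Ω) : F f ∅ ω = 0 := by simp [F]

lemma bil_trivial {k l n a b : ℕ} (hl : 1 ≤ l) (hlk : l < k) (ha : 1 ≤ a) (han : a ≤ n) (hb : 1 ≤ b)
    (hbn : b ≤ n) {K : ℝ} (hK : 0 ≤ K) (hB : Bil p k l n a b K) :
    Bil p k l n 1 1 ((p : ℝ) ^ ((2 * tri k + 1) * (a + b)) * K) := by
  intro Ω _ φ w S f hφ hw ho ξ η hne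
  have htl := tri_pos hl
  have htlk := tri_lt hlk
  set t := tri k - tri l with ht
  set I := cls p 1 ξ S with hI
  set J := cls p 1 η S with hJ
  set qI := q p n (tri k) w f I
  set qJ := q p n (tri k) w f J
  have hqI : 0 ≤ qI := q_nonneg hw f I
  have hqJ : 0 ≤ qJ := q_nonneg hw f J
  have hp1 : (1 : ℝ) ≤ p := by exact_mod_cast p_pos (p := p)
  set P₁ := ((p : ℝ) ^ a) ^ (2 * tri l)
  set P₂ := ((p : ℝ) ^ b) ^ (2 * t)
  have h1 : ∀ ω, w ω * (‖F f I ω‖ ^ (2 * tri l) * ‖F f J ω‖ ^ (2 * t)) ≤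
      ∑ c ∈ range (p ^ a), ∑ d ∈ range (p ^ b), (P₁ * P₂) * (w ω *
        (‖F f (cls p a (c : ℤ) I) ω‖ ^ (2 * tri l) * ‖F f (cls p b (d : ℤ) J) ω‖ ^ (2 * t))) := by
    intro ω
    have u1 := norm_F_pow_le (p := p) a f I ω (m := 2 * tri l) (by omega)
    have u2 := norm_F_pow_le (p := p) b f J ω (m := 2 * t) (by omega)
    have u3 := mul_le_mul_of_nonneg_left (mul_le_mul u1 u2 (by positivity) (by positivity)) (hw ω)
    refine u3.trans (le_of_eq ?_)
    simp only [← mul_sum]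
    rw [← sum_mul]
    ring
  refine (sum_le_sum fun ω _ => h1 ω).trans ?_
  rw [sum_comm]
  have h2 : ∀ c ∈ range (p ^ a), ∑ ω, ∑ d ∈ range (p ^ b), (P₁ * P₂) * (w ω *
        (‖F f (cls p a (c : ℤ) I) ω‖ ^ (2 * tri l) * ‖F f (cls p b (d : ℤ) J) ω‖ ^ (2 * t)))
        ≤ (p : ℝ) ^ b * ((P₁ * P₂) * (K * (qI ^ tri l * qJ ^ t))) := by
    intro c _
    rw [sum_comm]
    have h3 : ∀ d ∈ range (p ^ b), ∑ ω, (P₁ * P₂) * (w ω *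
        (‖F f (cls p a (c : ℤ) I) ω‖ ^ (2 * tri l) * ‖F f (cls p b (d : ℤ) J) ω‖ ^ (2 * t)))
        ≤ (P₁ * P₂) * (K * (qI ^ tri l * qJ ^ t)) := by
      intro d _
      rw [← mul_sum]
      apply mul_le_mul_of_nonneg_left _ (by positivity)
      have hnn : 0 ≤ K * (qI ^ tri l * qJ ^ t) := by positivity
      by_cases hc : (p : ℤ) ^ 1 ∣ (c : ℤ) - ξ
      swap
      · rw [hI, cls_cls_empty ha hc]
        simp only [F_empty, norm_zero]
        rw [zero_pow (by omega)]
        simpa using hnn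
      by_cases hd : (p : ℤ) ^ 1 ∣ (d : ℤ) - η
      swap
      · rw [hJ, cls_cls_empty hb hd]
        simp only [F_empty, norm_zero]
        rw [zero_pow (by omega)]
        simpa using hnn
      have hne' : ¬ (p : ℤ) ∣ (c : ℤ) - d := by
        intro h
        rw [pow_one] at hc hd
        apply hne
        have := dvd_add (dvd_sub h hc) hd
        have e : (c : ℤ) - d - (c - ξ) + (d - η) = ξ - η := by ring
        rwa [e] at this
      have h4 := hB Ω φ w S f hφ hw ho c d hne'
      have ec : cls p a (c : ℤ) I = cls p a c S := by rw [hI, cls_cls ha hc]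
      have ed : cls p b (d : ℤ) J = cls p b d S := by rw [hJ, cls_cls hb hd]
      rw [← ec, ← ed] at h4
      refine h4.trans ?_
      apply mul_le_mul_of_nonneg_left _ hK
      exact mul_le_mul (pow_le_pow_left₀ (q_nonneg hw f _) (q_cls_le han (by omega) hw f _ _) _)
        (pow_le_pow_left₀ (q_nonneg hw f _) (q_cls_le hbn (by omega) hw f _ _) _)
        (pow_nonneg (q_nonneg hw f _) _) (by positivity)
    have := sum_le_card_nsmul _ _ _ h3
    simpa using this
  have h5 := sum_le_card_nsmul _ _ _ h2
  refine h5.trans ?_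
  rw [nsmul_eq_mul, card_range]
  push_cast
  have h6 : (p : ℝ) ^ a * (p : ℝ) ^ b * (P₁ * P₂) ≤ (p : ℝ) ^ ((2 * tri k + 1) * (a + b)) := by
    have : (p : ℝ) ^ a * (p : ℝ) ^ b * (P₁ * P₂) =
        (p : ℝ) ^ (a + b + (a * (2 * tri l) + b * (2 * t))) := by
      simp only [P₁, P₂, ← pow_mul, ← pow_add]
    rw [this]
    apply pow_le_pow_right₀ hp1
    have e1 : a * (2 * tri l) ≤ a * (2 * tri k) := Nat.mul_le_mul_left _ (by omega)
    have e2 : b * (2 * t) ≤ b * (2 * tri k) := Nat.mul_le_mul_left _ (by omega)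
    nlinarith
  calc (p : ℝ) ^ a * ((p : ℝ) ^ b * ((P₁ * P₂) * (K * (qI ^ tri l * qJ ^ t))))
      = ((p : ℝ) ^ a * (p : ℝ) ^ b * (P₁ * P₂)) * (K * (qI ^ tri l * qJ ^ t)) := by ring
    _ ≤ (p : ℝ) ^ ((2 * tri k + 1) * (a + b)) * (K * (qI ^ tri l * qJ ^ t)) :=
        mul_le_mul_of_nonneg_right h6 (by positivity)
    _ = _ := by ring

lemma pointwise (N s : ℕ) (hN : 1 ≤ N) (z : ℕ → ℂ) :
    ‖∑ c ∈ range N, z c‖ ^ (2 * s) ≤ 4 ^ s * ∑ c ∈ range N, ‖z c‖ ^ (2 * s) +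
      (N : ℝ) ^ (3 * s) * ∑ e ∈ (range N).offDiag, ‖z e.1‖ ^ s * ‖z e.2‖ ^ s := by
  obtain ⟨c0, hc0, hmax⟩ := (range N).exists_max_image (fun c => ‖z c‖) ⟨0, mem_range.mpr hN⟩
  have hN0 : (0 : ℝ) < N := by exact_mod_cast hN
  have hnn1 : 0 ≤ ∑ c ∈ range N, ‖z c‖ ^ (2 * s) := sum_nonneg fun _ _ => by positivity
  have hnn2 : 0 ≤ ∑ e ∈ (range N).offDiag, ‖z e.1‖ ^ s * ‖z e.2‖ ^ s :=
    sum_nonneg fun _ _ => by positivity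
  by_cases h : ∀ c ∈ range N, c ≠ c0 → ‖z c‖ ≤ ‖z c0‖ / N
  · have h1 : ‖∑ c ∈ range N, z c‖ ≤ 2 * ‖z c0‖ := by
      rw [← add_sum_erase _ _ hc0]
      refine (norm_add_le _ _).trans ?_
      have h2 : ‖∑ c ∈ (range N).erase c0, z c‖ ≤ ‖z c0‖ := by
        refine (norm_sum_le _ _).trans ?_
        refine (sum_le_card_nsmul _ _ (‖z c0‖ / N) (fun c hc => ?_)).trans ?_
        · rw [mem_erase] at hc; exact h c hc.2 hc.1
        · rw [nsmul_eq_mul]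
          have : (((range N).erase c0).card : ℝ) ≤ N := by
            have := card_erase_le (s := range N) (a := c0)
            rw [card_range] at this
            exact_mod_cast this
          calc _ ≤ (N : ℝ) * (‖z c0‖ / N) := mul_le_mul_of_nonneg_right this (by positivity)
            _ = _ := by field_simp
      linarith
    have h3 := pow_le_pow_left₀ (norm_nonneg _) h1 (2 * s)
    have h4 : ‖z c0‖ ^ (2 * s) ≤ ∑ c ∈ range N, ‖z c‖ ^ (2 * s) :=
      single_le_sum (f := fun c => ‖z c‖ ^ (2 * s)) (fun _ _ => by positivity) hc0
    have h5 : (2 * ‖z c0‖) ^ (2 * s) = 4 ^ s * ‖z c0‖ ^ (2 * s) := by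
      rw [mul_pow, pow_mul]; norm_num
    have h6 : (4 : ℝ) ^ s * ‖z c0‖ ^ (2 * s) ≤ 4 ^ s * ∑ c ∈ range N, ‖z c‖ ^ (2 * s) :=
      mul_le_mul_of_nonneg_left h4 (by positivity)
    have h7 : 0 ≤ (N : ℝ) ^ (3 * s) * ∑ e ∈ (range N).offDiag, ‖z e.1‖ ^ s * ‖z e.2‖ ^ s := by
      positivity
    linarith
  · push Not at h
    obtain ⟨c1, hc1, hne, hlt⟩ := h
    have h1 : ‖∑ c ∈ range N, z c‖ ≤ N * ‖z c0‖ := by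
      refine (norm_sum_le _ _).trans ?_
      have := sum_le_card_nsmul (range N) (fun c => ‖z c‖) (‖z c0‖) hmax
      simpa using this
    have h2 : ‖z c0‖ ≤ N * ‖z c1‖ := by
      rw [div_lt_iff₀ hN0] at hlt; linarith
    have h3 : ‖∑ c ∈ range N, z c‖ ^ (2 * s) ≤ (N : ℝ) ^ (3 * s) * (‖z c0‖ ^ s * ‖z c1‖ ^ s) := by
      calc ‖∑ c ∈ range N, z c‖ ^ (2 * s) ≤ (N * ‖z c0‖) ^ (2 * s) :=
            pow_le_pow_left₀ (norm_nonneg _) h1 _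
        _ = (N : ℝ) ^ (2 * s) * (‖z c0‖ ^ s * ‖z c0‖ ^ s) := by
            rw [mul_pow, two_mul, pow_add ‖z c0‖]
        _ ≤ (N : ℝ) ^ (2 * s) * (‖z c0‖ ^ s * (N * ‖z c1‖) ^ s) := by gcongr
        _ = _ := by rw [mul_pow, show 3 * s = 2 * s + s by ring, pow_add]; ring
    have h4 : ‖z c0‖ ^ s * ‖z c1‖ ^ s ≤ ∑ e ∈ (range N).offDiag, ‖z e.1‖ ^ s * ‖z e.2‖ ^ s :=
      single_le_sum (f := fun e : ℕ × ℕ => ‖z e.1‖ ^ s * ‖z e.2‖ ^ s) (a := (c0, c1))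
        (fun _ _ => by positivity) (mem_offDiag.mpr ⟨hc0, hc1, hne.symm⟩)
    have h5 := mul_le_mul_of_nonneg_left h4 (by positivity : (0 : ℝ) ≤ (N : ℝ) ^ (3 * s))
    have h6 : 0 ≤ (4 : ℝ) ^ s * ∑ c ∈ range N, ‖z c‖ ^ (2 * s) := by positivity
    linarith

lemma mixed_le {A B : ℝ} (s t u : ℕ) (h : t + u = s) :
    A ^ s * B ^ s ≤ A ^ (2 * t) * B ^ (2 * u) + B ^ (2 * t) * A ^ (2 * u) := by
  have e1 : A ^ s * B ^ s = (A ^ t * B ^ u) * (B ^ t * A ^ u) := by rw [← h]; ring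
  have e2 : A ^ (2 * t) * B ^ (2 * u) = (A ^ t * B ^ u) ^ 2 := by ring
  have e3 : B ^ (2 * t) * A ^ (2 * u) = (B ^ t * A ^ u) ^ 2 := by ring
  rw [e1, e2, e3]
  nlinarith [sq_nonneg (A ^ t * B ^ u - B ^ t * A ^ u), sq_nonneg (A ^ t * B ^ u),
    sq_nonneg (B ^ t * A ^ u)]

lemma dec_step {k l n : ℕ} (hlk : l < k) (hn : 1 ≤ n) {D K : ℝ} (hD : 0 ≤ D)
    (hK : 0 ≤ K) (hdec : Dec p k (n - 1) D) (hB : Bil p k l n 1 1 K) :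
    Dec p k n (4 ^ tri k * D + (p : ℝ) ^ (3 * tri k + 3) * K) := by
  intro Ω _ φ w S f hφ hw ho
  have hp0 := p_pos (p := p)
  have hp2 : (2 : ℝ) ≤ p := by exact_mod_cast (Fact.out : p.Prime).two_le
  have htk := tri_pos (show 1 ≤ k by omega)
  have htlk := tri_lt hlk
  set s := tri k with hs
  set Q := q p n s w f S with hQ
  have hQ0 : 0 ≤ Q := q_nonneg hw f S
  have h1 : ∀ ω, w ω * ‖F f S ω‖ ^ (2 * s) ≤
      4 ^ s * ∑ c ∈ range p, w ω * ‖F f (cls p 1 (c : ℤ) S) ω‖ ^ (2 * s) +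
      (p : ℝ) ^ (3 * s) * ∑ e ∈ (range p).offDiag,
        (w ω * (‖F f (cls p 1 (e.1 : ℤ) S) ω‖ ^ (2 * tri l)
            * ‖F f (cls p 1 (e.2 : ℤ) S) ω‖ ^ (2 * (s - tri l))) +
         w ω * (‖F f (cls p 1 (e.2 : ℤ) S) ω‖ ^ (2 * tri l)
            * ‖F f (cls p 1 (e.1 : ℤ) S) ω‖ ^ (2 * (s - tri l)))) := by
    intro ω
    have h2 := pointwise p s hp0 (fun c => F f (cls p 1 (c : ℤ) S) ω)
    have h3 : F f S ω = ∑ c ∈ range p, F f (cls p 1 (c : ℤ) S) ω := by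
      have := F_cls hp0 1 f S ω
      rwa [pow_one] at this
    rw [← h3] at h2
    have h4 := mul_le_mul_of_nonneg_left h2 (hw ω)
    refine h4.trans ?_
    rw [mul_add, ← mul_sum]
    apply add_le_add
    · rw [← mul_assoc, ← mul_assoc, mul_comm (w ω)]
    · rw [← mul_assoc, mul_comm (w ω), mul_assoc]
      apply mul_le_mul_of_nonneg_left _ (by positivity)
      rw [mul_sum]
      apply sum_le_sum
      intro e _
      rw [← mul_add]
      apply mul_le_mul_of_nonneg_left _ (hw ω)
      exact mixed_le s (tri l) (s - tri l) (by omega)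
  have hmom : mom s w f S ≤ _ := sum_le_sum fun ω _ => h1 ω
  refine hmom.trans ?_
  rw [sum_add_distrib, ← mul_sum, ← mul_sum, sum_comm, sum_comm (t := (range p).offDiag)]
  have h5 : ∑ c ∈ range p, ∑ ω, w ω * ‖F f (cls p 1 (c : ℤ) S) ω‖ ^ (2 * s) ≤ D * Q ^ s := by
    have h6 : ∀ c ∈ range p, ∑ ω, w ω * ‖F f (cls p 1 (c : ℤ) S) ω‖ ^ (2 * s) ≤
        D * (q p n s w f (cls p 1 (c : ℤ) S)) ^ s := fun c _ =>
      dec_cls hD hdec le_rfl hn φ hφ w hw S f ho c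
    refine (sum_le_sum h6).trans ?_
    rw [← mul_sum]
    apply mul_le_mul_of_nonneg_left _ hD
    refine (pow_sum_ge _ _ (fun c _ => q_nonneg hw f _) htk).trans ?_
    have := q_cls hp0 hn htk w f S
    rw [pow_one] at this
    rw [this]
  have hbil : ∀ c c' : ℕ, c ∈ range p → c' ∈ range p → c ≠ c' →
      ∑ ω, w ω * (‖F f (cls p 1 (c : ℤ) S) ω‖ ^ (2 * tri l)
            * ‖F f (cls p 1 (c' : ℤ) S) ω‖ ^ (2 * (s - tri l))) ≤ K * Q ^ s := by
    intro c c' hc hc' hne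
    rw [mem_range] at hc hc'
    have hnd : ¬ (p : ℤ) ∣ (c : ℤ) - c' := by
      intro h
      have := Int.eq_zero_of_abs_lt_dvd h (by rw [abs_lt]; constructor <;> omega)
      omega
    refine (hB Ω φ w S f hφ hw ho c c' hnd).trans ?_
    apply mul_le_mul_of_nonneg_left _ hK
    have e : Q ^ s = Q ^ tri l * Q ^ (s - tri l) := by rw [← pow_add]; congr 1; omega
    rw [e]
    exact mul_le_mul (pow_le_pow_left₀ (q_nonneg hw f _) (q_cls_le hn htk hw f _ _) _)
        (pow_le_pow_left₀ (q_nonneg hw f _) (q_cls_le hn htk hw f _ _) _)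
        (pow_nonneg (q_nonneg hw f _) _) (by positivity)
  have h7 : ∑ e ∈ (range p).offDiag, ∑ ω,
        (w ω * (‖F f (cls p 1 (e.1 : ℤ) S) ω‖ ^ (2 * tri l)
            * ‖F f (cls p 1 (e.2 : ℤ) S) ω‖ ^ (2 * (s - tri l))) +
         w ω * (‖F f (cls p 1 (e.2 : ℤ) S) ω‖ ^ (2 * tri l)
            * ‖F f (cls p 1 (e.1 : ℤ) S) ω‖ ^ (2 * (s - tri l)))) ≤ (p : ℝ) ^ 3 * (K * Q ^ s) := by
    have h8 : ∀ e ∈ (range p).offDiag, ∑ ω,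
        (w ω * (‖F f (cls p 1 (e.1 : ℤ) S) ω‖ ^ (2 * tri l)
            * ‖F f (cls p 1 (e.2 : ℤ) S) ω‖ ^ (2 * (s - tri l))) +
         w ω * (‖F f (cls p 1 (e.2 : ℤ) S) ω‖ ^ (2 * tri l)
            * ‖F f (cls p 1 (e.1 : ℤ) S) ω‖ ^ (2 * (s - tri l)))) ≤ p * (K * Q ^ s) := by
      intro e he
      rw [mem_offDiag] at he
      rw [sum_add_distrib]
      have a1 := hbil e.1 e.2 he.1 he.2.1 he.2.2
      have a2 := hbil e.2 e.1 he.2.1 he.1 he.2.2.symm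
      have a3 : 0 ≤ K * Q ^ s := by positivity
      nlinarith
    refine (sum_le_card_nsmul _ _ _ h8).trans ?_
    rw [nsmul_eq_mul]
    have hc : ((range p).offDiag.card : ℝ) ≤ (p : ℝ) ^ 2 := by
      have : (range p).offDiag.card ≤ p ^ 2 := by
        rw [offDiag_card, card_range, sq]; omega
      exact_mod_cast this
    calc _ ≤ (p : ℝ) ^ 2 * (p * (K * Q ^ s)) := mul_le_mul_of_nonneg_right hc (by positivity)
      _ = _ := by ring
  have h9 := mul_le_mul_of_nonneg_left h5 (by positivity : (0 : ℝ) ≤ 4 ^ s)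
  have h10 := mul_le_mul_of_nonneg_left h7 (by positivity : (0 : ℝ) ≤ (p : ℝ) ^ (3 * s))
  refine (add_le_add h9 h10).trans (le_of_eq ?_)
  rw [pow_add]; ring

lemma dec_trivial {k : ℕ} (hk : 1 ≤ k) (n : ℕ) : Dec p k n ((p : ℝ) ^ (n * (2 * tri k))) := by
  intro Ω _ φ w S f hφ hw ho
  have htk := tri_pos hk
  have h1 : ∀ ω, w ω * ‖F f S ω‖ ^ (2 * tri k) ≤ ((p : ℝ) ^ n) ^ (2 * tri k) *
      ∑ c ∈ range (p ^ n), w ω * ‖F f (cls p n (c : ℤ) S) ω‖ ^ (2 * tri k) := by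
    intro ω
    have := mul_le_mul_of_nonneg_left
      (norm_F_pow_le (p := p) n f S ω (m := 2 * tri k) (by omega)) (hw ω)
    refine this.trans (le_of_eq ?_)
    rw [← mul_sum]; ring
  have hmom : mom (tri k) w f S ≤ _ := sum_le_sum fun ω _ => h1 ω
  refine hmom.trans ?_
  rw [← mul_sum, sum_comm, ← pow_mul]
  apply mul_le_mul_of_nonneg_left _ (by positivity)
  refine le_trans (le_of_eq ?_) (pow_sum_ge (range (p ^ n))
    (fun c => nm (tri k) w f (cls p n (c : ℤ) S)) (fun c _ => nm_nonneg hw f _) htk)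
  apply sum_congr rfl
  intro c _
  rw [nm_pow htk hw]; rfl

lemma good_one (φ : ℤ_[p][X]) (h : φ.map PadicInt.toZMod = X) (n : ℕ) (x y : ℤ)
    (hd : (p : ℤ_[p]) ^ n ∣ φ.eval (x : ℤ_[p]) - φ.eval (y : ℤ_[p])) : (p : ℤ) ^ n ∣ x - y := by
  have h1 : C (p : ℤ_[p]) ∣ φ - X := by
    rw [C_dvd_iff_dvd_coeff]
    intro i
    have h2 : PadicInt.toZMod ((φ - X).coeff i) = 0 := by
      rw [← coeff_map, Polynomial.map_sub, h, map_X, sub_self, coeff_zero]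
    have h3 : (φ - X).coeff i ∈ RingHom.ker (PadicInt.toZMod : ℤ_[p] →+* ZMod p) := h2
    rw [PadicInt.ker_toZMod, PadicInt.maximalIdeal_eq_span_p, Ideal.mem_span_singleton] at h3
    exact h3
  obtain ⟨ψ, hψ⟩ := h1
  have h4 : φ = X + C (p : ℤ_[p]) * ψ := by rw [← hψ]; ring
  obtain ⟨θ, hθ⟩ := sub_dvd_eval_sub (x : ℤ_[p]) (y : ℤ_[p]) ψ
  have h5 : φ.eval (x : ℤ_[p]) - φ.eval (y : ℤ_[p]) = ((x - y : ℤ) : ℤ_[p]) * (1 + p * θ) := by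
    rw [h4]
    simp only [eval_add, eval_X, eval_mul, eval_C]
    push_cast
    linear_combination (p : ℤ_[p]) * hθ
  have hu : IsUnit (1 + (p : ℤ_[p]) * θ) := by
    apply isUnit_of_toZMod
    simp
  rw [h5, hu.dvd_mul_right] at hd
  have := (PadicInt.norm_int_le_pow_iff_dvd (p := p) (k := x - y) (n := n)).mp (by
    rw [PadicInt.norm_le_pow_iff_mem_span_pow, Ideal.mem_span_singleton]; exact hd)
  exact_mod_cast this

lemma dec_one (n : ℕ) : Dec p 1 n 1 := by
  intro Ω _ φ w S f hφ hw ho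
  have hp0 := p_pos (p := p)
  have e1 : tri 1 = 1 := rfl
  rw [e1] at ho ⊢
  rw [one_mul, pow_one]
  have hφ0 : (φ 0).map PadicInt.toZMod = X := by simpa using hφ 0
  set I : ℤ → ℤ → ℂ := fun x y => ∑ ω, (w ω : ℂ) * (f x ω * (starRingEnd ℂ) (f y ω)) with hI
  have hI0 : ∀ x ∈ S, ∀ y ∈ S, ¬ (p : ℤ) ^ n ∣ x - y → I x y = 0 := by
    intro x hx y hy hnd
    by_contra hne
    apply hnd
    have := ho (fun _ => x) (fun _ => y) (fun _ => hx) (fun _ => hy) (by simpa [hI] using hne) 0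
    apply good_one (φ 0) hφ0
    simpa using this
  have hexp : ∀ T : Finset ℤ, ((mom 1 w f T : ℝ) : ℂ) = ∑ x ∈ T, ∑ y ∈ T, I x y := by
    intro T
    have h1 : ∀ ω, (((w ω * ‖F f T ω‖ ^ (2 * 1)) : ℝ) : ℂ) =
        ∑ x ∈ T, ∑ y ∈ T, (w ω : ℂ) * (f x ω * (starRingEnd ℂ) (f y ω)) := by
      intro ω
      have h2 : ((‖F f T ω‖ ^ (2 * 1) : ℝ) : ℂ) = F f T ω * (starRingEnd ℂ) (F f T ω) := by
        rw [Complex.mul_conj, Complex.normSq_eq_norm_sq]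
      rw [Complex.ofReal_mul, h2, F, map_sum, sum_mul_sum]
      simp only [mul_sum]
    unfold mom
    rw [Complex.ofReal_sum, sum_congr rfl (fun ω _ => h1 ω), sum_comm]
    apply sum_congr rfl; intro x _
    rw [sum_comm]
  have hq : q p n 1 w f S = ∑ c ∈ range (p ^ n), mom 1 w f (cls p n (c : ℤ) S) := by
    unfold q nm; simp
  rw [hq]
  apply le_of_eq
  apply Complex.ofReal_injective
  rw [Complex.ofReal_sum, hexp, ← sum_cls hp0 n S]
  apply sum_congr rfl
  intro c _
  rw [hexp]
  apply sum_congr rfl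
  intro x hx
  symm
  apply sum_subset (cls_subset _ _ _ _)
  intro y hy hyc
  apply hI0 x (cls_subset _ _ _ _ hx) y hy
  intro hd
  apply hyc
  rw [mem_cls] at hx ⊢
  refine ⟨hy, ?_⟩
  have := dvd_sub hx.2 hd
  have e : x - (c : ℤ) - (x - y) = y - c := by ring
  rwa [e] at this

end steps2
end VMV

namespace VMV
open Polynomial

/-- The gain exponents of the iteration. -/
noncomputable def gg (k : ℕ) : ℕ → ℕ → ℝ
  | 0, l => if l = 0 then 1 else 0
  | r + 1, l => if l = 0 then 1 else
      (1 / (l : ℝ)) * gg k r (k - l) + (((k : ℝ) - l) / ((k : ℝ) - l + 1)) * gg k r (l - 1)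

lemma gg_zero (k r : ℕ) : gg k r 0 = 1 := by cases r <;> simp [gg]

lemma gg_succ (k r l : ℕ) (hl : 1 ≤ l) : gg k (r + 1) l =
    (1 / (l : ℝ)) * gg k r (k - l) + (((k : ℝ) - l) / ((k : ℝ) - l + 1)) * gg k r (l - 1) := by
  simp [gg, show l ≠ 0 by omega]

lemma gg_sum (k r : ℕ) (hk : 1 ≤ k) :
    ∑ i ∈ range (k - 1), gg k r (i + 1) = r * (((k : ℝ) - 1) / k) := by
  induction r with
  | zero => simp [gg]
  | succ r ih =>
    have h1 : ∑ i ∈ range (k - 1), gg k (r + 1) (i + 1) =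
        ∑ i ∈ range (k - 1), (1 / ((i : ℝ) + 1)) * gg k r (k - (i + 1)) +
        ∑ i ∈ range (k - 1), (((k : ℝ) - (i + 1)) / ((k : ℝ) - i)) * gg k r i := by
      rw [← sum_add_distrib]
      apply sum_congr rfl
      intro i _
      rw [gg_succ _ _ _ (by omega)]
      push_cast
      rw [show (k : ℝ) - (i + 1) + 1 = k - i by ring]
    have h2 : ∑ i ∈ range (k - 1), (1 / ((i : ℝ) + 1)) * gg k r (k - (i + 1)) =
        ∑ i ∈ range (k - 1), (1 / ((k : ℝ) - (i + 1))) * gg k r (i + 1) := by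
      rw [← sum_range_reflect]
      apply sum_congr rfl
      intro i hi
      rw [mem_range] at hi
      have e : k - (k - 1 - 1 - i + 1) = i + 1 := by omega
      have e2 : ((k - 1 - 1 - i : ℕ) : ℝ) + 1 = (k : ℝ) - (i + 1) := by
        have : k - 1 - 1 - i + 1 + (i + 1) = k := by omega
        have : ((k - 1 - 1 - i : ℕ) : ℝ) + 1 + (i + 1) = k := by exact_mod_cast this
        linarith
      rw [e, e2]
    have h3 : ∑ i ∈ range (k - 1), (((k : ℝ) - (i + 1)) / ((k : ℝ) - i)) * gg k r i =
        ((k : ℝ) - 1) / k + ∑ i ∈ range (k - 1), (((k : ℝ) - (i + 2)) / ((k : ℝ) - (i + 1)))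
          * gg k r (i + 1) := by
      have h4 := sum_range_succ (fun i : ℕ => (((k : ℝ) - (i + 1)) / ((k : ℝ) - i)) * gg k r i) (k - 1)
      have h5 := sum_range_succ' (fun i : ℕ => (((k : ℝ) - (i + 1)) / ((k : ℝ) - i)) * gg k r i) (k - 1)
      have h6 : ((k : ℝ) - (((k - 1 : ℕ) : ℝ) + 1)) = 0 := by
        rw [Nat.cast_sub hk]; simp
      rw [h6] at h4
      rw [h5] at h4
      simp only [zero_div, zero_mul, add_zero] at h4
      rw [← h4, gg_zero, add_comm]
      congr 1
      · simp
      · apply sum_congr rfl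
        intro i _
        push_cast
        rw [show (k : ℝ) - (i + 1 + 1) = k - (i + 2) by ring]
    rw [h1, h2, h3]
    have h7 : ∑ i ∈ range (k - 1), (1 / ((k : ℝ) - (i + 1))) * gg k r (i + 1) +
        ∑ i ∈ range (k - 1), (((k : ℝ) - (i + 2)) / ((k : ℝ) - (i + 1))) * gg k r (i + 1) =
        ∑ i ∈ range (k - 1), gg k r (i + 1) := by
      rw [← sum_add_distrib]
      apply sum_congr rfl
      intro i hi
      rw [mem_range] at hi
      have : (i : ℝ) + 1 < k := by exact_mod_cast (by omega : i + 1 < k)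
      have h8 : (k : ℝ) - (i + 1) ≠ 0 := by linarith
      field_simp
      ring
    rw [ih] at h7
    push_cast
    linarith

lemma gg_exists (k r : ℕ) (hk : 2 ≤ k) : ∃ l, 1 ≤ l ∧ l < k ∧ (r : ℝ) / k ≤ gg k r l := by
  by_contra h
  push Not at h
  have hs := gg_sum k r (by omega)
  have : ∑ i ∈ range (k - 1), gg k r (i + 1) < ∑ i ∈ range (k - 1), (r : ℝ) / k := by
    apply sum_lt_sum_of_nonempty
    · exact ⟨0, mem_range.mpr (by omega)⟩
    · intro i hi
      rw [mem_range] at hi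
      exact h (i + 1) (by omega) (by omega)
  rw [hs, sum_const, card_range, nsmul_eq_mul, Nat.cast_sub (by omega : 1 ≤ k)] at this
  push_cast at this
  have e : (r : ℝ) * (((k : ℝ) - 1) / k) = (k - 1) * (r / k) := by ring
  rw [e] at this
  exact lt_irrefl _ this

section iter
variable {p : ℕ} [Fact p.Prime]

lemma rp_one : (1 : ℝ) ≤ p := by exact_mod_cast p_pos (p := p)

lemma rp_pos : (0 : ℝ) < p := by exact_mod_cast p_pos (p := p)

lemma rp_mono {x y : ℝ} (h : x ≤ y) : (p : ℝ) ^ x ≤ (p : ℝ) ^ y :=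
  Real.rpow_le_rpow_of_exponent_le rp_one h

lemma comb_pow {C : ℝ} (hC : 0 < C) (x y θ : ℝ) :
    (C * (p : ℝ) ^ x) ^ θ * (C * (p : ℝ) ^ y) ^ (1 - θ) =
      C * (p : ℝ) ^ (θ * x + (1 - θ) * y) := by
  have hp := rp_pos (p := p)
  rw [Real.mul_rpow hC.le (by positivity), Real.mul_rpow hC.le (by positivity),
    ← Real.rpow_mul hp.le, ← Real.rpow_mul hp.le, Real.rpow_add hp]
  have : C ^ θ * C ^ (1 - θ) = C := by
    rw [← Real.rpow_add hC]; simp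
  rw [mul_comm x, mul_comm y]
  linear_combination ((p : ℝ) ^ (θ * x) * (p : ℝ) ^ ((1 - θ) * y)) * this

lemma level {k : ℕ} (hkp : k < p) {C η ε' : ℝ} (hC : 1 ≤ C) (hη : 0 ≤ η)
    (hε : 0 ≤ ε') (hdk : ∀ n : ℕ, Dec p k n (C * (p : ℝ) ^ (η * n)))
    (hdl : ∀ l, 1 ≤ l → l < k → ∀ n : ℕ, Dec p l n (C * (p : ℝ) ^ (ε' * n))) (r : ℕ) :
    ∀ l n a b : ℕ, 1 ≤ l → l < k → 1 ≤ b → (k.factorial) ^ (2 * r) ∣ b → k ^ (r + 1) * b ≤ n →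
      l * a = (k - l + 1) * b →
      Bil p k l n a b (C ^ (r + 1) * (p : ℝ) ^ (η * (n - gg k r l * b) + r * ε' * n)) := by
  have hC0 : 0 < C := by linarith
  have hp := rp_pos (p := p)
  have bounds : ∀ l a b : ℕ, 1 ≤ l → l < k → 1 ≤ b → l * a = (k - l + 1) * b → 1 ≤ a ∧ a ≤ k * b := by
    intro l a b hl hlk hb h
    have h1 : 1 ≤ (k - l + 1) * b := Nat.mul_pos (by omega) hb
    have h2 : (k - l + 1) * b ≤ k * b := Nat.mul_le_mul_right _ (by omega)
    have h3 : a ≤ l * a := Nat.le_mul_of_pos_left _ hl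
    refine ⟨?_, by omega⟩
    rcases Nat.eq_zero_or_pos a with rfl | h4
    · simp at h; omega
    · exact h4
  induction r with
  | zero =>
    intro l n a b hl hlk hb _ hn hab
    obtain ⟨ha, hak⟩ := bounds l a b hl hlk hb hab
    have hkb : k * b ≤ n := by simpa using hn
    have hbk : b ≤ k * b := Nat.le_mul_of_pos_left _ (by omega)
    have : (C ^ (0 + 1) * (p : ℝ) ^ (η * (n - gg k 0 l * b) + (0 : ℕ) * ε' * n))
        = C * (p : ℝ) ^ (η * n) := by
      simp [gg, show l ≠ 0 by omega]
    rw [this]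
    refine bil_base (by omega) hlk.le ha (by omega) hb (by omega) (by positivity) ?_ ?_
    · refine (hdk (n - a)).mono ?_
      apply mul_le_mul_of_nonneg_left _ hC0.le
      apply rp_mono
      apply mul_le_mul_of_nonneg_left _ hη
      exact_mod_cast Nat.sub_le _ _
    · refine (hdk (n - b)).mono ?_
      apply mul_le_mul_of_nonneg_left _ hC0.le
      apply rp_mono
      apply mul_le_mul_of_nonneg_left _ hη
      exact_mod_cast Nat.sub_le _ _
  | succ r ih =>
    intro l n a b hl hlk hb hdiv hn hab
    obtain ⟨ha, hak⟩ := bounds l a b hl hlk hb hab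
    set M := k.factorial with hM
    have hMpos : 0 < M := Nat.factorial_pos k
    have hMdvd : ∀ m, 1 ≤ m → m ≤ k → m ∣ M := fun m h1 h2 => Nat.dvd_factorial h1 h2
    -- divisibility of a
    have hMa : M * M ^ (2 * r) ∣ a := by
      obtain ⟨b', hb'⟩ := hdiv
      obtain ⟨u, hu⟩ := hMdvd l hl hlk.le
      have h1 : l * a = l * ((M * M ^ (2 * r)) * ((k - l + 1) * u * b')) := by
        rw [hab, hb', show 2 * (r + 1) = 2 * r + 1 + 1 by ring, pow_succ, pow_succ]
        conv_lhs => rw [hu]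
        conv_rhs => rw [hu]
        ring
      exact ⟨_, Nat.eq_of_mul_eq_mul_left hl h1⟩
    have hMb : M * M ^ (2 * r) ∣ b := by
      refine dvd_trans ?_ hdiv
      rw [← pow_succ']
      exact pow_dvd_pow _ (by omega)
    have hkn : k * (k ^ (r + 1) * b) ≤ n := by
      rw [← mul_assoc, ← pow_succ']; exact hn
    have hk1 : 1 ≤ k ^ (r + 1) := Nat.one_le_pow _ _ (by omega)
    have hkbn : k * (k * b) ≤ n := by
      refine le_trans (Nat.mul_le_mul_left _ (Nat.mul_le_mul_right _ ?_)) hkn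
      exact Nat.le_self_pow (by omega) k
    have hkb1 : b ≤ k * b := Nat.le_mul_of_pos_left _ (by omega)
    have hkb2 : k * b ≤ k * (k * b) := Nat.mul_le_mul_left _ hkb1
    have sizea : k ^ (r + 1) * a ≤ n := by
      refine le_trans (Nat.mul_le_mul_left _ hak) (le_trans (le_of_eq ?_) hkn)
      ring
    have sizeb : k ^ (r + 1) * b ≤ n := by
      refine le_trans ?_ hkn
      exact Nat.le_mul_of_pos_left _ (by omega)
    have hle : ∀ (x y : ℕ), (ε' * ((x - y : ℕ) : ℝ)) ≤ ε' * x := fun x y =>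
      mul_le_mul_of_nonneg_left (by exact_mod_cast Nat.sub_le _ _) hε
    -- generic lowering step
    have lower : ∀ m c d : ℕ, 1 ≤ m → m < k → 1 ≤ c → 1 ≤ d → M * M ^ (2 * r) ∣ d → d ≤ k * b →
        k ^ (r + 1) * d ≤ n → m * c ≤ (k - m + 1) * d →
        Bil p k m n c d (C ^ (r + 2) * (p : ℝ) ^ (η * (n - gg k r m * d) + (r + 1) * ε' * n)) := by
      intro m c d hm hmk hc hd hMd hdk' hsz hcd
      obtain ⟨u, hu⟩ := hMdvd m hm hmk.le
      obtain ⟨v, hv⟩ := hMd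
      set a' := (k - m + 1) * (u * M ^ (2 * r) * v) with ha'
      have hma' : m * a' = (k - m + 1) * d := by
        rw [ha', hv]
        generalize M ^ (2 * r) = Z
        rw [hu]
        ring
      obtain ⟨hb1, hb2⟩ := bounds m a' d hm hmk hd hma'
      have hca : c ≤ a' := by
        rw [← hma'] at hcd
        exact Nat.le_of_mul_le_mul_left hcd hm
      have ha'n : a' ≤ n := by
        have : k * d ≤ k * (k * b) := Nat.mul_le_mul_left _ hdk'
        omega
      have hB := ih m n a' d hm hmk hd (Dvd.intro_left (M * v) (by rw [hv]; ring) :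
        M ^ (2 * r) ∣ d) hsz hma'
      have hK0 : 0 ≤ C ^ (r + 1) * (p : ℝ) ^ (η * (n - gg k r m * d) + r * ε' * n) := by positivity
      have hD0 : 0 ≤ C * (p : ℝ) ^ (ε' * n) := by positivity
      have hdec : Dec p m (a' - c) (C * (p : ℝ) ^ (ε' * n)) := by
        refine (hdl m hm hmk (a' - c)).mono ?_
        apply mul_le_mul_of_nonneg_left _ hC0.le
        apply rp_mono
        exact mul_le_mul_of_nonneg_left (by exact_mod_cast (by omega : a' - c ≤ n)) hε
      have hres := bil_lower hm hmk hkp hc (by omega) hca ha'n hma' hD0 hK0 hdec hB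
      refine hres.mono (le_of_eq ?_)
      rw [show η * (n - gg k r m * d) + (r + 1) * ε' * n =
        ε' * n + (η * (n - gg k r m * d) + r * ε' * n) by ring, Real.rpow_add hp (ε' * n)]
      ring
    -- first factor
    have hcd1 : (k - l) * b ≤ (k - (k - l) + 1) * a := by
      have e : k - (k - l) = l := by omega
      rw [e]
      have h1 : (k - l) * b ≤ (k - l + 1) * b := Nat.mul_le_mul_right _ (by omega)
      have h2 : l * a ≤ (l + 1) * a := Nat.mul_le_mul_right _ (by omega)
      omega
    have B1 := lower (k - l) b a (by omega) (by omega) hb ha hMa hak sizea hcd1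
    -- second factor
    have B2 : Bil p k (l - 1) n a b
        (C ^ (r + 2) * (p : ℝ) ^ (η * (n - gg k r (l - 1) * b) + (r + 1) * ε' * n)) := by
      rcases Nat.lt_or_ge 1 l with h | h
      · refine lower (l - 1) a b (by omega) (by omega) ha hb hMb hkb1 sizeb ?_
        have h1 : (l - 1) * a ≤ l * a := Nat.mul_le_mul_right _ (by omega)
        have h2 : (k - l + 1) * b ≤ (k - (l - 1) + 1) * b := Nat.mul_le_mul_right _ (by omega)
        omega
      · have hl1 : l = 1 := by omega
        subst hl1
        rw [Nat.sub_self, gg_zero]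
        refine (bil_zero hb (by omega) (by positivity) (hdk (n - b))).mono ?_
        have h1 : C ≤ C ^ (r + 2) := le_self_pow₀ hC (by omega)
        apply mul_le_mul h1 _ (by positivity) (by positivity)
        apply rp_mono
        rw [Nat.cast_sub (by omega : b ≤ n)]
        have : 0 ≤ ((r : ℝ) + 1) * ε' * n := by positivity
        linarith
    have hres := bil_holder hl hlk (by positivity) (by positivity) B1 B2
    refine hres.mono (le_of_eq ?_)
    rw [comb_pow (by positivity)]
    congr 2
    rw [gg_succ _ _ _ hl]
    have hl0 : (0 : ℝ) < l := by exact_mod_cast hl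
    have hlk' : (l : ℝ) + 1 ≤ k := by exact_mod_cast hlk
    have hd : (k : ℝ) - l + 1 ≠ 0 := by linarith
    have haR : (a : ℝ) = ((k : ℝ) - l + 1) * b / l := by
      rw [eq_div_iff hl0.ne']
      have : ((l * a : ℕ) : ℝ) = (((k - l + 1) * b : ℕ) : ℝ) := by exact_mod_cast hab
      push_cast [Nat.cast_sub hlk.le] at this
      linarith
    rw [haR]
    push_cast
    field_simp
    ring

lemma improve {k r : ℕ} (hk : 2 ≤ k) (hr : 1 ≤ r) (hkp : k < p) {C η ε ε' σ : ℝ} (hC : 1 ≤ C)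
    (hε : 0 < ε) (hηε : ε ≤ η) (hε' : 0 ≤ ε') (hσ : 0 ≤ σ)
    (hrε : (2 * (tri k : ℝ) + 1) * (k + 1) + 1 ≤ ε * (r / k))
    (hσ1 : σ + r * ε' ≤ 1 / (k : ℝ) ^ (r + 1))
    (hp4 : 2 * (4 : ℝ) ^ tri k ≤ (p : ℝ) ^ ε)
    (hdk : ∀ n : ℕ, Dec p k n (C * (p : ℝ) ^ (η * n)))
    (hdl : ∀ l, 1 ≤ l → l < k → ∀ n : ℕ, Dec p l n (C * (p : ℝ) ^ (ε' * n))) :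
    ∃ C' : ℝ, 1 ≤ C' ∧ ∀ n : ℕ, Dec p k n (C' * (p : ℝ) ^ (max (η - σ) ε * n)) := by
  obtain ⟨l, hl, hlk, hg⟩ := gg_exists k r hk
  have hη : 0 ≤ η := by linarith
  have hC0 : 0 < C := by linarith
  have hp := rp_pos (p := p)
  set M := k.factorial ^ (2 * r) with hM
  have hMpos : 0 < M := Nat.pow_pos (Nat.factorial_pos k)
  set T := k ^ (r + 1) * M with hT
  have hkr : 0 < k ^ (r + 1) := Nat.pow_pos (by omega)
  have hTpos : 0 < T := Nat.mul_pos hkr hMpos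
  set C1 := C ^ (r + 1) * (p : ℝ) ^ (M : ℝ) + C * (p : ℝ) ^ (σ * T) with hC1
  have hC1pos : 0 < C1 := by positivity
  have hBil : ∀ n : ℕ, 1 ≤ n → Bil p k l n 1 1 (C1 * (p : ℝ) ^ ((η - σ) * n)) := by
    intro n hn
    rcases Nat.lt_or_ge n T with hnT | hnT
    · have hd : Dec p k (n - 1) (C * (p : ℝ) ^ (η * n)) := by
        refine (hdk (n - 1)).mono ?_
        apply mul_le_mul_of_nonneg_left _ hC0.le
        apply rp_mono
        exact mul_le_mul_of_nonneg_left (by exact_mod_cast Nat.sub_le _ _) hη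
      refine (bil_base (by omega) hlk.le le_rfl hn le_rfl hn (by positivity) hd hd).mono ?_
      have h1 : (p : ℝ) ^ (η * n) ≤ (p : ℝ) ^ (σ * T) * (p : ℝ) ^ ((η - σ) * n) := by
        rw [← Real.rpow_add hp]
        apply rp_mono
        have : σ * n ≤ σ * T := mul_le_mul_of_nonneg_left (by exact_mod_cast hnT.le) hσ
        linarith
      calc C * (p : ℝ) ^ (η * n) ≤ C * ((p : ℝ) ^ (σ * T) * (p : ℝ) ^ ((η - σ) * n)) :=
            mul_le_mul_of_nonneg_left h1 hC0.le
        _ = (C * (p : ℝ) ^ (σ * T)) * (p : ℝ) ^ ((η - σ) * n) := by ring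
        _ ≤ _ := by
            apply mul_le_mul_of_nonneg_right _ (by positivity)
            rw [hC1]
            have : 0 ≤ C ^ (r + 1) * (p : ℝ) ^ (M : ℝ) := by positivity
            linarith
    · set b := M * (n / T) with hb
      have hq1 : 1 ≤ n / T := (Nat.one_le_div_iff hTpos).mpr hnT
      have hb1 : 1 ≤ b := Nat.mul_pos hMpos hq1
      have hkb : k ^ (r + 1) * b ≤ n := by
        rw [hb, ← mul_assoc]; exact Nat.mul_div_le n T
      obtain ⟨u, hu⟩ : l ∣ M := by
        have h1 : l ∣ k.factorial := Nat.dvd_factorial hl hlk.le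
        exact dvd_trans h1 (dvd_pow_self _ (by omega))
      set a := (k - l + 1) * (u * (n / T)) with ha
      have hab : l * a = (k - l + 1) * b := by
        rw [ha, hb]
        conv_rhs => rw [hu]
        ring
      have hak : a ≤ k * b := by
        have h2 : (k - l + 1) * b ≤ k * b := Nat.mul_le_mul_right _ (by omega)
        have h3 : a ≤ l * a := Nat.le_mul_of_pos_left _ hl
        omega
      have ha1 : 1 ≤ a := by
        rcases Nat.eq_zero_or_pos a with h0 | h0
        · rw [h0, mul_zero] at hab
          have : 0 < (k - l + 1) * b := Nat.mul_pos (by omega) hb1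
          omega
        · exact h0
      have hkbn : k * b ≤ n := by
        refine le_trans (Nat.mul_le_mul_right _ ?_) hkb
        exact Nat.le_self_pow (by omega) k
      have hbk : b ≤ k * b := Nat.le_mul_of_pos_left _ (by omega)
      have h1 := level hkp hC hη hε' hdk hdl r l n a b hl hlk hb1 (Dvd.intro _ rfl) hkb hab
      have h2 := bil_trivial hl hlk ha1 (by omega) hb1 (by omega) (by positivity) h1
      refine h2.mono ?_
      rw [← Real.rpow_natCast (p : ℝ) ((2 * tri k + 1) * (a + b))]
      have hbn : (n : ℝ) / (k : ℝ) ^ (r + 1) ≤ b + M := by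
        have h3 : n ≤ T * (n / T) + T := by
          have := Nat.div_add_mod n T
          have := Nat.mod_lt n hTpos
          omega
        have h4 : (n : ℝ) ≤ (k : ℝ) ^ (r + 1) * (b + M) := by
          have : n ≤ k ^ (r + 1) * (b + M) := by
            rw [mul_add, hb, ← mul_assoc]; exact h3
          exact_mod_cast this
        rw [div_le_iff₀ (by exact_mod_cast hkr)]
        linarith
      have hexp : (((2 * tri k + 1) * (a + b) : ℕ) : ℝ) +
          (η * (n - gg k r l * b) + r * ε' * n) ≤ M + (η - σ) * n := by
        have e1 : (((2 * tri k + 1) * (a + b) : ℕ) : ℝ) ≤ (2 * (tri k : ℝ) + 1) * ((k + 1) * b) := by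
          have : (2 * tri k + 1) * (a + b) ≤ (2 * tri k + 1) * ((k + 1) * b) :=
            Nat.mul_le_mul_left _ (by rw [add_mul, one_mul]; omega)
          exact_mod_cast this
        have e2 : ε * (r / k) ≤ η * gg k r l :=
          mul_le_mul hηε hg (by positivity) hη
        have e3 : ((2 * (tri k : ℝ) + 1) * (k + 1) + 1) * b ≤ η * gg k r l * b :=
          mul_le_mul_of_nonneg_right (hrε.trans e2) (by positivity)
        have e4 : (σ + r * ε') * n ≤ 1 / (k : ℝ) ^ (r + 1) * n :=
          mul_le_mul_of_nonneg_right hσ1 (by positivity)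
        have e5 : 1 / (k : ℝ) ^ (r + 1) * n = (n : ℝ) / (k : ℝ) ^ (r + 1) := by ring
        nlinarith
      calc (p : ℝ) ^ (((2 * tri k + 1) * (a + b) : ℕ) : ℝ) *
            (C ^ (r + 1) * (p : ℝ) ^ (η * (n - gg k r l * b) + r * ε' * n))
          = C ^ (r + 1) * (p : ℝ) ^ ((((2 * tri k + 1) * (a + b) : ℕ) : ℝ) +
          (η * (n - gg k r l * b) + r * ε' * n)) := by
            rw [Real.rpow_add hp (((2 * tri k + 1) * (a + b) : ℕ) : ℝ)]; ring
        _ ≤ C ^ (r + 1) * (p : ℝ) ^ (M + (η - σ) * n) :=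
            mul_le_mul_of_nonneg_left (rp_mono hexp) (by positivity)
        _ = (C ^ (r + 1) * (p : ℝ) ^ (M : ℝ)) * (p : ℝ) ^ ((η - σ) * n) := by
            rw [Real.rpow_add hp]; ring
        _ ≤ _ := by
            apply mul_le_mul_of_nonneg_right _ (by positivity)
            rw [hC1]
            have : 0 ≤ C * (p : ℝ) ^ (σ * T) := by positivity
            linarith
  set η' := max (η - σ) ε with hη'
  set C2 := C + 2 * ((p : ℝ) ^ (3 * tri k + 3) * C1) with hC2
  have hPC : 0 < (p : ℝ) ^ (3 * tri k + 3) * C1 := by positivity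
  have hC2pos : 0 < C2 := by positivity
  refine ⟨C2, by linarith, ?_⟩
  intro n
  induction n with
  | zero =>
    refine (hdk 0).mono ?_
    simp only [Nat.cast_zero, mul_zero, Real.rpow_zero, mul_one]
    linarith
  | succ n ih =>
    have h1 := dec_step hlk (Nat.succ_le_succ (Nat.zero_le n)) (by positivity) (by positivity)
      (show Dec p k (n + 1 - 1) (C2 * (p : ℝ) ^ (η' * n)) from ih) (hBil (n + 1) (by omega))
    refine h1.mono ?_
    have h2 : (p : ℝ) ^ (η' * ((n + 1 : ℕ) : ℝ)) = (p : ℝ) ^ η' * (p : ℝ) ^ (η' * n) := by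
      rw [← Real.rpow_add hp]; congr 1; push_cast; ring
    have h3 : 2 * (4 : ℝ) ^ tri k ≤ (p : ℝ) ^ η' := hp4.trans (rp_mono (le_max_right _ _))
    have h4 : (p : ℝ) ^ ((η - σ) * ((n + 1 : ℕ) : ℝ)) ≤ (p : ℝ) ^ (η' * ((n + 1 : ℕ) : ℝ)) :=
      rp_mono (mul_le_mul_of_nonneg_right (le_max_left _ _) (by positivity))
    set Y := (p : ℝ) ^ (η' * ((n + 1 : ℕ) : ℝ)) with hY
    have hY0 : 0 < Y := by positivity
    have h5 : 4 ^ tri k * (C2 * (p : ℝ) ^ (η' * n)) ≤ C2 / 2 * Y := by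
      rw [h2]
      have : (4 : ℝ) ^ tri k * (p : ℝ) ^ (η' * n) ≤ ((p : ℝ) ^ η' / 2) * (p : ℝ) ^ (η' * n) :=
        mul_le_mul_of_nonneg_right (by linarith) (by positivity)
      have := mul_le_mul_of_nonneg_left this hC2pos.le
      linarith
    have h6 : (p : ℝ) ^ (3 * tri k + 3) * (C1 * (p : ℝ) ^ ((η - σ) * ((n + 1 : ℕ) : ℝ)))
        ≤ ((p : ℝ) ^ (3 * tri k + 3) * C1) * Y := by
      rw [← mul_assoc]
      exact mul_le_mul_of_nonneg_left h4 hPC.le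
    have h7 : ((p : ℝ) ^ (3 * tri k + 3) * C1) * Y ≤ C2 / 2 * Y := by
      apply mul_le_mul_of_nonneg_right _ hY0.le
      linarith
    linarith

end iter

lemma Dec.mono_exp {p : ℕ} [Fact p.Prime] {k n : ℕ} {C C' x : ℝ} (h : Dec p k n (C * (p : ℝ) ^ x))
    (hC : C ≤ C') : Dec p k n (C' * (p : ℝ) ^ x) :=
  h.mono (mul_le_mul_of_nonneg_right hC (by positivity))

theorem main_dec (k : ℕ) (hk : 1 ≤ k) : ∀ ε : ℝ, 0 < ε → ∃ P₀ : ℕ, ∀ (p : ℕ) [Fact p.Prime], P₀ ≤ p →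
    ∃ C : ℝ, 1 ≤ C ∧ ∀ n : ℕ, Dec p k n (C * (p : ℝ) ^ (ε * n)) := by
  induction k using Nat.strong_induction_on with
  | _ k IH =>
  intro ε hε
  rcases Nat.lt_or_ge 1 k with hk2 | hk1
  swap
  · have : k = 1 := by omega
    subst this
    refine ⟨0, fun p _ _ => ⟨1, le_rfl, fun n => (dec_one n).mono ?_⟩⟩
    rw [one_mul]
    exact Real.one_le_rpow rp_one (by positivity)
  have hk0 : (0 : ℝ) < k := by exact_mod_cast hk
  obtain ⟨r, hr⟩ := exists_nat_ge (((2 * (tri k : ℝ) + 1) * (k + 1) + 1) * k / ε)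
  have hnum : 0 < ((2 * (tri k : ℝ) + 1) * (k + 1) + 1) * k / ε := by positivity
  have hr0 : (0 : ℝ) < r := lt_of_lt_of_le hnum hr
  have hr1 : 1 ≤ r := by exact_mod_cast hr0
  have hrε : (2 * (tri k : ℝ) + 1) * (k + 1) + 1 ≤ ε * (r / k) := by
    rw [div_le_iff₀ hε] at hr
    rw [← mul_div_assoc, le_div_iff₀ hk0]
    linarith
  set σ : ℝ := 1 / (k : ℝ) ^ (r + 1) / 2 with hσ
  have hσ0 : 0 < σ := by positivity
  set ε' : ℝ := σ / r with hε'
  have hε'0 : 0 < ε' := by positivity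
  have hσ1 : σ + r * ε' ≤ 1 / (k : ℝ) ^ (r + 1) := by
    rw [hε', mul_div_cancel₀ _ hr0.ne', hσ]; linarith
  have IH' : ∀ l : ℕ, ∃ P₀ : ℕ, 1 ≤ l → l < k → ∀ (p : ℕ) [Fact p.Prime], P₀ ≤ p →
    ∃ C : ℝ, 1 ≤ C ∧ ∀ n : ℕ, Dec p l n (C * (p : ℝ) ^ (ε' * n)) := by
    intro l
    by_cases h : 1 ≤ l ∧ l < k
    · obtain ⟨P, hP⟩ := IH l h.2 h.1 ε' hε'0
      exact ⟨P, fun _ _ => hP⟩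
    · exact ⟨0, fun h1 h2 => absurd ⟨h1, h2⟩ h⟩
  choose P hP using IH'
  obtain ⟨P1, hP1⟩ := exists_nat_ge ((2 * (4 : ℝ) ^ tri k) ^ (ε⁻¹))
  refine ⟨∑ l ∈ range k, P l + P1 + k + 1, ?_⟩
  intro p _ hp
  have hkp : k < p := by omega
  have hP1p : P1 ≤ p := by omega
  have hPl : ∀ l, l < k → P l ≤ p := by
    intro l hl
    have := single_le_sum (f := P) (fun _ _ => Nat.zero_le _) (mem_range.mpr hl)
    omega
  have hp4 : 2 * (4 : ℝ) ^ tri k ≤ (p : ℝ) ^ ε := by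
    have h1 : (2 * (4 : ℝ) ^ tri k) ^ (ε⁻¹) ≤ (p : ℝ) := hP1.trans (by exact_mod_cast hP1p)
    have h2 := Real.rpow_le_rpow (by positivity) h1 hε.le
    rwa [Real.rpow_inv_rpow (by positivity) hε.ne'] at h2
  have hQ : ∀ l : ℕ, ∃ C : ℝ, 1 ≤ C ∧ (1 ≤ l → l < k → ∀ n : ℕ,
      Dec p l n (C * (p : ℝ) ^ (ε' * n))) := by
    intro l
    by_cases h : 1 ≤ l ∧ l < k
    · obtain ⟨C, h1, h2⟩ := hP l h.1 h.2 p (hPl l h.2)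
      exact ⟨C, h1, fun _ _ => h2⟩
    · exact ⟨1, le_rfl, fun h1 h2 => absurd ⟨h1, h2⟩ h⟩
  choose Cl hCl1 hCl using hQ
  set B := ∑ l ∈ range k, Cl l with hB
  have hBl : ∀ l, l < k → Cl l ≤ B := fun l hl =>
    single_le_sum (f := Cl) (fun i _ => by linarith [hCl1 i]) (mem_range.mpr hl)
  have hB0 : 0 ≤ B := sum_nonneg fun i _ => by linarith [hCl1 i]
  -- iterate
  have main : ∀ i : ℕ, ∃ C : ℝ, 1 ≤ C ∧ ∀ n : ℕ,
      Dec p k n (C * (p : ℝ) ^ (max (2 * (tri k : ℝ) + ε - i * σ) ε * n)) := by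
    intro i
    induction i with
    | zero =>
      refine ⟨1, le_rfl, fun n => (dec_trivial hk n).mono ?_⟩
      rw [one_mul, ← Real.rpow_natCast]
      apply rp_mono
      push_cast
      rw [mul_comm]
      apply mul_le_mul_of_nonneg_right _ (by positivity)
      refine le_trans ?_ (le_max_left _ _)
      linarith
    | succ i ih =>
      obtain ⟨C, hC1, hC⟩ := ih
      have h1 : C ≤ C + B := by linarith
      obtain ⟨C', hC'1, hC'⟩ := improve (C := C + B) (η := max (2 * (tri k : ℝ) + ε - i * σ) ε)
        hk2 hr1 hkp (by linarith) hε (le_max_right _ _) hε'0.le hσ0.le hrε hσ1 hp4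
        (fun n => (hC n).mono_exp h1)
        (fun l hl hlk n => (hCl l hl hlk n).mono_exp (by linarith [hBl l hlk]))
      refine ⟨C', hC'1, fun n => (hC' n).mono ?_⟩
      apply mul_le_mul_of_nonneg_left _ (by linarith)
      apply rp_mono
      apply mul_le_mul_of_nonneg_right _ (by positivity)
      apply max_le _ (le_max_right _ _)
      rw [sub_le_iff_le_add]
      apply max_le
      · have := le_max_left (2 * (tri k : ℝ) + ε - ((i + 1 : ℕ) : ℝ) * σ) ε
        push_cast at this ⊢
        linarith
      · have := le_max_right (2 * (tri k : ℝ) + ε - ((i + 1 : ℕ) : ℝ) * σ) ε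
        linarith
  obtain ⟨i, hi⟩ := exists_nat_ge (2 * (tri k : ℝ) / σ)
  obtain ⟨C, h1, h2⟩ := main i
  refine ⟨C, h1, fun n => ?_⟩
  have := h2 n
  rwa [max_eq_right] at this
  rw [div_le_iff₀ hσ0] at hi
  linarith

end VMV

namespace VMV
open Polynomial

section chars
variable {k Q : ℕ} [NeZero Q]

/-- The character of `(ZMod Q)^k` attached to an integer vector. -/
noncomputable def ch (v : Fin k → ℤ) (α : Fin k → ZMod Q) : ℂ :=
  ZMod.stdAddChar (∑ j, α j * ((v j : ℤ) : ZMod Q))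

lemma ch_add (v v' : Fin k → ℤ) (α : Fin k → ZMod Q) : ch (v + v') α = ch v α * ch v' α := by
  unfold ch
  rw [← AddChar.map_add_eq_mul, ← sum_add_distrib]
  congr 1
  apply sum_congr rfl; intro j _
  simp [mul_add]

lemma ch_zero (α : Fin k → ZMod Q) : ch (0 : Fin k → ℤ) α = 1 := by
  simp [ch]

lemma ch_conj (v : Fin k → ℤ) (α : Fin k → ZMod Q) : (starRingEnd ℂ) (ch v α) = ch (-v) α := by
  unfold ch
  rw [← AddChar.map_neg_eq_conj, ← sum_neg_distrib]
  congr 1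
  apply sum_congr rfl; intro j _
  simp

lemma ch_sum {ι : Type*} (T : Finset ι) (v : ι → Fin k → ℤ) (α : Fin k → ZMod Q) :
    ∏ i ∈ T, ch (v i) α = ch (∑ i ∈ T, v i) α := by
  classical
  induction T using Finset.induction_on with
  | empty => simp [ch_zero]
  | insert a s ha ih => rw [prod_insert ha, sum_insert ha, ch_add, ih]

lemma ch_norm (v : Fin k → ℤ) (α : Fin k → ZMod Q) : ‖ch v α‖ = 1 := AddChar.norm_apply _ _

lemma ch_avg (v : Fin k → ℤ) : ∑ α : Fin k → ZMod Q, ch v α =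
    if ∀ j, ((v j : ℤ) : ZMod Q) = 0 then ((Q : ℂ) ^ k) else 0 := by
  have h1 : ∀ α : Fin k → ZMod Q, ch v α =
      ∏ j, (ZMod.stdAddChar (α j * ((v j : ℤ) : ZMod Q)) : ℂ) := by
    intro α
    unfold ch
    have : ∀ (T : Finset (Fin k)) (g : Fin k → ZMod Q), (ZMod.stdAddChar (∑ j ∈ T, g j) : ℂ) =
        ∏ j ∈ T, (ZMod.stdAddChar (g j) : ℂ) := by
      intro T g
      induction T using Finset.induction_on with
      | empty => simp
      | insert a s ha ih => rw [prod_insert ha, sum_insert ha, AddChar.map_add_eq_mul, ih]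
    exact this _ _
  rw [sum_congr rfl (fun α _ => h1 α)]
  have h2 := prod_univ_sum (fun _ : Fin k => (univ : Finset (ZMod Q)))
    (fun j x => (ZMod.stdAddChar (x * ((v j : ℤ) : ZMod Q)) : ℂ))
  rw [Fintype.piFinset_univ] at h2
  rw [← h2]
  have h3 : ∀ j, ∑ x : ZMod Q, (ZMod.stdAddChar (x * ((v j : ℤ) : ZMod Q)) : ℂ) =
      if ((v j : ℤ) : ZMod Q) = 0 then (Q : ℂ) else 0 := by
    intro j
    rw [AddChar.sum_mulShift _ (ZMod.isPrimitive_stdAddChar Q), ZMod.card]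
    split_ifs <;> simp
  simp only [h3]
  split_ifs with h
  · simp [h]
  · push Not at h
    obtain ⟨j, hj⟩ := h
    exact prod_eq_zero (mem_univ j) (by simp [hj])

/-- The uniform weight. -/
noncomputable def wt (k Q : ℕ) : (Fin k → ZMod Q) → ℝ := fun _ => ((Q : ℝ) ^ k)⁻¹

lemma wt_nonneg (α : Fin k → ZMod Q) : 0 ≤ wt k Q α := by unfold wt; positivity

lemma wt_avg (v : Fin k → ℤ) : ∑ α : Fin k → ZMod Q, (wt k Q α : ℂ) * ch v α =
    if ∀ j, ((v j : ℤ) : ZMod Q) = 0 then 1 else 0 := by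
  unfold wt
  rw [← mul_sum, ch_avg]
  have : (Q : ℂ) ^ k ≠ 0 := pow_ne_zero _ (by exact_mod_cast NeZero.ne Q)
  split_ifs
  · push_cast; field_simp
  · simp

lemma wt_sum : ∑ α : Fin k → ZMod Q, wt k Q α = 1 := by
  have h := wt_avg (k := k) (Q := Q) 0
  simp only [ch_zero, mul_one, Pi.zero_apply, Int.cast_zero, implies_true, if_true] at h
  exact_mod_cast h

lemma wt_count {ι : Type*} (T : Finset ι) (v : ι → Fin k → ℤ) (G : (Fin k → ZMod Q) → ℝ)
    (hG : ∀ α, (G α : ℂ) = ∑ i ∈ T, ch (v i) α) :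
    ∑ α, wt k Q α * G α = ((T.filter fun i => ∀ j, ((v i j : ℤ) : ZMod Q) = 0).card : ℝ) := by
  apply Complex.ofReal_injective
  rw [Complex.ofReal_sum]
  have : ∀ α, ((wt k Q α * G α : ℝ) : ℂ) = ∑ i ∈ T, (wt k Q α : ℂ) * ch (v i) α := by
    intro α; rw [Complex.ofReal_mul, hG, mul_sum]
  rw [sum_congr rfl (fun α _ => this α), sum_comm]
  simp only [wt_avg]
  rw [sum_boole]
  simp

/-- The moment curve. -/
def pw (k : ℕ) (x : ℤ) : Fin k → ℤ := fun j => x ^ (j.val + 1)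

/-- exponential sum terms -/
noncomputable def fx (k Q : ℕ) [NeZero Q] : ℤ → (Fin k → ZMod Q) → ℂ := fun x => ch (pw k x)

lemma fx_prod {s : ℕ} (x y : Fin s → ℤ) (α : Fin k → ZMod Q) :
    (∏ i, fx k Q (x i) α) * ∏ i, (starRingEnd ℂ) (fx k Q (y i) α) =
      ch (∑ i, (pw k (x i) - pw k (y i))) α := by
  unfold fx
  simp only [ch_conj]
  rw [ch_sum, ch_sum, ← ch_add]
  congr 1
  rw [← sum_add_distrib]
  simp [sub_eq_add_neg]

lemma int_eq_zero {v : ℤ} (h : ((v : ℤ) : ZMod Q) = 0) (hv : |v| < Q) : v = 0 := by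
  rw [ZMod.intCast_zmod_eq_zero_iff_dvd] at h
  exact Int.eq_zero_of_abs_lt_dvd h hv

lemma vmvt_aux (p : ℕ) [Fact p.Prime] (hk : 1 ≤ k) (M n : ℕ) (hM : 1 ≤ M) (hn : M ≤ p ^ n)
    (hQ : tri k * M ^ k < Q) {D : ℝ} (hD : 0 ≤ D) (hdec : Dec p k n D) :
    mom (tri k) (wt k Q) (fx k Q) (Icc 1 (M : ℤ)) ≤ D * (M : ℝ) ^ tri k := by
  have htk := tri_pos hk
  have hM1 : (1 : ℤ) ≤ M := by exact_mod_cast hM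
  have hgood : Good (p := p) (fun j : Fin k => (X : ℤ_[p][X]) ^ (j.val + 1)) := by
    intro j; simp
  have horth : Orth (p := p) (tri k) (k * n) (fun j : Fin k => (X : ℤ_[p][X]) ^ (j.val + 1))
      (wt k Q) (Icc 1 (M : ℤ)) (fx k Q) := by
    intro x y hx hy hne j
    simp only [fx_prod, wt_avg] at hne
    have hz : ∀ j, (((∑ i, (pw k (x i) - pw k (y i))) j : ℤ) : ZMod Q) = 0 := by
      by_contra h
      rw [if_neg h] at hne
      exact hne rfl
    have h1 : (∑ i, (pw k (x i) - pw k (y i))) j = 0 := by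
      apply int_eq_zero (hz j)
      rw [Finset.sum_apply]
      have h2 : ∀ i ∈ (univ : Finset (Fin (tri k))), |(pw k (x i) - pw k (y i)) j| ≤ (M : ℤ) ^ k := by
        intro i _
        have hxi := mem_Icc.mp (hx i)
        have hyi := mem_Icc.mp (hy i)
        have hb : ∀ u : ℤ, 1 ≤ u ∧ u ≤ M → 0 ≤ u ^ (j.val + 1) ∧ u ^ (j.val + 1) ≤ (M : ℤ) ^ k := by
          intro u hu
          refine ⟨by have := hu.1; positivity, ?_⟩
          calc u ^ (j.val + 1) ≤ (M : ℤ) ^ (j.val + 1) :=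
                pow_le_pow_left₀ (by linarith [hu.1]) hu.2 _
            _ ≤ (M : ℤ) ^ k := pow_le_pow_right₀ hM1 j.2
        have b1 := hb _ hxi
        have b2 := hb _ hyi
        simp only [Pi.sub_apply, pw]
        rw [abs_le]
        constructor <;> linarith
      calc |∑ i, (pw k (x i) - pw k (y i)) j| ≤ ∑ i, |(pw k (x i) - pw k (y i)) j| :=
            abs_sum_le_sum_abs _ _
        _ ≤ (univ : Finset (Fin (tri k))).card • ((M : ℤ) ^ k) := sum_le_card_nsmul _ _ _ h2
        _ = ((tri k * M ^ k : ℕ) : ℤ) := by simp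
        _ < Q := by exact_mod_cast hQ
    have h3 : ∑ i, (eval (x i : ℤ_[p]) ((X : ℤ_[p][X]) ^ (j.val + 1))
        - eval (y i : ℤ_[p]) ((X : ℤ_[p][X]) ^ (j.val + 1))) =
        (((∑ i, (pw k (x i) - pw k (y i))) j : ℤ) : ℤ_[p]) := by
      rw [Finset.sum_apply]
      push_cast
      apply sum_congr rfl; intro i _
      simp [pw]
    rw [h3, h1]
    simp
  have hmain := hdec _ _ (wt k Q) (Icc 1 (M : ℤ)) (fx k Q) hgood wt_nonneg horth
  refine hmain.trans (mul_le_mul_of_nonneg_left ?_ hD)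
  apply pow_le_pow_left₀ (q_nonneg wt_nonneg _ _)
  have h1 : ∀ c ∈ range (p ^ n), nm (tri k) (wt k Q) (fx k Q) (cls p n (c : ℤ) (Icc 1 (M : ℤ))) ≤
      ∑ x ∈ cls p n (c : ℤ) (Icc 1 (M : ℤ)), (1 : ℝ) := by
    intro c _
    have hcard : (cls p n (c : ℤ) (Icc 1 (M : ℤ))).card ≤ 1 := by
      rw [card_le_one]
      intro x hx y hy
      rw [mem_cls, mem_Icc] at hx hy
      have h2 := dvd_sub hx.2 hy.2
      have h3 : x - (c : ℤ) - (y - c) = x - y := by ring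
      rw [h3] at h2
      have hM' : (M : ℤ) ≤ (p : ℤ) ^ n := by exact_mod_cast hn
      have := Int.eq_zero_of_abs_lt_dvd h2 (by rw [abs_lt]; constructor <;> omega)
      omega
    rcases Nat.le_one_iff_eq_zero_or_eq_one.mp hcard with h0 | h0
    · rw [card_eq_zero] at h0
      rw [h0, nm_empty htk]; simp
    · obtain ⟨x, hx⟩ := card_eq_one.mp h0
      rw [hx, sum_singleton]
      apply nm_eq_of_pow htk wt_nonneg _ _ zero_le_one
      unfold mom F
      simp only [sum_singleton, fx, ch_norm, one_pow, mul_one]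
      rw [wt_sum]
  refine (sum_le_sum h1).trans ?_
  rw [sum_cls (p_pos (p := p)) n (Icc 1 (M : ℤ)) (fun _ => (1 : ℝ))]
  simp

end chars

theorem vmvt (k : ℕ) (hk : 1 ≤ k) (ε : ℝ) (hε : 0 < ε) : ∃ C : ℝ, 1 ≤ C ∧
    ∀ (M : ℕ), 1 ≤ M → ∀ (Q : ℕ) [NeZero Q], tri k * M ^ k < Q →
    mom (tri k) (wt k Q) (fx k Q) (Icc 1 (M : ℤ)) ≤ C * (M : ℝ) ^ ((tri k : ℝ) + ε) := by
  obtain ⟨P₀, hP⟩ := main_dec k hk ε hε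
  obtain ⟨p, hp, hprime⟩ := Nat.exists_infinite_primes P₀
  haveI : Fact p.Prime := ⟨hprime⟩
  obtain ⟨C, hC1, hC⟩ := hP p hp
  have hp0 := rp_pos (p := p)
  have hpe : 1 ≤ (p : ℝ) ^ ε := Real.one_le_rpow rp_one hε.le
  refine ⟨C * (p : ℝ) ^ ε, by nlinarith, ?_⟩
  intro M hM Q _ hQ
  set n := Nat.log p M + 1 with hn
  have h1 : M ≤ p ^ n := (Nat.lt_pow_succ_log_self hprime.one_lt M).le
  have h2 : p ^ n ≤ p * M := by
    rw [hn, pow_succ']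
    exact Nat.mul_le_mul_left _ (Nat.pow_log_le_self _ (by omega))
  have hM0 : (0 : ℝ) < M := by exact_mod_cast hM
  refine (vmvt_aux p hk M n hM h1 hQ (by positivity) (hC n)).trans ?_
  have h3 : (p : ℝ) ^ (ε * n) ≤ (p : ℝ) ^ ε * (M : ℝ) ^ ε := by
    rw [mul_comm ε, Real.rpow_mul hp0.le, Real.rpow_natCast, ← Real.mul_rpow hp0.le hM0.le]
    apply Real.rpow_le_rpow (by positivity) _ hε.le
    exact_mod_cast h2
  rw [Real.rpow_add hM0, Real.rpow_natCast]
  calc C * (p : ℝ) ^ (ε * n) * (M : ℝ) ^ tri k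
      ≤ C * ((p : ℝ) ^ ε * (M : ℝ) ^ ε) * (M : ℝ) ^ tri k := by gcongr
    _ = _ := by ring

end VMV

namespace VMV
open Polynomial

section slice

/-- The tangent direction of the moment curve. -/
def dz (k : ℕ) (z : ℤ) : Fin k → ℤ := fun j => ((j.val : ℤ) + 1) * z ^ j.val

/-- The auxiliary vector. -/
def tv (k : ℕ) (t : ℤ × ℤ × ℤ) : Fin k → ℤ := (t.2.1 - t.2.2) • dz k t.1

/-- The auxiliary box. -/
noncomputable def TT (N H : ℕ) : Finset (ℤ × ℤ × ℤ) := Icc 1 (N : ℤ) ×ˢ Icc 1 (H : ℤ) ×ˢ Icc 1 (H : ℤ)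

/-- The auxiliary nonnegative function. -/
noncomputable def gt (k Q N H : ℕ) [NeZero Q] (α : Fin k → ZMod Q) : ℝ :=
  ∑ z ∈ Icc 1 (N : ℤ), ‖∑ m ∈ Icc 1 (H : ℤ), ch (m • dz k z) α‖ ^ 2

lemma gt_nonneg (k Q N H : ℕ) [NeZero Q] (α : Fin k → ZMod Q) : 0 ≤ gt k Q N H α := by
  unfold gt; positivity

lemma gt_eq (k Q N H : ℕ) [NeZero Q] (α : Fin k → ZMod Q) :
    (gt k Q N H α : ℂ) = ∑ t ∈ TT N H, ch (tv k t) α := by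
  unfold gt TT
  rw [sum_product, Complex.ofReal_sum]
  apply sum_congr rfl; intro z _
  rw [sum_product, Complex.ofReal_pow, ← Complex.mul_conj', map_sum, sum_mul_sum]
  apply sum_congr rfl; intro m _
  apply sum_congr rfl; intro m' _
  rw [ch_conj, ← ch_add]
  congr 1
  funext j
  simp only [tv, Pi.add_apply, Pi.neg_apply, Pi.smul_apply, smul_eq_mul]
  ring

lemma gt_pow (k Q N H : ℕ) [NeZero Q] :
    ∑ α, wt k Q α * gt k Q N H α ^ k =
      (((Fintype.piFinset fun _ : Fin k => TT N H).filter fun t =>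
        ∀ j, (((∑ i, tv k (t i)) j : ℤ) : ZMod Q) = 0).card : ℝ) := by
  apply wt_count
  intro α
  rw [Complex.ofReal_pow, gt_eq]
  have h2 := prod_univ_sum (fun _ : Fin k => TT N H) (fun _ t => ch (tv k t) α)
  simp only [prod_const, card_univ, Fintype.card_fin] at h2
  rw [h2]
  apply sum_congr rfl; intro t _
  rw [ch_sum]

lemma block_zero {k : ℕ} (c z : Fin k → ℤ) (h : ∀ j < k, ∑ i, c i * z i ^ j = 0) (i₀ : Fin k) :
    ∑ i ∈ univ.filter (fun i => z i = z i₀), c i = 0 := by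
  have hP : ∀ P : ℤ[X], P.natDegree < k → ∑ i, c i * P.eval (z i) = 0 := by
    intro P hP
    simp only [eval_eq_sum_range, mul_sum]
    rw [sum_comm]
    apply sum_eq_zero
    intro j hj
    have := h j (by rw [mem_range] at hj; omega)
    calc ∑ i, c i * (P.coeff j * z i ^ j) = P.coeff j * ∑ i, c i * z i ^ j := by
          rw [mul_sum]; apply sum_congr rfl; intro i _; ring
      _ = 0 := by rw [this, mul_zero]
  set V := (univ.image z).erase (z i₀) with hV
  have hdeg : (∏ v ∈ V, (X - C v)).natDegree < k := by
    rw [natDegree_prod_of_monic _ _ (fun v _ => monic_X_sub_C v)]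
    simp only [natDegree_X_sub_C, sum_const, smul_eq_mul, mul_one]
    have h1 : V.card < (univ.image z).card :=
      card_erase_lt_of_mem (mem_image_of_mem z (mem_univ i₀))
    have h2 : (univ.image z).card ≤ k := by
      simpa using (card_image_le (s := (univ : Finset (Fin k))) (f := z))
    omega
  have h3 := hP _ hdeg
  have h4 : ∀ i, c i * (∏ v ∈ V, (X - C v)).eval (z i) =
      if z i = z i₀ then c i * (∏ v ∈ V, (X - C v)).eval (z i₀) else 0 := by
    intro i
    split_ifs with hi
    · rw [hi]
    · rw [eval_prod, prod_eq_zero (i := z i)]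
      · simp
      · rw [hV, mem_erase]; exact ⟨hi, mem_image_of_mem z (mem_univ i)⟩
      · simp
  rw [sum_congr rfl (fun i _ => h4 i), ← sum_filter, ← sum_mul] at h3
  rcases mul_eq_zero.mp h3 with h5 | h5
  · exact h5
  · exfalso
    rw [eval_prod, prod_eq_zero_iff] at h5
    obtain ⟨v, hv, h6⟩ := h5
    simp only [eval_sub, eval_X, eval_C] at h6
    rw [hV, mem_erase] at hv
    exact hv.1 (by omega)

lemma gt_count (k Q N H : ℕ) (hk : 1 ≤ k) (hN : 1 ≤ N) (hNH : N ≤ H)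
    (hQ : k * (H * (k * N ^ k)) < Q) :
    ((Fintype.piFinset fun _ : Fin k => TT N H).filter fun t =>
        ∀ j, (((∑ i, tv k (t i)) j : ℤ) : ZMod Q) = 0).card ≤ k ^ k * (H ^ k * H ^ k) := by
  haveI : NeZero Q := ⟨by omega⟩
  haveI : Nonempty (Fin k) := ⟨⟨0, hk⟩⟩
  set A := (Fintype.piFinset fun _ : Fin k => TT N H).filter fun t =>
        ∀ j, (((∑ i, tv k (t i)) j : ℤ) : ZMod Q) = 0 with hA
  have hmem : ∀ t ∈ A, ∀ i, (1 ≤ (t i).1 ∧ (t i).1 ≤ N) ∧ (1 ≤ (t i).2.1 ∧ (t i).2.1 ≤ H) ∧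
      (1 ≤ (t i).2.2 ∧ (t i).2.2 ≤ H) := by
    intro t ht i
    rw [hA, mem_filter, Fintype.mem_piFinset] at ht
    have := ht.1 i
    simpa [TT, mem_product, mem_Icc] using this
  have hzero : ∀ t ∈ A, ∀ j < k, ∑ i, ((t i).2.1 - (t i).2.2) * (t i).1 ^ j = 0 := by
    intro t ht j hj
    have hm := hmem t ht
    rw [hA, mem_filter] at ht
    have h0 := ht.2 ⟨j, hj⟩
    have h1 : (∑ i, tv k (t i)) ⟨j, hj⟩ = 0 := by
      apply int_eq_zero h0
      rw [Finset.sum_apply]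
      have h2 : ∀ i ∈ (univ : Finset (Fin k)), |tv k (t i) ⟨j, hj⟩| ≤ (H : ℤ) * (k * N ^ k) := by
        intro i _
        obtain ⟨a, b, c⟩ := hm i
        simp only [tv, dz, Pi.smul_apply, smul_eq_mul]
        rw [abs_mul]
        have e1 : |(t i).2.1 - (t i).2.2| ≤ (H : ℤ) := by rw [abs_le]; constructor <;> omega
        have e2 : |((j : ℤ) + 1) * (t i).1 ^ j| ≤ (k * N ^ k : ℤ) := by
          have e3 : 0 ≤ (t i).1 ^ j := pow_nonneg (by omega) _
          rw [abs_of_nonneg (by positivity)]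
          have e4 : (t i).1 ^ j ≤ (N : ℤ) ^ k :=
            (pow_le_pow_left₀ (by omega) a.2 j).trans
              (pow_le_pow_right₀ (by exact_mod_cast hN) hj.le)
          have e5 : (j : ℤ) + 1 ≤ k := by exact_mod_cast hj
          exact mul_le_mul e5 e4 e3 (by positivity)
        exact mul_le_mul e1 e2 (abs_nonneg _) (by positivity)
      calc |∑ i, tv k (t i) ⟨j, hj⟩| ≤ ∑ i, |tv k (t i) ⟨j, hj⟩| := abs_sum_le_sum_abs _ _
        _ ≤ (univ : Finset (Fin k)).card • ((H : ℤ) * (k * N ^ k)) := sum_le_card_nsmul _ _ _ h2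
        _ = ((k * (H * (k * N ^ k)) : ℕ) : ℤ) := by simp
        _ < Q := by exact_mod_cast hQ
    rw [Finset.sum_apply] at h1
    have h3 : ∑ i, tv k (t i) ⟨j, hj⟩ =
        ((j : ℤ) + 1) * ∑ i, ((t i).2.1 - (t i).2.2) * (t i).1 ^ j := by
      rw [mul_sum]; apply sum_congr rfl; intro i _
      simp only [tv, dz, Pi.smul_apply, smul_eq_mul]; ring
    rw [h3] at h1
    rcases mul_eq_zero.mp h1 with h | h
    · omega
    · exact h
  let σ : (Fin k → ℤ × ℤ × ℤ) → Fin k → Fin k :=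
    fun t i => Function.invFun (fun i => (t i).1) (t i).1
  have hσz : ∀ (t : Fin k → ℤ × ℤ × ℤ) (i : Fin k), (t (σ t i)).1 = (t i).1 := fun t i =>
    Function.invFun_eq (f := fun i => (t i).1) ⟨i, rfl⟩
  have hσc : ∀ (t : Fin k → ℤ × ℤ × ℤ) (i i' : Fin k), (t i).1 = (t i').1 → σ t i = σ t i' := by
    intro t i i' h; simp only [σ, h]
  let φ : (Fin k → ℤ × ℤ × ℤ) → (Fin k → Fin k) × (Fin k → ℤ) × (Fin k → ℤ) :=
    fun t => (σ t, fun i => (t i).2.2, fun i => if σ t i = i then (t i).1 else (t i).2.1)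
  have hmaps : ∀ t ∈ A, φ t ∈ (univ : Finset (Fin k → Fin k)) ×ˢ
      (Fintype.piFinset fun _ : Fin k => Icc 1 (H : ℤ)) ×ˢ
      (Fintype.piFinset fun _ : Fin k => Icc 1 (H : ℤ)) := by
    intro t ht
    have hm := hmem t ht
    simp only [φ, mem_product, mem_univ, true_and, Fintype.mem_piFinset, mem_Icc]
    refine ⟨fun i => (hm i).2.2, fun i => ?_⟩
    obtain ⟨a, b, c⟩ := hm i
    split_ifs
    · constructor <;> omega
    · exact b
  have hinj : Set.InjOn φ A := by
    intro t ht t' ht' heq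
    simp only [φ, Prod.mk.injEq] at heq
    obtain ⟨hs, hm', hu⟩ := heq
    have hu' := fun i => congrFun hu i
    have hm'' := fun i => congrFun hm' i
    simp only [← hs] at hu' hm''
    have hz : ∀ i, (t i).1 = (t' i).1 := by
      intro i
      have e := hu' (σ t i)
      have e2 : σ t (σ t i) = σ t i := hσc t _ _ (hσz t i)
      rw [if_pos e2, if_pos e2] at e
      have e3 := hσz t' i
      rw [← hs] at e3
      rw [← hσz t i, e, e3]
    have hmm : ∀ i, σ t i ≠ i → (t i).2.1 = (t' i).2.1 := by
      intro i hi
      have e := hu' i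
      rwa [if_neg hi, if_neg hi] at e
    have hm1 : ∀ i, (t i).2.1 = (t' i).2.1 := by
      intro i
      by_cases hi : σ t i = i
      · have b1 := block_zero (fun i => (t i).2.1 - (t i).2.2) (fun i => (t i).1)
          (hzero t ht) i
        have b2 := block_zero (fun i => (t' i).2.1 - (t' i).2.2) (fun i => (t' i).1)
          (hzero t' ht') i
        simp only [← hz, ← hm''] at b2
        have b3 := sub_eq_zero.mpr (b1.trans b2.symm)
        rw [← sum_sub_distrib, sum_eq_single i] at b3
        · linarith
        · intro j hj hji
          rw [mem_filter] at hj
          have : σ t j ≠ j := by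
            rw [hσc t j i hj.2, hi]; exact hji.symm
          rw [hmm j this]; ring
        · intro h; exact absurd (by simp) h
      · exact hmm i hi
    funext i
    exact Prod.ext (hz i) (Prod.ext (hm1 i) (hm'' i))
  have := card_le_card_of_injOn φ hmaps hinj
  refine this.trans ?_
  simp [card_product, Fintype.card_piFinset]

open Classical in
/-- The slice solutions. -/
noncomputable def slc (s k N : ℕ) : Finset ((Fin s → ℤ) × (Fin s → ℤ)) :=
  ((Fintype.piFinset fun _ : Fin s => Icc 1 (N : ℤ)) ×ˢ
    (Fintype.piFinset fun _ : Fin s => Icc 1 (N : ℤ))).filter fun q : (Fin s → ℤ) × (Fin s → ℤ) =>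
      ∀ j ∈ Finset.Icc 1 k, j ≠ 1 → ∑ i, (q.1 i) ^ j = ∑ i, (q.2 i) ^ j

lemma shift_id {s k : ℕ} (x y : Fin s → ℤ)
    (h : ∀ j ∈ Finset.Icc 1 k, j ≠ 1 → ∑ i, (x i) ^ j = ∑ i, (y i) ^ j) (z : ℤ) (j : Fin k) :
    ∑ i, ((x i + z) ^ (j.val + 1) - (y i + z) ^ (j.val + 1)) =
      ((j.val : ℤ) + 1) * z ^ j.val * ∑ i, (x i - y i) := by
  simp only [add_pow]
  have e : ∀ i, (∑ m ∈ range (j.val + 1 + 1), x i ^ m * z ^ (j.val + 1 - m) *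
      ((j.val + 1).choose m : ℤ) - ∑ m ∈ range (j.val + 1 + 1), y i ^ m * z ^ (j.val + 1 - m) *
      ((j.val + 1).choose m : ℤ)) = ∑ m ∈ range (j.val + 1 + 1),
      (x i ^ m - y i ^ m) * (z ^ (j.val + 1 - m) * ((j.val + 1).choose m : ℤ)) := by
    intro i; rw [← sum_sub_distrib]; apply sum_congr rfl; intro m _; ring
  simp only [e]
  rw [sum_comm, sum_eq_single 1]
  · rw [← sum_mul]; simp; ring
  · intro m hm hm1
    rw [← sum_mul]
    rcases Nat.eq_zero_or_pos m with h0 | h0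
    · subst h0; simp
    · have hj := j.2
      rw [mem_range] at hm
      rw [sum_sub_distrib, h m (mem_Icc.mpr ⟨h0, by omega⟩) hm1]; simp
  · intro hh; exact absurd (mem_range.mpr (by omega)) hh

lemma slc_lower (s k N Q : ℕ) [NeZero Q] :
    (((slc s k N).card * (N * (s * N)) : ℕ) : ℝ) ≤
      ∑ α, wt k Q α * (‖F (fx k Q) (Icc 1 ((2 * N : ℕ) : ℤ)) α‖ ^ (2 * s) *
        gt k Q N (3 * (s * N)) α) := by
  set P := Fintype.piFinset fun _ : Fin s => Icc 1 ((2 * N : ℕ) : ℤ) with hP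
  rw [wt_count ((P ×ˢ P) ×ˢ TT N (3 * (s * N)))
    (fun q => ∑ i, (pw k (q.1.1 i) - pw k (q.1.2 i)) + tv k q.2)]
  swap
  · intro α
    rw [Complex.ofReal_mul, norm_pow_expand, gt_eq, sum_product (P ×ˢ P), sum_product P, sum_mul]
    apply sum_congr rfl; intro x _
    rw [sum_mul]
    apply sum_congr rfl; intro y _
    rw [mul_sum]
    apply sum_congr rfl; intro t _
    rw [fx_prod, ← ch_add]
  rw [Nat.cast_le]
  have hc : (slc s k N).card * (N * (s * N)) =
      (slc s k N ×ˢ (Icc 1 (N : ℤ) ×ˢ Icc 1 ((s * N : ℕ) : ℤ))).card := by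
    rw [card_product, card_product, Int.card_Icc, Int.card_Icc, add_sub_cancel_right,
      add_sub_cancel_right, Int.toNat_natCast, Int.toNat_natCast]
  rw [hc]
  let φ : ((Fin s → ℤ) × (Fin s → ℤ)) × (ℤ × ℤ) →
      ((Fin s → ℤ) × (Fin s → ℤ)) × (ℤ × ℤ × ℤ) := fun q =>
    ((fun i => q.1.1 i + q.2.1, fun i => q.1.2 i + q.2.1),
      (q.2.1, ((s * N : ℕ) : ℤ) + q.2.2, ((s * N : ℕ) : ℤ) + q.2.2 + ∑ i, (q.1.1 i - q.1.2 i)))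
  apply card_le_card_of_injOn φ
  · rintro ⟨⟨x, y⟩, z, m⟩ hq
    simp only [coe_product, Set.mem_prod, mem_coe, slc, mem_filter, mem_product,
      Fintype.mem_piFinset, mem_Icc] at hq
    obtain ⟨⟨⟨hx, hy⟩, hxy⟩, hz, hm⟩ := hq
    have hh : |∑ i, (x i - y i)| ≤ ((s * N : ℕ) : ℤ) := by
      calc |∑ i, (x i - y i)| ≤ ∑ i, |x i - y i| := abs_sum_le_sum_abs _ _
        _ ≤ (univ : Finset (Fin s)).card • (N : ℤ) := by
            apply sum_le_card_nsmul
            intro i _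
            have := hx i
            have := hy i
            rw [abs_le]; constructor <;> omega
        _ = _ := by simp
    rw [abs_le] at hh
    have hs : ((3 * (s * N) : ℕ) : ℤ) = 3 * ((s * N : ℕ) : ℤ) := by push_cast; ring
    have h2 : ((2 * N : ℕ) : ℤ) = 2 * (N : ℤ) := by push_cast; ring
    simp only [φ, mem_coe, mem_filter, mem_product, TT, hP, Fintype.mem_piFinset, mem_Icc, hs, h2]
    refine ⟨⟨⟨fun i => ?_, fun i => ?_⟩, hz, ?_, ?_⟩, ?_⟩
    · have := hx i
      constructor <;> omega
    · have := hy i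
      constructor <;> omega
    · constructor <;> omega
    · constructor <;> omega
    · intro j
      have e := shift_id x y (fun j hj => hxy j (mem_Icc.mp hj)) z j
      have e2 : (∑ i, (pw k (x i + z) - pw k (y i + z)) + tv k (z, ((s * N : ℕ) : ℤ) + m,
          ((s * N : ℕ) : ℤ) + m + ∑ i, (x i - y i))) j = 0 := by
        simp only [Pi.add_apply, Finset.sum_apply, Pi.sub_apply, pw, tv, dz, Pi.smul_apply,
          smul_eq_mul]
        rw [e]; ring
      rw [e2]; simp
  · rintro ⟨⟨x, y⟩, z, m⟩ _ ⟨⟨x', y'⟩, z', m'⟩ _ h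
    simp only [φ, Prod.mk.injEq] at h
    obtain ⟨⟨h1, h2⟩, h3, h4, _⟩ := h
    subst h3
    have hx : x = x' := by funext i; have := congrFun h1 i; simpa using this
    have hy : y = y' := by funext i; have := congrFun h2 i; simpa using this
    have hm : m = m' := by omega
    subst hx; subst hy; subst hm; rfl

lemma holder3 {Ω : Type*} [Fintype Ω] (w f b : Ω → ℝ) (hw : ∀ ω, 0 ≤ w ω) (hw1 : ∑ ω, w ω = 1)
    (hf : ∀ ω, 0 ≤ f ω) (hb : ∀ ω, 0 ≤ b ω) (s t k : ℕ) (ht : 1 ≤ t) (hk : 1 ≤ k)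
    (hst : (s : ℝ) / t + 1 / k ≤ 1) {U V : ℝ} (hU : 0 < U) (hV : 0 < V)
    (h1 : ∑ ω, w ω * f ω ^ (2 * t) ≤ U) (h2 : ∑ ω, w ω * b ω ^ k ≤ V) :
    ∑ ω, w ω * (f ω ^ (2 * s) * b ω) ≤ U ^ ((s : ℝ) / t) * V ^ (1 / (k : ℝ)) := by
  have ht0 : (0 : ℝ) < t := by exact_mod_cast ht
  have hk0 : (0 : ℝ) < k := by exact_mod_cast hk
  set θ : ℝ := (s : ℝ) / t with hθ
  have hθ0 : 0 ≤ θ := by positivity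
  have hpt : ∀ ω, f ω ^ (2 * s) * b ω ≤ U ^ θ * V ^ (1 / (k : ℝ)) *
      (θ * (f ω ^ (2 * t) / U) + 1 / k * (b ω ^ k / V) + (1 - θ - 1 / k)) := by
    intro ω
    have g := Real.geom_mean_le_arith_mean3_weighted (w₁ := θ) (w₂ := 1 / (k : ℝ))
      (w₃ := 1 - θ - 1 / k) (p₁ := f ω ^ (2 * t) / U) (p₂ := b ω ^ k / V) (p₃ := 1) hθ0
      (by positivity) (by linarith) (div_nonneg (pow_nonneg (hf ω) _) hU.le)
      (div_nonneg (pow_nonneg (hb ω) _) hV.le) zero_le_one (by ring)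
    rw [Real.one_rpow, mul_one, mul_one, Real.div_rpow (pow_nonneg (hf ω) _) hU.le,
      Real.div_rpow (pow_nonneg (hb ω) _) hV.le] at g
    have e1 : (f ω ^ (2 * t)) ^ θ = f ω ^ (2 * s) := by
      rw [← Real.rpow_natCast, ← Real.rpow_mul (hf ω), ← Real.rpow_natCast]
      congr 1
      rw [hθ]; push_cast; field_simp
    have e2 : (b ω ^ k) ^ (1 / (k : ℝ)) = b ω := by
      rw [one_div]; exact Real.pow_rpow_inv_natCast (hb ω) (by omega)
    rw [e1, e2] at g
    have hUθ : 0 < U ^ θ := Real.rpow_pos_of_pos hU _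
    have hVk : 0 < V ^ (1 / (k : ℝ)) := Real.rpow_pos_of_pos hV _
    calc f ω ^ (2 * s) * b ω = U ^ θ * V ^ (1 / (k : ℝ)) *
          (f ω ^ (2 * s) / U ^ θ * (b ω / V ^ (1 / (k : ℝ)))) := by field_simp
      _ ≤ _ := mul_le_mul_of_nonneg_left g (by positivity)
  calc ∑ ω, w ω * (f ω ^ (2 * s) * b ω) ≤ ∑ ω, w ω * (U ^ θ * V ^ (1 / (k : ℝ)) *
      (θ * (f ω ^ (2 * t) / U) + 1 / k * (b ω ^ k / V) + (1 - θ - 1 / k))) :=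
        sum_le_sum fun ω _ => mul_le_mul_of_nonneg_left (hpt ω) (hw ω)
    _ = U ^ θ * V ^ (1 / (k : ℝ)) * (θ / U * ∑ ω, w ω * f ω ^ (2 * t) +
        1 / k / V * ∑ ω, w ω * b ω ^ k + (1 - θ - 1 / k) * ∑ ω, w ω) := by
        rw [mul_sum, mul_sum, mul_sum, ← sum_add_distrib, ← sum_add_distrib, mul_sum]
        apply sum_congr rfl; intro ω _; ring
    _ ≤ U ^ θ * V ^ (1 / (k : ℝ)) * (θ / U * U + 1 / k / V * V + (1 - θ - 1 / k) * 1) := by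
        rw [hw1]; gcongr
    _ = U ^ θ * V ^ (1 / (k : ℝ)) := by
        have : θ / U * U + 1 / k / V * V + (1 - θ - 1 / k) * 1 = 1 := by field_simp; ring
        rw [this, mul_one]

theorem slc_bound (s k : ℕ) (hk : 3 ≤ k) (hs1 : 1 ≤ s)
    (hs2 : (s : ℝ) ≤ ((k : ℝ) ^ 2 - 1) / 2) (ε : ℝ) (hε : 0 < ε) :
    ∃ C : ℝ, 0 ≤ C ∧ ∀ N : ℕ, 1 ≤ N → ((slc s k N).card : ℝ) ≤ C * (N : ℝ) ^ ((s : ℝ) + ε) := by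
  have hk1 : 1 ≤ k := by omega
  have hk0 : (0 : ℝ) < k := by exact_mod_cast hk1
  have hs0 : (0 : ℝ) < s := by exact_mod_cast hs1
  have htr := tri_pos hk1
  have ht0 : (0 : ℝ) < tri k := by exact_mod_cast htr
  have hst : (s : ℝ) / tri k + 1 / k ≤ 1 := by
    rw [tri_real, div_add_div _ _ (by positivity) (by positivity), div_le_one (by positivity)]
    nlinarith
  obtain ⟨C, hC1, hC⟩ := vmvt k hk1 (ε * tri k / s) (by positivity)
  refine ⟨C ^ ((s : ℝ) / tri k) * 2 ^ ((s : ℝ) + ε) * (k * 9 * s), by positivity, ?_⟩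
  intro N hN
  have hN0 : (0 : ℝ) < N := by exact_mod_cast hN
  set H := 3 * (s * N) with hH
  have hNH : N ≤ H := by nlinarith [Nat.mul_le_mul hs1 (le_refl N)]
  have hH0 : (0 : ℝ) < H := by exact_mod_cast (by omega : 0 < H)
  set Q := tri k * (2 * N) ^ k + k * (H * (k * N ^ k)) + 1 with hQ
  haveI : NeZero Q := ⟨by omega⟩
  have hlow := slc_lower s k N Q
  have hmom := hC (2 * N) (by omega) Q (by omega)
  have hg : ∑ α, wt k Q α * gt k Q N H α ^ k ≤ ((k : ℝ) * H ^ 2) ^ k := by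
    rw [gt_pow]
    have := gt_count k Q N H hk1 hN hNH (by omega)
    calc _ ≤ ((k ^ k * (H ^ k * H ^ k) : ℕ) : ℝ) := by exact_mod_cast this
      _ = _ := by push_cast; ring
  set U : ℝ := C * ((2 * N : ℕ) : ℝ) ^ ((tri k : ℝ) + ε * tri k / s) with hU
  have h2N : (0 : ℝ) < ((2 * N : ℕ) : ℝ) := by push_cast; positivity
  have hU0 : 0 < U := by have := Real.rpow_pos_of_pos h2N ((tri k : ℝ) + ε * tri k / s); positivity
  have hold := holder3 (wt k Q) (fun α => ‖F (fx k Q) (Icc 1 ((2 * N : ℕ) : ℤ)) α‖)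
    (gt k Q N H) wt_nonneg wt_sum (fun _ => norm_nonneg _) (gt_nonneg k Q N H) s (tri k) k
    htr hk1 hst hU0 (by positivity) hmom hg
  have e1 : U ^ ((s : ℝ) / tri k) =
      C ^ ((s : ℝ) / tri k) * (2 ^ ((s : ℝ) + ε) * (N : ℝ) ^ ((s : ℝ) + ε)) := by
    rw [hU, Real.mul_rpow (by linarith) (by positivity), ← Real.rpow_mul h2N.le]
    congr 1
    rw [← Real.mul_rpow (by norm_num) hN0.le]
    push_cast
    congr 1
    field_simp
  have e2 : (((k : ℝ) * H ^ 2) ^ k) ^ (1 / (k : ℝ)) = k * H ^ 2 := by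
    rw [one_div]; exact Real.pow_rpow_inv_natCast (by positivity) (by omega)
  rw [e1, e2] at hold
  have hfin := hlow.trans hold
  rw [hH] at hfin
  push_cast at hfin
  have hpos : (0 : ℝ) < N * (s * N) := by positivity
  refine le_of_mul_le_mul_right (hfin.trans (le_of_eq ?_)) hpos
  ring

end slice

end VMV

theorem diagonal_bound_missing_linear_slice
    (s k : ℕ) (hk : 3 ≤ k) (hs1 : 1 ≤ s) (hs2 : (s : ℝ) ≤ ((k : ℝ) ^ 2 - 1) / 2)
    (ε : ℝ) (hε : 0 < ε) :
    ∃ C X₀ : ℝ, ∀ X : ℝ, X₀ ≤ X →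
      (vinogradovSliceCount s k 1 X : ℝ) ≤ C * X ^ ((s : ℝ) + ε) := by
  obtain ⟨C, hC0, hC⟩ := VMV.slc_bound s k hk hs1 hs2 ε hε
  refine ⟨C, 1, fun X hX => ?_⟩
  have hX0 : 0 ≤ X := by linarith
  have hN : 1 ≤ ⌊X⌋₊ := by rw [Nat.le_floor_iff hX0]; simpa using hX
  have hle : (⌊X⌋₊ : ℝ) ≤ X := Nat.floor_le hX0
  have hcount : vinogradovSliceCount s k 1 X ≤ (VMV.slc s k ⌊X⌋₊).card := by
    unfold vinogradovSliceCount
    rw [← Set.ncard_coe_finset]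
    apply Set.ncard_le_ncard _ (Finset.finite_toSet _)
    rintro ⟨x, y⟩ ⟨hx, hy, hxy⟩
    have hb : ∀ u : ℤ, 1 ≤ u ∧ (u : ℝ) ≤ X → 1 ≤ u ∧ u ≤ (⌊X⌋₊ : ℤ) := by
      rintro u ⟨h1, h2⟩
      refine ⟨h1, ?_⟩
      rw [Int.natCast_floor_eq_floor hX0]
      exact Int.le_floor.mpr h2
    simp only [VMV.slc, Finset.coe_filter, Finset.mem_product, Fintype.mem_piFinset,
      Finset.mem_Icc, Set.mem_setOf_eq]
    refine ⟨⟨fun i => hb _ (hx i), fun i => hb _ (hy i)⟩, ?_⟩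
    simpa only [Finset.mem_Icc] using hxy
  calc (vinogradovSliceCount s k 1 X : ℝ) ≤ ((VMV.slc s k ⌊X⌋₊).card : ℝ) := by
        exact_mod_cast hcount
    _ ≤ C * (⌊X⌋₊ : ℝ) ^ ((s : ℝ) + ε) := hC _ hN
    _ ≤ C * X ^ ((s : ℝ) + ε) := by gcongr
end

section
/- Let r and s be natural numbers and let t ≥ 2s. Then whenever f = (f_1,…,f_t) is a well-conditioned t-tuple of polynomials with integer coefficients, one has A_{s,r}(X;f) ≪ X^{2rs}, i.e. there is a constant C, depending at most on s, r, t and the coefficients of f, such that A_{s,r}(X;f) ≤ C·X^{2rs} for all sufficiently large real X. -/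
open Finset

/-- A `t`-tuple `f = (f_1, …, f_t)` of nonzero integer polynomials is *well-conditioned*
if their degrees satisfy `0 ≤ k_t < k_{t-1} < ⋯ < k_1` and there is no positive integer
`z` with `f_1(z) = ⋯ = f_t(z) = 0`. -/
def WellConditioned {t : ℕ} (f : Fin t → Polynomial ℤ) : Prop :=
  (∀ j, f j ≠ 0) ∧
  (∀ i j : Fin t, i < j → (f j).natDegree < (f i).natDegree) ∧
  (∀ z : ℤ, 0 < z → ∃ j, (f j).eval z ≠ 0)

/-- `auxCount s r f X` counts integral solutions of `∑_{i=1}^{2s} h_i f_j(z_i) = 0`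
(`1 ≤ j ≤ t`) with `|h_i| ≤ X^r` and `1 ≤ z_i ≤ X`. -/
noncomputable def auxCount {t : ℕ} (s r : ℕ) (f : Fin t → Polynomial ℤ) (X : ℝ) : ℕ :=
  {p : (Fin (2 * s) → ℤ) × (Fin (2 * s) → ℤ) |
      (∀ i, |(p.1 i : ℝ)| ≤ X ^ r) ∧
      (∀ i, 1 ≤ p.2 i ∧ (p.2 i : ℝ) ≤ X) ∧
      ∀ j, ∑ i, p.1 i * (f j).eval (p.2 i) = 0}.ncard

/-- The vector `(f_1(w), …, f_t(w))`, over the rationals. -/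
noncomputable def rowVec {t : ℕ} (f : Fin t → Polynomial ℤ) (w : ℤ) : Fin t → ℚ :=
  fun j => (((f j).eval w : ℤ) : ℚ)

lemma comb_ne_zero {t : ℕ} (f : Fin t → Polynomial ℤ) (hf : WellConditioned f)
    (c : Fin t → ℚ) (hc : c ≠ 0) :
    ∑ j, Polynomial.C (c j) * (f j).map (Int.castRingHom ℚ) ≠ 0 := by
  obtain ⟨h0, hdeg, -⟩ := hf
  have hinj : Function.Injective (Int.castRingHom ℚ) := Int.cast_injective
  have hd : ∀ j, c j ≠ 0 →
      (Polynomial.C (c j) * (f j).map (Int.castRingHom ℚ)).degree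
        = ((f j).natDegree : WithBot ℕ) := by
    intro j hj
    rw [Polynomial.degree_C_mul hj, Polynomial.degree_map_eq_of_injective hinj,
      Polynomial.degree_eq_natDegree (h0 j)]
  obtain ⟨j, hj⟩ := Function.ne_iff.mp hc
  intro hz
  have hsum := Polynomial.degree_sum_eq_of_disjoint
    (fun j => Polynomial.C (c j) * (f j).map (Int.castRingHom ℚ)) Finset.univ (by
      rintro a ⟨-, ha⟩ b ⟨-, hb⟩ hab
      have ha' : c a ≠ 0 := by
        rintro h; simp [h] at ha
      have hb' : c b ≠ 0 := by
        rintro h; simp [h] at hb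
      simp only [Function.onFun, Function.comp]
      rw [hd a ha', hd b hb']
      intro h
      have h' : (f a).natDegree = (f b).natDegree := by exact_mod_cast h
      rcases lt_or_gt_of_ne hab with h1 | h1
      · have := hdeg _ _ h1; omega
      · have := hdeg _ _ h1; omega)
  rw [hz, Polynomial.degree_zero] at hsum
  have hle := Finset.le_sup (f := fun j =>
    (Polynomial.C (c j) * (f j).map (Int.castRingHom ℚ)).degree) (Finset.mem_univ j)
  rw [← hsum] at hle
  simp only [hd j hj] at hle
  simp at hle

lemma exists_root_set {t : ℕ} (f : Fin t → Polynomial ℤ) (hf : WellConditioned f)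
    {n : ℕ} (I : Finset (Fin n)) (hI : I.card < t) (z : Fin n → ℤ) :
    ∃ R : Finset ℤ, R.card ≤ Finset.univ.sup (fun j => (f j).natDegree) ∧
      ∀ w, rowVec f w ∈ Submodule.span ℚ ((fun i => rowVec f (z i)) '' (I : Set (Fin n))) →
        w ∈ R := by
  classical
  let L : (Fin t → ℚ) →ₗ[ℚ] (I → ℚ) :=
    Matrix.mulVecLin (Matrix.of fun (i : I) j => rowVec f (z i) j)
  have hL : LinearMap.ker L ≠ ⊥ := LinearMap.ker_ne_bot_of_finrank_lt (by simpa using hI)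
  obtain ⟨c, hcL, hc⟩ := (Submodule.ne_bot_iff _).mp hL
  have hP := comb_ne_zero f hf c hc
  set P := ∑ j, Polynomial.C (c j) * (f j).map (Int.castRingHom ℚ) with hPdef
  have heval : ∀ w : ℤ, P.eval (w : ℚ) = rowVec f w ⬝ᵥ c := by
    intro w
    simp [hPdef, Polynomial.eval_finsetSum, dotProduct, rowVec, mul_comm]
  refine ⟨P.roots.toFinset.preimage (fun w : ℤ => (w : ℚ)) Int.cast_injective.injOn, ?_, ?_⟩
  · rw [Finset.card_preimage]
    refine (Finset.card_filter_le _ _).trans ?_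
    refine (Multiset.toFinset_card_le _).trans ?_
    refine (Polynomial.card_roots' _).trans ?_
    refine Polynomial.natDegree_sum_le_of_forall_le _ _ ?_
    intro j _
    refine (Polynomial.natDegree_C_mul_le _ _).trans ?_
    refine (Polynomial.natDegree_map_le).trans ?_
    exact Finset.le_sup (f := fun j => (f j).natDegree) (Finset.mem_univ j)
  · intro w hw
    simp only [Finset.mem_preimage, Multiset.mem_toFinset]
    rw [Polynomial.mem_roots hP, Polynomial.IsRoot, heval]
    refine Submodule.span_induction (p := fun v _ => v ⬝ᵥ c = 0) ?_ ?_ ?_ ?_ hw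
    · rintro _ ⟨i, hi, rfl⟩
      have := congrFun (LinearMap.mem_ker.mp hcL) ⟨i, hi⟩
      simpa [L, Matrix.mulVec] using! this
    · simp
    · intro a b _ _ ha hb
      simp [add_dotProduct, ha, hb]
    · intro a b _ hb
      simp [smul_dotProduct, hb]

lemma exists_basis_set {t n : ℕ} (f : Fin t → Polynomial ℤ) (z : Fin n → ℤ) :
    ∃ I : Finset (Fin n), LinearIndepOn ℚ (fun i => rowVec f (z i)) (I : Set (Fin n)) ∧
      ∀ l, rowVec f (z l) ∈
        Submodule.span ℚ ((fun i => rowVec f (z i)) '' (I : Set (Fin n))) := by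
  classical
  obtain ⟨b, -, -, hspan, hind⟩ := exists_linearIndepOn_extension
    (K := ℚ) (v := fun i => rowVec f (z i)) (linearIndepOn_empty ℚ _)
    (Set.empty_subset (Set.univ : Set (Fin n)))
  refine ⟨b.toFinset, by simpa using hind, fun l => ?_⟩
  have := hspan ⟨l, Set.mem_univ l, rfl⟩
  simpa using this

lemma count_le {t n : ℕ} (hn : n ≤ t) (f : Fin t → Polynomial ℤ) (hf : WellConditioned f)
    (S : Finset ((Fin n → ℤ) × (Fin n → ℤ))) (M : ℤ)
    (hS : ∀ p ∈ S, (∀ i, |p.1 i| ≤ M) ∧ (∀ i, |p.2 i| ≤ M) ∧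
      ∀ j, ∑ i, p.1 i * (f j).eval (p.2 i) = 0) :
    S.card ≤ (Finset.univ.sup (fun j => (f j).natDegree) + 1) ^ n *
      (2 ^ n * (2 * M + 1).toNat ^ n) := by
  classical
  choose I hind hspan using fun z : Fin n → ℤ => exists_basis_set f z
  let T : Finset (Finset (Fin n) × (Fin n → ℤ)) :=
    Finset.univ ×ˢ Fintype.piFinset (fun _ => Finset.Icc (-M) M)
  have hT : T.card = 2 ^ n * (2 * M + 1).toNat ^ n := by
    simp only [T, Finset.card_product, Fintype.card_piFinset, Finset.card_univ,
      Fintype.card_finset, Fintype.card_fin, Finset.prod_const, Int.card_Icc]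
    congr 3
    ring
  rw [← hT]
  refine Finset.card_le_mul_card_image_of_maps_to
    (f := fun p => (I p.2, fun i => if i ∈ I p.2 then p.2 i else p.1 i)) ?_ _ ?_
  · intro p hp
    obtain ⟨h1, h2, -⟩ := hS p hp
    simp only [T, Finset.mem_product, Finset.mem_univ, true_and, Fintype.mem_piFinset,
      Finset.mem_Icc]
    intro i
    split_ifs
    · exact abs_le.mp (h2 i)
    · exact abs_le.mp (h1 i)
  · rintro ⟨J, g⟩ -
    obtain ⟨R, hRc, hR⟩ : ∃ R : Finset ℤ,
        R.card ≤ Finset.univ.sup (fun j => (f j).natDegree) ∧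
        ∀ w, J ≠ Finset.univ → rowVec f w ∈
          Submodule.span ℚ ((fun i => rowVec f (g i)) '' (J : Set (Fin n))) → w ∈ R := by
      by_cases hJ : J = Finset.univ
      · exact ⟨∅, by simp, fun w h => absurd hJ h⟩
      · have hlt : J.card < t := by
          have := (Finset.card_lt_iff_ne_univ J).mpr hJ
          simp at this
          omega
        obtain ⟨R, h1, h2⟩ := exists_root_set f hf J hlt g
        exact ⟨R, h1, fun w _ => h2 w⟩
    have hbox : (Fintype.piFinset (fun i => if i ∈ J then ({g i} : Finset ℤ) else R)).card ≤
        (Finset.univ.sup (fun j => (f j).natDegree) + 1) ^ n := by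
      rw [Fintype.card_piFinset]
      refine (Finset.prod_le_pow_card _ _
        (Finset.univ.sup (fun j => (f j).natDegree) + 1) (fun i _ => ?_)).trans (by simp)
      split_ifs
      · simp
      · omega
    refine le_trans ?_ hbox
    refine Finset.card_le_card_of_injOn (fun p => p.2) ?_ ?_
    · rintro ⟨h, z⟩ hp
      simp only [Finset.coe_filter, Set.mem_ofPred_eq, Prod.mk.injEq] at hp
      obtain ⟨hpS, hJ, hg⟩ := hp
      subst hJ
      simp only [Finset.mem_coe, Fintype.mem_piFinset]
      intro i
      have hgz : ∀ i ∈ I z, g i = z i := by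
        intro i hi
        rw [← hg]; simp [hi]
      split_ifs with hi
      · simp [hgz i hi]
      · apply hR
        · intro h; simp [h] at hi
        · have := hspan z i
          have e : (fun i => rowVec f (g i)) '' (I z : Set (Fin n))
              = (fun i => rowVec f (z i)) '' (I z : Set (Fin n)) :=
            Set.image_congr (fun i hi => by simp only [hgz i hi])
          rw [e]; exact this
    · rintro ⟨h, z⟩ hp ⟨h', z'⟩ hp' hzz
      simp only [Finset.coe_filter, Set.mem_ofPred_eq, Prod.mk.injEq] at hp hp' hzz
      subst hzz
      obtain ⟨hpS, hJ, hg⟩ := hp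
      obtain ⟨hpS', -, hg'⟩ := hp'
      have hout : ∀ i, i ∉ I z → h i = h' i := by
        intro i hi
        have := congrFun (hg.trans hg'.symm) i
        simpa [hi] using this
      have hin : ∀ i ∈ I z, ((h i - h' i : ℤ) : ℚ) = 0 := by
        refine linearIndepOn_finset_iff.mp (hind z) (fun i => ((h i - h' i : ℤ) : ℚ)) ?_
        have e : ∑ i ∈ I z, ((h i - h' i : ℤ) : ℚ) • rowVec f (z i)
            = ∑ i, ((h i - h' i : ℤ) : ℚ) • rowVec f (z i) := by
          refine Finset.sum_subset (Finset.subset_univ _) (fun i _ hi => ?_)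
          simp [hout i hi]
        rw [e]
        ext j
        have e1 := (hS _ hpS).2.2 j
        have e2 := (hS _ hpS').2.2 j
        simp only at e1 e2
        have e3 : ∑ i, (h i - h' i) * (f j).eval (z i) = 0 := by
          simp only [sub_mul, Finset.sum_sub_distrib, e1, e2, sub_zero]
        simp only [Finset.sum_apply, Pi.smul_apply, smul_eq_mul, rowVec, Pi.zero_apply]
        exact_mod_cast e3
      have : h = h' := by
        funext i
        by_cases hi : i ∈ I z
        · have := hin i hi
          have : h i - h' i = 0 := by exact_mod_cast this
          omega
        · exact hout i hi
      rw [this]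

theorem auxCount_bound_many_polynomials
    (r s t : ℕ) (hr : 1 ≤ r) (hs : 1 ≤ s) (ht : 2 * s ≤ t)
    (f : Fin t → Polynomial ℤ) (hf : WellConditioned f) :
    ∃ C X₀ : ℝ, ∀ X : ℝ, X₀ ≤ X →
      (auxCount s r f X : ℝ) ≤ C * X ^ (2 * r * s) := by
  classical
  set D := Finset.univ.sup (fun j => (f j).natDegree) + 1 with hD
  refine ⟨(D : ℝ) ^ (2 * s) * (2 ^ (2 * s) * 3 ^ (2 * s)), 1, fun X hX => ?_⟩
  have hXr : X ≤ X ^ r := le_self_pow₀ hX (by omega)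
  have hX1 : 1 ≤ X ^ r := hX.trans hXr
  set M : ℤ := ⌊X ^ r⌋ with hM
  have hM0 : 0 ≤ M := Int.floor_nonneg.mpr (by linarith)
  set A := {p : (Fin (2 * s) → ℤ) × (Fin (2 * s) → ℤ) |
      (∀ i, |(p.1 i : ℝ)| ≤ X ^ r) ∧
      (∀ i, 1 ≤ p.2 i ∧ (p.2 i : ℝ) ≤ X) ∧
      ∀ j, ∑ i, p.1 i * (f j).eval (p.2 i) = 0} with hA
  have hAb : ∀ p ∈ A, (∀ i, |p.1 i| ≤ M) ∧ (∀ i, |p.2 i| ≤ M) ∧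
      ∀ j, ∑ i, p.1 i * (f j).eval (p.2 i) = 0 := by
    rintro p ⟨h1, h2, h3⟩
    refine ⟨fun i => ?_, fun i => ?_, h3⟩
    · rw [hM, Int.le_floor]
      push_cast
      exact h1 i
    · rw [abs_of_nonneg (by linarith [(h2 i).1]), hM, Int.le_floor]
      exact (h2 i).2.trans hXr
  have hfin : A.Finite := by
    refine Set.Finite.subset (Finset.finite_toSet
      (Fintype.piFinset (fun _ : Fin (2 * s) => Finset.Icc (-M) M) ×ˢ
        Fintype.piFinset (fun _ : Fin (2 * s) => Finset.Icc (-M) M))) ?_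
    intro p hp
    obtain ⟨h1, h2, -⟩ := hAb p hp
    simp only [Finset.mem_coe, Finset.mem_product, Fintype.mem_piFinset, Finset.mem_Icc]
    exact ⟨fun i => abs_le.mp (h1 i), fun i => abs_le.mp (h2 i)⟩
  have key := count_le ht f hf hfin.toFinset M (fun p hp => hAb p (by simpa using hp))
  have hcount : auxCount s r f X = hfin.toFinset.card := by
    rw [auxCount, ← Set.ncard_eq_toFinset_card A hfin]
  rw [hcount]
  have hMX : (((2 * M + 1).toNat : ℕ) : ℝ) ≤ 3 * X ^ r := by
    have e : (((2 * M + 1).toNat : ℕ) : ℤ) = 2 * M + 1 := Int.toNat_of_nonneg (by omega)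
    have e' : (((2 * M + 1).toNat : ℕ) : ℝ) = 2 * (M : ℝ) + 1 := by
      exact_mod_cast congrArg (Int.cast : ℤ → ℝ) e
    rw [e']
    have := Int.floor_le (X ^ r)
    rw [← hM] at this
    linarith
  have key' : (hfin.toFinset.card : ℝ) ≤
      (D : ℝ) ^ (2 * s) * (2 ^ (2 * s) * (((2 * M + 1).toNat : ℕ) : ℝ) ^ (2 * s)) := by
    exact_mod_cast key
  refine key'.trans ?_
  calc _ ≤ (D : ℝ) ^ (2 * s) * (2 ^ (2 * s) * (3 * X ^ r) ^ (2 * s)) := by gcongr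
    _ = _ := by
      rw [mul_pow, ← pow_mul]
      have : r * (2 * s) = 2 * r * s := by ring
      rw [this]; ring
end

section
/- Suppose n ≥ 1 and f = (f_1,…,f_{2n+1}) is a well-conditioned (2n+1)-tuple of polynomials with integer coefficients. Then there exists a nonzero polynomial Ψ ∈ ℤ[w_1,…,w_{2n+1}] such that Ψ(σ_{1,n}(z;h),…,σ_{2n+1,n}(z;h)) = 0 identically as a polynomial in z_1,…,z_n,h_1,…,h_n, and yet Ψ(σ_{1,n+1}(z;h),…,σ_{2n+1,n+1}(z;h)) is not the zero polynomial in z_1,…,z_{n+1},h_1,…,h_{n+1}. -/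
open Finset

/-- `sigmaPoly f n j` is the polynomial `σ_{j,n}(z;h) = h_1 f_j(z_1) + ⋯ + h_n f_j(z_n)`
in the variables `z_1, …, z_n` (encoded as `Sum.inl`) and `h_1, …, h_n` (encoded as
`Sum.inr`). -/
noncomputable def sigmaPoly {t : ℕ} (f : Fin t → Polynomial ℤ) (n : ℕ) (j : Fin t) :
    MvPolynomial (Fin n ⊕ Fin n) ℤ :=
  ∑ i : Fin n,
    MvPolynomial.X (Sum.inr i) * Polynomial.aeval (MvPolynomial.X (Sum.inl i)) (f j)

noncomputable def curvePt {t : ℕ} (f : Fin t → Polynomial ℤ) (z : ℚ) : Fin t → ℚ :=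
  fun j => Polynomial.aeval z (f j)

noncomputable def secPt {t : ℕ} (f : Fin t → Polynomial ℤ) (m : ℕ) (z h : Fin m → ℚ) :
    Fin t → ℚ :=
  ∑ i, h i • curvePt f (z i)

theorem aeval_sigma_eq_zero_iff {t : ℕ} (f : Fin t → Polynomial ℤ) (m : ℕ)
    (P : MvPolynomial (Fin t) ℤ) :
    MvPolynomial.aeval (fun j => sigmaPoly f m j) P = 0 ↔
      ∀ z h : Fin m → ℚ, MvPolynomial.aeval (secPt f m z h) P = 0 := by
  have key : ∀ z h : Fin m → ℚ, MvPolynomial.aeval (secPt f m z h) P =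
      MvPolynomial.aeval (Sum.elim z h)
        (MvPolynomial.aeval (fun j => sigmaPoly f m j) P) := by
    intro z h
    rw [← AlgHom.comp_apply, MvPolynomial.comp_aeval]
    congr 2
    funext j
    simp [secPt, curvePt, sigmaPoly, ← Polynomial.aeval_algHom_apply]
  constructor
  · intro h0 z h
    rw [key, h0, map_zero]
  · intro h0
    apply MvPolynomial.map_injective (Int.castRingHom ℚ) Int.cast_injective
    apply MvPolynomial.funext
    intro x
    have := h0 (fun i => x (Sum.inl i)) (fun i => x (Sum.inr i))
    rw [key] at this
    have hx : Sum.elim (fun i => x (Sum.inl i)) (fun i => x (Sum.inr i)) = x := by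
      funext i; cases i <;> rfl
    rw [hx] at this
    rw [MvPolynomial.eval_map, map_zero, map_zero, ← this, MvPolynomial.aeval_def]
    rfl

theorem span_curvePt {t : ℕ} (f : Fin t → Polynomial ℤ) (hf : WellConditioned f) :
    Submodule.span ℚ (Set.range (curvePt f)) = ⊤ := by
  by_contra hne
  obtain ⟨φ, hφ, hle⟩ := Submodule.exists_le_ker_of_lt_top _ (lt_top_iff_ne_top.2 hne)
  apply hφ
  set u : Fin t → ℚ := fun j => φ (Pi.single j 1) with hu
  set g : Fin t → Polynomial ℚ :=
    fun j => Polynomial.C (u j) * (f j).map (Int.castRingHom ℚ) with hg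
  have hsum : ∑ j, g j = 0 := by
    apply Polynomial.funext
    intro z
    have h1 : φ (curvePt f z) = 0 := hle (Submodule.subset_span ⟨z, rfl⟩)
    rw [LinearMap.pi_apply_eq_sum_univ] at h1
    rw [Polynomial.eval_finsetSum, Polynomial.eval_zero, ← h1]
    refine Finset.sum_congr rfl fun j _ => ?_
    have h2 : (fun k => if j = k then (1 : ℚ) else 0) = Pi.single j 1 := by
      funext k; simp [Pi.single_apply, eq_comm]
    rw [h2]
    simp [hg, hu, curvePt, Polynomial.aeval_def, Polynomial.eval_map, mul_comm]
  have hmap : ∀ j, (f j).map (Int.castRingHom ℚ) ≠ 0 := fun j =>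
    (Polynomial.map_ne_zero_iff Int.cast_injective).2 (hf.1 j)
  have hdeg : ∀ j, u j ≠ 0 → (g j).degree = (f j).natDegree := by
    intro j hj
    rw [hg]
    simp only
    rw [Polynomial.degree_C_mul hj,
      Polynomial.degree_map_eq_of_injective Int.cast_injective,
      Polynomial.degree_eq_natDegree (hf.1 j)]
  have hu0 : ∀ j, g j ≠ 0 → u j ≠ 0 := by
    intro j hj h0
    exact hj (by simp [hg, h0])
  have hd := Polynomial.degree_sum_eq_of_disjoint g Finset.univ (by
    rintro i ⟨-, hi⟩ j ⟨-, hj⟩ hij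
    simp only [Function.onFun, Function.comp]
    rw [hdeg i (hu0 i hi), hdeg j (hu0 j hj)]
    intro h
    have h' : (f i).natDegree = (f j).natDegree := by exact_mod_cast h
    rcases lt_or_gt_of_ne hij with h1 | h1
    · exact absurd h' (hf.2.1 _ _ h1).ne'
    · exact absurd h' (hf.2.1 _ _ h1).ne)
  rw [hsum, Polynomial.degree_zero] at hd
  have hz : ∀ j, u j = 0 := by
    intro j
    by_contra hj
    have h1 : (g j).degree ≤ Finset.univ.sup fun i => (g i).degree :=
      Finset.le_sup (f := fun i => (g i).degree) (Finset.mem_univ j)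
    rw [← hd, hdeg j hj] at h1
    simp at h1
  refine LinearMap.pi_ext' fun j => LinearMap.ext_ring ?_
  simpa [hu] using hz j

theorem secPt_snoc {t : ℕ} (f : Fin t → Polynomial ℤ) (m : ℕ) (z h : Fin m → ℚ) (a b : ℚ) :
    secPt f (m + 1) (Fin.snoc z a) (Fin.snoc h b) = secPt f m z h + b • curvePt f a := by
  simp [secPt, Fin.sum_univ_castSucc]

theorem exists_dependence {t : ℕ} (n : ℕ) (ht : 2 * n < t) (f : Fin t → Polynomial ℤ) :
    ∃ Ψ : MvPolynomial (Fin t) ℤ, Ψ ≠ 0 ∧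
      MvPolynomial.aeval (fun j => sigmaPoly f n j) Ψ = 0 := by
  by_contra! hcon
  have hind : AlgebraicIndependent ℤ (fun j => sigmaPoly f n j) := by
    rw [algebraicIndependent_iff]
    intro p hp
    by_contra h
    exact hcon p h hp
  have h1 := hind.cardinalMk_le_trdeg
  rw [MvPolynomial.trdeg_of_isDomain] at h1
  simp at h1
  norm_cast at h1
  omega

theorem exists_polynomial_identity
    (n : ℕ) (hn : 1 ≤ n) (f : Fin (2 * n + 1) → Polynomial ℤ)
    (hf : WellConditioned f) :
    ∃ Ψ : MvPolynomial (Fin (2 * n + 1)) ℤ, Ψ ≠ 0 ∧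
      MvPolynomial.aeval (fun j => sigmaPoly f n j) Ψ = 0 ∧
      MvPolynomial.aeval (fun j => sigmaPoly f (n + 1) j) Ψ ≠ 0 := by
  by_contra hcon
  have H : ∀ Ψ : MvPolynomial (Fin (2 * n + 1)) ℤ,
      (∀ z h : Fin n → ℚ, MvPolynomial.aeval (secPt f n z h) Ψ = 0) →
      ∀ z h : Fin (n + 1) → ℚ, MvPolynomial.aeval (secPt f (n + 1) z h) Ψ = 0 := by
    intro Ψ h0
    rw [← aeval_sigma_eq_zero_iff] at h0 ⊢
    by_contra h1
    refine hcon ⟨Ψ, ?_, h0, h1⟩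
    rintro rfl
    simp at h1
  -- the same implication for rational polynomials, by clearing denominators
  have HQ : ∀ Φ : MvPolynomial (Fin (2 * n + 1)) ℚ,
      (∀ z h : Fin n → ℚ, MvPolynomial.eval (secPt f n z h) Φ = 0) →
      ∀ z h : Fin (n + 1) → ℚ, MvPolynomial.eval (secPt f (n + 1) z h) Φ = 0 := by
    intro Φ h0
    let _ : Algebra (MvPolynomial (Fin (2 * n + 1)) ℤ) (MvPolynomial (Fin (2 * n + 1)) ℚ) :=
      MvPolynomial.algebraMvPolynomial
    obtain ⟨⟨Ψ, ⟨_, d, hd, rfl⟩⟩, hΨ⟩ := IsLocalization.surj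
      ((nonZeroDivisors ℤ).map (MvPolynomial.C (σ := Fin (2 * n + 1)))) Φ
    have hd0 : (d : ℚ) ≠ 0 := by
      have := nonZeroDivisors.ne_zero hd
      exact_mod_cast this
    have key : ∀ x : Fin (2 * n + 1) → ℚ,
        MvPolynomial.aeval x Ψ = MvPolynomial.eval x Φ * d := by
      intro x
      have := congrArg (MvPolynomial.eval x) hΨ
      simp only [MvPolynomial.algebraMap_def, map_mul, MvPolynomial.eval_map] at this
      rw [MvPolynomial.aeval_def, ← this, MvPolynomial.eval₂_C]
      rfl
    intro z h
    have := H Ψ (fun z h => by rw [key, h0, zero_mul]) z h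
    rw [key] at this
    exact (mul_eq_zero.1 this).resolve_right hd0
  have HT : ∀ v ∈ Submodule.span ℚ (Set.range (curvePt f)),
      ∀ Φ : MvPolynomial (Fin (2 * n + 1)) ℚ,
      (∀ z h : Fin n → ℚ, MvPolynomial.eval (secPt f n z h) Φ = 0) →
      ∀ z h : Fin n → ℚ, MvPolynomial.eval (secPt f n z h + v) Φ = 0 := by
    intro v hv
    induction hv using Submodule.closure_induction with
    | zero =>
      intro Φ h0 z h
      rw [add_zero, h0]
    | add x y _ _ ihx ihy =>
      intro Φ h0 z h
      have tr : ∀ w : Fin (2 * n + 1) → ℚ, MvPolynomial.eval w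
          (MvPolynomial.aeval (fun j => MvPolynomial.X j + MvPolynomial.C (x j)) Φ) =
          MvPolynomial.eval (w + x) Φ := by
        intro w
        have e : (MvPolynomial.aeval w).comp (MvPolynomial.aeval
            (fun j => MvPolynomial.X j + MvPolynomial.C (x j))) =
            MvPolynomial.aeval (R := ℚ) (w + x) := by
          apply MvPolynomial.algHom_ext
          intro j
          simp
        have := DFunLike.congr_fun e Φ
        simpa only [AlgHom.comp_apply, MvPolynomial.aeval_eq_eval, RingHom.coe_coe] using this
      have := ihy _ (fun z h => by rw [tr]; exact ihx Φ h0 z h) z h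
      rw [tr] at this
      rwa [add_comm x y, ← add_assoc]
    | smul_mem r x hx =>
      obtain ⟨a, rfl⟩ := hx
      intro Φ h0 z h
      rw [← secPt_snoc]
      exact HQ Φ h0 _ _
  obtain ⟨Ψ, hΨ0, hΨ⟩ := exists_dependence n (Nat.lt_succ_self _) f
  apply hΨ0
  apply MvPolynomial.map_injective (Int.castRingHom ℚ) Int.cast_injective
  apply MvPolynomial.funext
  intro x
  have h1 := HT x (by rw [span_curvePt f hf]; trivial) (MvPolynomial.map (Int.castRingHom ℚ) Ψ)
    (fun z h => by
      have := (aeval_sigma_eq_zero_iff f n Ψ).1 hΨ z h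
      rw [MvPolynomial.eval_map, ← this, MvPolynomial.aeval_def]
      rfl) 0 0
  have h2 : secPt f n 0 0 = 0 := by simp [secPt]
  rw [h2, zero_add] at h1
  rw [h1, map_zero, map_zero]
end

section
/- Suppose n ≥ 1, f = (f_1,…,f_{2n+1}) is a well-conditioned (2n+1)-tuple of polynomials with integer coefficients, and Ψ ∈ ℤ[w_1,…,w_{2n+1}] is a nonzero polynomial such that Ψ(σ_{1,n}(z;h),…,σ_{2n+1,n}(z;h)) = 0 identically and Ψ(σ_{1,n+1}(z;h),…,σ_{2n+1,n+1}(z;h)) is not the zero polynomial. Then there exists a nonzero polynomial Φ ∈ ℤ[z_1,…,z_{n+1},h_1,…,h_{n+1}] such that, identically in z_1,…,z_{n+1},h_1,…,h_{n+1}, Ψ(σ_{1,n+1}(z;h),…,σ_{2n+1,n+1}(z;h)) = Φ(z;h)·h_1⋯h_{n+1}·∏_{1≤i<j≤n+1}(z_i−z_j). -/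
open Finset

section helpers
open MvPolynomial

theorem X_sub_dvd_sub {σ : Type*} [DecidableEq σ] (v : σ) (a P : MvPolynomial σ ℤ) :
    X v - a ∣ P - aeval (Function.update X v a) P := by
  rw [← Ideal.mem_span_singleton, ← Ideal.Quotient.eq]
  have h : (Ideal.Quotient.mkₐ ℤ (Ideal.span {X v - a})) =
      (Ideal.Quotient.mkₐ ℤ (Ideal.span {X v - a})).comp (aeval (Function.update X v a)) := by
    ext w
    by_cases hw : w = v
    · subst hw
      simp [Ideal.Quotient.eq]
    · simp [hw]
  exact DFunLike.congr_fun h P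

theorem X_sub_dvd_iff {σ : Type*} [DecidableEq σ] (v : σ) (a : MvPolynomial σ ℤ)
    (ha : aeval (Function.update X v a) a = a) (P : MvPolynomial σ ℤ) :
    X v - a ∣ P ↔ aeval (Function.update X v a) P = 0 := by
  constructor
  · rintro ⟨Q, rfl⟩
    rw [map_mul, map_sub, ha, aeval_X, Function.update_self, sub_self, zero_mul]
  · intro h
    have := X_sub_dvd_sub v a P
    rwa [h, sub_zero] at this

theorem X_sub_irred {σ : Type*} [DecidableEq σ] (v : σ) (a : MvPolynomial σ ℤ)
    (ha : aeval (Function.update X v a) a = a) (hne : X v ≠ a) :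
    Irreducible (X v - a) := by
  apply Prime.irreducible
  refine ⟨sub_ne_zero.2 hne, ?_, ?_⟩
  · intro h
    have := (X_sub_dvd_iff v a ha 1).1 h.dvd
    simp at this
  · intro p q h
    simp only [X_sub_dvd_iff v a ha, map_mul, mul_eq_zero] at h ⊢
    exact h

theorem vanish_of_factor {n t : ℕ} (f : Fin t → Polynomial ℤ) (Ψ : MvPolynomial (Fin t) ℤ)
    (hvanish : aeval (fun j => sigmaPoly f n j) Ψ = 0) {A : Type*} [CommRing A] [Algebra ℤ A]
    (φ : MvPolynomial (Fin (n + 1) ⊕ Fin (n + 1)) ℤ →ₐ[ℤ] A) (ψ : Fin n ⊕ Fin n → A)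
    (h : ∀ j, φ (sigmaPoly f (n + 1) j) = aeval ψ (sigmaPoly f n j)) :
    φ (aeval (fun j => sigmaPoly f (n + 1) j) Ψ) = 0 := by
  have h1 : φ.comp (aeval (fun j => sigmaPoly f (n + 1) j)) =
      (aeval ψ).comp (aeval (fun j => sigmaPoly f n j)) := by
    apply MvPolynomial.algHom_ext
    intro j
    rw [AlgHom.comp_apply, AlgHom.comp_apply, aeval_X, aeval_X]
    exact h j
  have h2 := DFunLike.congr_fun h1 Ψ
  rw [AlgHom.comp_apply, AlgHom.comp_apply, hvanish, map_zero] at h2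
  exact h2

theorem map_sigmaPoly {n t : ℕ} (f : Fin t → Polynomial ℤ) {A : Type*} [CommRing A] [Algebra ℤ A]
    (φ : MvPolynomial (Fin n ⊕ Fin n) ℤ →ₐ[ℤ] A) (j : Fin t) :
    φ (sigmaPoly f n j) =
      ∑ i : Fin n, φ (X (Sum.inr i)) * Polynomial.aeval (φ (X (Sum.inl i))) (f j) := by
  simp only [sigmaPoly, map_sum, map_mul, Polynomial.aeval_algHom_apply]

theorem dvd_h {n t : ℕ} (f : Fin t → Polynomial ℤ) (Ψ : MvPolynomial (Fin t) ℤ)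
    (hvanish : aeval (fun j => sigmaPoly f n j) Ψ = 0) (i : Fin (n + 1)) :
    X (Sum.inr i) - 0 ∣ aeval (fun j => sigmaPoly f (n + 1) j) Ψ := by
  rw [X_sub_dvd_iff _ _ (map_zero _)]
  apply vanish_of_factor f Ψ hvanish _
    (Sum.elim (fun m => X (Sum.inl (i.succAbove m))) (fun m => X (Sum.inr (i.succAbove m))))
  intro j
  rw [map_sigmaPoly, map_sigmaPoly, Fin.sum_univ_succAbove _ i]
  simp only [aeval_X, Function.update_self, zero_mul, zero_add, Sum.elim_inl, Sum.elim_inr]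
  refine Finset.sum_congr rfl fun m _ => ?_
  rw [Function.update_of_ne (by simp [Fin.succAbove_ne]), Function.update_of_ne (by simp)]

theorem aeval_upd_X {n : ℕ} {i k : Fin n} (h : i ≠ k) :
    aeval (R := ℤ) (Function.update X (Sum.inl i) (X (Sum.inl k) : MvPolynomial (Fin n ⊕ Fin n) ℤ))
      (X (Sum.inl k) : MvPolynomial (Fin n ⊕ Fin n) ℤ) = X (Sum.inl k) := by
  rw [aeval_X, Function.update_of_ne (by simpa using h.symm)]

theorem dvd_z {n t : ℕ} (f : Fin t → Polynomial ℤ) (Ψ : MvPolynomial (Fin t) ℤ)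
    (hvanish : aeval (fun j => sigmaPoly f n j) Ψ = 0) (i k : Fin (n + 1)) (hik : i ≠ k) :
    X (Sum.inl i) - X (Sum.inl k) ∣ aeval (fun j => sigmaPoly f (n + 1) j) Ψ := by
  rw [X_sub_dvd_iff _ _ (aeval_upd_X hik)]
  obtain ⟨k, rfl⟩ := Fin.exists_succAbove_eq hik.symm
  apply vanish_of_factor f Ψ hvanish _
    (Sum.elim (fun m => X (Sum.inl (i.succAbove m)))
      (fun m => X (Sum.inr (i.succAbove m)) + if m = k then X (Sum.inr i) else 0))
  intro j
  rw [map_sigmaPoly, map_sigmaPoly, Fin.sum_univ_succAbove _ i]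
  simp only [aeval_X, Function.update_self, Sum.elim_inl, Sum.elim_inr, add_mul,
    Finset.sum_add_distrib, ite_mul, zero_mul, Finset.sum_ite_eq', Finset.sum_ite_eq,
    Finset.mem_univ, if_true]
  refine Eq.trans (add_comm _ _) ?_
  rw [Function.update_of_ne (a := Sum.inr i) (by simp)]
  congr 1
  refine Finset.sum_congr rfl fun m _ => ?_
  rw [Function.update_of_ne (by simp), Function.update_of_ne (by simp [Fin.succAbove_ne])]

theorem irred_h {n : ℕ} (i : Fin n) :
    Irreducible (X (Sum.inr i) - 0 : MvPolynomial (Fin n ⊕ Fin n) ℤ) :=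
  X_sub_irred _ _ (map_zero _) (X_ne_zero _)

theorem irred_z {n : ℕ} {i k : Fin n} (h : i ≠ k) :
    Irreducible (X (Sum.inl i) - X (Sum.inl k) : MvPolynomial (Fin n ⊕ Fin n) ℤ) :=
  X_sub_irred _ _ (aeval_upd_X h) (by simpa using h)

theorem relprime_hh {n : ℕ} {i k : Fin n} (h : i ≠ k) :
    IsRelPrime (X (Sum.inr i) : MvPolynomial (Fin n ⊕ Fin n) ℤ) (X (Sum.inr k)) := by
  rw [← sub_zero (X (Sum.inr i)), (irred_h i).isRelPrime_iff_not_dvd,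
    X_sub_dvd_iff _ _ (map_zero _), aeval_X, Function.update_of_ne (by simpa using h.symm)]
  exact X_ne_zero _

theorem relprime_hz {n : ℕ} (i : Fin n) {a b : Fin n} (h : a ≠ b) :
    IsRelPrime (X (Sum.inr i) : MvPolynomial (Fin n ⊕ Fin n) ℤ)
      (X (Sum.inl a) - X (Sum.inl b)) := by
  rw [← sub_zero (X (Sum.inr i)), (irred_h i).isRelPrime_iff_not_dvd,
    X_sub_dvd_iff _ _ (map_zero _), map_sub, aeval_X, aeval_X,
    Function.update_of_ne (by simp), Function.update_of_ne (by simp), sub_eq_zero]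
  simpa using h

theorem relprime_zz {n : ℕ} {a b c d : Fin n} (hab : a < b) (hcd : c < d)
    (hne : (a, b) ≠ (c, d)) :
    IsRelPrime (X (Sum.inl a) - X (Sum.inl b) : MvPolynomial (Fin n ⊕ Fin n) ℤ)
      (X (Sum.inl c) - X (Sum.inl d)) := by
  rw [(irred_z hab.ne).isRelPrime_iff_not_dvd,
    X_sub_dvd_iff _ _ (aeval_upd_X hab.ne), map_sub, aeval_X, aeval_X, sub_eq_zero]
  simp only [Function.update_apply, Sum.inl.injEq]
  split_ifs with h1 h2 h2 <;> simp only [(X_injective (R := ℤ)).eq_iff, Sum.inl.injEq]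
  · omega
  · rintro rfl; exact hne (by rw [h1])
  · omega
  · omega

end helpers

theorem fundamental_polynomial_identity
    (n : ℕ) (hn : 1 ≤ n) (f : Fin (2 * n + 1) → Polynomial ℤ)
    (hf : WellConditioned f)
    (Ψ : MvPolynomial (Fin (2 * n + 1)) ℤ) (hΨ : Ψ ≠ 0)
    (hvanish : MvPolynomial.aeval (fun j => sigmaPoly f n j) Ψ = 0)
    (hnonvanish : MvPolynomial.aeval (fun j => sigmaPoly f (n + 1) j) Ψ ≠ 0) :
    ∃ Φ : MvPolynomial (Fin (n + 1) ⊕ Fin (n + 1)) ℤ, Φ ≠ 0 ∧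
      MvPolynomial.aeval (fun j => sigmaPoly f (n + 1) j) Ψ =
        Φ * (∏ i : Fin (n + 1), MvPolynomial.X (Sum.inr i)) *
          ∏ p ∈ Finset.univ.filter (fun p : Fin (n + 1) × Fin (n + 1) => p.1 < p.2),
            (MvPolynomial.X (Sum.inl p.1) - MvPolynomial.X (Sum.inl p.2)) := by
  have hdvd : (∏ i : Fin (n + 1), MvPolynomial.X (Sum.inr i)) *
      (∏ p ∈ Finset.univ.filter (fun p : Fin (n + 1) × Fin (n + 1) => p.1 < p.2),
            (MvPolynomial.X (Sum.inl p.1) - MvPolynomial.X (Sum.inl p.2))) ∣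
      MvPolynomial.aeval (fun j => sigmaPoly f (n + 1) j) Ψ := by
    apply IsRelPrime.mul_dvd
    · apply IsRelPrime.prod_left
      intro i _
      apply IsRelPrime.prod_right
      intro p hp
      exact relprime_hz i (Finset.mem_filter.1 hp).2.ne
    · apply Finset.prod_dvd_of_isRelPrime
      · intro i _ k _ h
        exact relprime_hh h
      · intro i _
        simpa only [sub_zero] using dvd_h f Ψ hvanish i
    · apply Finset.prod_dvd_of_isRelPrime
      · intro p hp q hq h
        exact relprime_zz (Finset.mem_filter.1 hp).2 (Finset.mem_filter.1 hq).2 h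
      · intro p hp
        exact dvd_z f Ψ hvanish _ _ (Finset.mem_filter.1 hp).2.ne
  obtain ⟨Φ, hΦ⟩ := hdvd
  refine ⟨Φ, ?_, ?_⟩
  · rintro rfl
    exact hnonvanish (by rw [hΦ, mul_zero])
  · rw [hΦ, mul_comm, mul_assoc]
end

section
/- Let n ≥ 0 and let f = (f_1,…,f_{2n+1}) be a well-conditioned (2n+1)-tuple of polynomials with integer coefficients. Let D_n be the (2n+1)×(2n+1) matrix whose first n rows are (h_i f_j'(z_i))_{1≤j≤2n+1} for 1 ≤ i ≤ n and whose last n+1 rows are (f_j(z_i))_{1≤j≤2n+1} for 1 ≤ i ≤ n+1, where f_j' denotes the derivative of f_j. Then det(D_n) is not identically zero as a polynomial in the variables z_1,…,z_{n+1},h_1,…,h_n. -/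
open Finset

/-- The `(2n+1) × (2n+1)` matrix `D_n`, with entries in the polynomial ring over `ℤ` in
the variables `z_1, …, z_{n+1}` (encoded as `Sum.inl`) and `h_1, …, h_n` (encoded as
`Sum.inr`): its first `n` rows are `(h_i f_j'(z_i))_{1 ≤ j ≤ 2n+1}` for `1 ≤ i ≤ n`, and
its last `n+1` rows are `(f_j(z_i))_{1 ≤ j ≤ 2n+1}` for `1 ≤ i ≤ n+1`. -/
noncomputable def Dmat (n : ℕ) (f : Fin (2 * n + 1) → Polynomial ℤ) :
    Matrix (Fin (2 * n + 1)) (Fin (2 * n + 1)) (MvPolynomial (Fin (n + 1) ⊕ Fin n) ℤ) :=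
  fun i j =>
    if h : (i : ℕ) < n then
      MvPolynomial.X (Sum.inr ⟨(i : ℕ), h⟩) *
        Polynomial.aeval (MvPolynomial.X (Sum.inl ⟨(i : ℕ), by omega⟩))
          (Polynomial.derivative (f j))
    else
      Polynomial.aeval
        (MvPolynomial.X (Sum.inl ⟨(i : ℕ) - n, by have := i.isLt; omega⟩)) (f j)

/-- Two rational polynomials with vanishing Wronskian are linearly dependent. -/
lemma dep_of_wronskian (p q : Polynomial ℚ) (h : Polynomial.wronskian p q = 0) :
    ∃ a b : ℚ, (a ≠ 0 ∨ b ≠ 0) ∧ a • p + b • q = 0 := by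
  by_cases hp : p = 0
  · exact ⟨1, 0, Or.inl one_ne_zero, by simp [hp]⟩
  have hg : EuclideanDomain.gcd p q ≠ 0 := by
    intro h0
    exact hp (EuclideanDomain.gcd_eq_zero_iff.1 h0).1
  obtain ⟨a, ha⟩ := EuclideanDomain.gcd_dvd_left p q
  obtain ⟨b, hb⟩ := EuclideanDomain.gcd_dvd_right p q
  have hbez := EuclideanDomain.gcd_eq_gcd_ab p q
  set g := EuclideanDomain.gcd p q with hgdef
  clear_value g
  have hc : IsCoprime a b := by
    refine ⟨EuclideanDomain.gcdA p q, EuclideanDomain.gcdB p q, ?_⟩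
    apply mul_left_cancel₀ hg
    generalize EuclideanDomain.gcdA p q = u at *
    generalize EuclideanDomain.gcdB p q = v at *
    rw [ha, hb] at hbez
    linear_combination -hbez
  have hw : Polynomial.wronskian a b = 0 := by
    have : g ^ 2 * Polynomial.wronskian a b = 0 := by
      rw [← h, ha, hb]
      simp only [Polynomial.wronskian, Polynomial.derivative_mul]
      ring
    rcases mul_eq_zero.1 this with h1 | h1
    · exact absurd (pow_eq_zero_iff (two_ne_zero) |>.1 h1) hg
    · exact h1
  obtain ⟨h1, h2⟩ := hc.wronskian_eq_zero_iff.1 hw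
  have e1 := Polynomial.eq_C_of_derivative_eq_zero h1
  have e2 := Polynomial.eq_C_of_derivative_eq_zero h2
  have ha0 : a.coeff 0 ≠ 0 := by
    intro h0
    rw [h0] at e1
    apply hp
    rw [ha, e1]
    simp
  refine ⟨b.coeff 0, - a.coeff 0, Or.inr (neg_ne_zero.2 ha0), ?_⟩
  rw [ha, hb, Polynomial.smul_eq_C_mul, Polynomial.smul_eq_C_mul, Polynomial.C_neg, ← e1, ← e2]
  ring

/-- A nonzero rational polynomial is nonzero at some point. -/
lemma exists_eval_ne (p : Polynomial ℚ) (hp : p ≠ 0) : ∃ z, p.eval z ≠ 0 := by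
  by_contra! h
  exact hp (Polynomial.funext (by simpa using h))

/-- Injectivity of generic evaluation of values and derivatives. -/
lemma key (n : ℕ) : ∀ (E : Type) [AddCommGroup E] [Module ℚ E] [FiniteDimensional ℚ E]
    (φ : E →ₗ[ℚ] Polynomial ℚ), Function.Injective φ → Module.finrank ℚ E ≤ 2 * n + 1 →
    ∃ z : ℕ → ℚ, ∀ e : E, (∀ i, i ≤ n → (φ e).eval (z i) = 0) →
      (∀ i, i < n → (Polynomial.derivative (φ e)).eval (z i) = 0) → e = 0 := by
  have small : ∀ (n : ℕ) (E : Type) [AddCommGroup E] [Module ℚ E] [FiniteDimensional ℚ E]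
    (φ : E →ₗ[ℚ] Polynomial ℚ), Function.Injective φ → Module.finrank ℚ E ≤ 1 →
    ∃ z : ℕ → ℚ, ∀ e : E, (∀ i, i ≤ n → (φ e).eval (z i) = 0) →
      (∀ i, i < n → (Polynomial.derivative (φ e)).eval (z i) = 0) → e = 0 := by
    intro n E _ _ _ φ hφ h1
    obtain ⟨v, hv⟩ := finrank_le_one_iff.1 h1
    by_cases h0 : φ v = 0
    · have hv0 : v = 0 := hφ (by simpa using h0)
      refine ⟨0, fun e _ _ => ?_⟩
      obtain ⟨c, rfl⟩ := hv e
      simp [hv0]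
    · obtain ⟨w, hw⟩ := exists_eval_ne _ h0
      refine ⟨fun _ => w, fun e he _ => ?_⟩
      obtain ⟨c, rfl⟩ := hv e
      have := he 0 (Nat.zero_le _)
      simp only [map_smul, Polynomial.eval_smul, smul_eq_mul, mul_eq_zero, hw, or_false] at this
      simp [this]
  induction n with
  | zero =>
    intro E _ _ _ φ hφ h1
    exact small 0 E φ hφ (by simpa using h1)
  | succ k ih =>
    intro E _ _ _ φ hφ h1
    by_cases h2 : Module.finrank ℚ E ≤ 1
    · exact small _ E φ hφ h2
    push Not at h2
    let B := Module.finBasis ℚ E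
    set x := B ⟨0, by omega⟩ with hx
    set y := B ⟨1, by omega⟩ with hy
    have hW : Polynomial.wronskian (φ x) (φ y) ≠ 0 := by
      intro h
      obtain ⟨a, b, hab, hs⟩ := dep_of_wronskian _ _ h
      have hli : LinearIndependent ℚ ![x, y] := by
        have := B.linearIndependent.comp
          ![(⟨0, by omega⟩ : Fin (Module.finrank ℚ E)), ⟨1, by omega⟩] (by
            intro i j hij
            fin_cases i <;> fin_cases j <;> simp_all)
        convert this using 1
        ext i
        fin_cases i <;> rfl
      have hs' : a • x + b • y = 0 := hφ (by simpa using hs)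
      have := LinearIndependent.pair_iff.1 hli a b hs'
      tauto
    obtain ⟨w, hw⟩ := exists_eval_ne _ hW
    let L : E →ₗ[ℚ] ℚ × ℚ :=
      ((Polynomial.leval w).comp φ).prod
        (((Polynomial.leval w).comp Polynomial.derivative).comp φ)
    have hL : ∀ e, L e = ((φ e).eval w, (Polynomial.derivative (φ e)).eval w) := fun e => rfl
    have hsurj : Function.Surjective L := by
      rintro ⟨s, t⟩
      simp only [Polynomial.wronskian, Polynomial.eval_sub, Polynomial.eval_mul] at hw
      set p := (φ x).eval w
      set q := (φ y).eval w
      set p' := (Polynomial.derivative (φ x)).eval w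
      set q' := (Polynomial.derivative (φ y)).eval w
      refine ⟨((s * q' - t * q) / (p * q' - p' * q)) • x +
        ((t * p - s * p') / (p * q' - p' * q)) • y, ?_⟩
      rw [map_add, map_smul, map_smul, hL, hL]
      ext
      · change (s * q' - t * q) / (p * q' - p' * q) * p +
          (t * p - s * p') / (p * q' - p' * q) * q = s
        clear_value p q p' q'
        rw [div_mul_eq_mul_div, div_mul_eq_mul_div, ← add_div, div_eq_iff hw]
        ring
      · change (s * q' - t * q) / (p * q' - p' * q) * p' +
          (t * p - s * p') / (p * q' - p' * q) * q' = t
        clear_value p q p' q'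
        rw [div_mul_eq_mul_div, div_mul_eq_mul_div, ← add_div, div_eq_iff hw]
        ring
    have hr := L.finrank_range_add_finrank_ker
    rw [LinearMap.range_eq_top.2 hsurj, finrank_top] at hr
    simp only [Module.finrank_prod, Module.finrank_self] at hr
    obtain ⟨z, hz⟩ := ih (LinearMap.ker L) (φ.comp (LinearMap.ker L).subtype)
      (hφ.comp Subtype.val_injective) (by omega)
    refine ⟨fun i => Nat.casesOn i w z, fun e h3 h4 => ?_⟩
    have hk : e ∈ LinearMap.ker L := by
      rw [LinearMap.mem_ker, hL]
      have e1 : (φ e).eval w = 0 := h3 0 (Nat.zero_le _)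
      have e2 : (Polynomial.derivative (φ e)).eval w = 0 := h4 0 (Nat.succ_pos _)
      rw [e1, e2]
      rfl
    have := hz ⟨e, hk⟩ (fun i hi => h3 (i + 1) (by omega)) (fun i hi => h4 (i + 1) (by omega))
    exact congrArg Subtype.val this

/-- Polynomials of distinct degrees are linearly independent. -/
lemma linInd {t : ℕ} (f : Fin t → Polynomial ℤ) (hf : WellConditioned f) :
    LinearIndependent ℚ (fun j => (f j).map (Int.castRingHom ℚ)) := by
  rw [Fintype.linearIndependent_iff]
  intro g hg i
  by_contra hi
  have hinj : Function.Injective (Int.castRingHom ℚ) := Int.cast_injective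
  have hd : ∀ j, g j ≠ 0 →
      (g j • (f j).map (Int.castRingHom ℚ)).degree = ((f j).natDegree : WithBot ℕ) := by
    intro j hj
    rw [Polynomial.smul_eq_C_mul, Polynomial.degree_C_mul hj,
      Polynomial.degree_map_eq_of_injective hinj, Polynomial.degree_eq_natDegree (hf.1 j)]
  have := Polynomial.degree_sum_eq_of_disjoint
    (fun j => g j • (f j).map (Int.castRingHom ℚ)) Finset.univ (by
      rintro a ⟨-, ha⟩ b ⟨-, hb⟩ hab
      have ha' : g a ≠ 0 := fun h => ha (by simp [h])
      have hb' : g b ≠ 0 := fun h => hb (by simp [h])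
      simp only [Function.onFun, Function.comp, hd a ha', hd b hb']
      rcases lt_or_gt_of_ne hab with h | h
      · have := hf.2.1 a b h
        exact_mod_cast this.ne'
      · have := hf.2.1 b a h
        exact_mod_cast this.ne)
  rw [hg, Polynomial.degree_zero] at this
  have h2 := Finset.le_sup (f := fun j => (g j • (f j).map (Int.castRingHom ℚ)).degree)
    (Finset.mem_univ i)
  rw [← this] at h2
  simp only [hd i hi] at h2
  simp at h2

theorem det_Dmat_ne_zero
    (n : ℕ) (f : Fin (2 * n + 1) → Polynomial ℤ) (hf : WellConditioned f) :
    Matrix.det (Dmat n f) ≠ 0 := by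
  intro hdet
  have hli := linInd f hf
  set F : Fin (2 * n + 1) → Polynomial ℚ := fun j => (f j).map (Int.castRingHom ℚ) with hF
  obtain ⟨z, hz⟩ := key n (Fin (2 * n + 1) → ℚ) (Fintype.linearCombination ℚ F)
    (LinearMap.ker_eq_bot.1 (LinearMap.ker_eq_bot'.2 fun m hm => funext
      (Fintype.linearIndependent_iff.1 hli m (by simpa [Fintype.linearCombination_apply] using hm)))) (by simp)
  let ψ : MvPolynomial (Fin (n + 1) ⊕ Fin n) ℤ →+* ℚ :=
    MvPolynomial.eval₂Hom (Int.castRingHom ℚ) (Sum.elim (fun i => z i) (fun _ => 1))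
  have hψ : ∀ (i : Fin (n + 1)) (p : Polynomial ℤ),
      ψ (Polynomial.aeval (MvPolynomial.X (Sum.inl i)) p) =
        (p.map (Int.castRingHom ℚ)).eval (z i) := by
    intro i p
    rw [Polynomial.aeval_def, Polynomial.hom_eval₂, Polynomial.eval_map]
    congr 1
    · exact RingHom.ext_int _ _
    · simp [ψ]
  have hd : ((Dmat n f).map ψ).det = 0 := by
    have := congrArg ψ hdet
    rwa [RingHom.map_det, map_zero] at this
  obtain ⟨v, hv, hv0⟩ := Matrix.exists_mulVec_eq_zero_iff.2 hd
  apply hv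
  apply hz
  · intro i hi
    have := congrFun hv0 ⟨n + i, by omega⟩
    simp only [Matrix.mulVec, dotProduct, Matrix.map_apply, Dmat, Pi.zero_apply] at this
    simp only [Nat.not_lt.2 (Nat.le_add_right n i), dite_false, hψ, Nat.add_sub_cancel_left] at this
    rw [Fintype.linearCombination_apply, Polynomial.eval_finsetSum, ← this]
    refine Finset.sum_congr rfl fun j _ => ?_
    simp [hF, mul_comm]
  · intro i hi
    have := congrFun hv0 ⟨i, by omega⟩
    simp only [Matrix.mulVec, dotProduct, Matrix.map_apply, Dmat, Pi.zero_apply] at this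
    simp only [hi, dite_true, map_mul, hψ] at this
    rw [Fintype.linearCombination_apply, Polynomial.derivative_sum, Polynomial.eval_finsetSum,
      ← this]
    refine Finset.sum_congr rfl fun j _ => ?_
    simp [hF, ψ, mul_comm, Polynomial.derivative_map]
end

section
/- Suppose f ∈ ℤ[x] is a polynomial of degree k ≥ 1. Let u be an integer with 1 ≤ u ≤ k, and let h_1,…,h_u and a_1,…,a_u be fixed integers such that (h_1,…,h_u) ≠ (0,…,0) and a_i ≠ a_j whenever 1 ≤ i < j ≤ u. Then for any integer n, the equation ∑_{i=1}^u h_i f(z + a_i) = n has at most k integer solutions z. -/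
open Finset

theorem shifted_polynomial_equation_few_solutions
    (f : Polynomial ℤ) (k : ℕ) (hk : 1 ≤ k) (hdeg : f.natDegree = k)
    (u : ℕ) (hu : 1 ≤ u) (huk : u ≤ k)
    (h a : Fin u → ℤ) (hh : h ≠ 0)
    (ha : ∀ i j : Fin u, i < j → a i ≠ a j) (n : ℤ) :
    ∃ S : Finset ℤ, S.card ≤ k ∧
      ∀ z : ℤ, ∑ i, h i * f.eval (z + a i) = n → z ∈ S := by
  classical
  have hinj : Function.Injective a := by
    intro i j hij
    by_contra hne
    rcases lt_or_gt_of_ne hne with hl | hl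
    · exact ha i j hl hij
    · exact ha j i hl hij.symm
  have hex : ∃ j : ℕ, j < u ∧ ∑ i, h i * a i ^ j ≠ 0 := by
    by_contra! hcon
    exact hh (Matrix.eq_zero_of_forall_pow_sum_mul_pow_eq_zero hinj (fun i => hcon i i.2))
  obtain ⟨hju, hjne⟩ := Nat.find_spec hex
  have hmin : ∀ m, m < Nat.find hex → ∑ i, h i * a i ^ m = 0 := by
    intro m hm
    have := Nat.find_min hex hm
    by_contra hc
    exact this ⟨hm.trans hju, hc⟩
  generalize Nat.find hex = j at *
  set P : Polynomial ℤ :=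
    ∑ i, Polynomial.C (h i) * Polynomial.taylor (a i) f - Polynomial.C n with hP
  have hg : (Polynomial.hasseDeriv (k - j) f).natDegree < j + 1 := by
    have := Polynomial.natDegree_hasseDeriv_le f (k - j)
    omega
  have hcoeff : P.coeff (k - j) ≠ 0 := by
    have h1 : P.coeff (k - j) =
        (Polynomial.hasseDeriv (k - j) f).coeff j * ∑ i, h i * a i ^ j := by
      rw [hP, Polynomial.coeff_sub, Polynomial.finset_sum_coeff, Polynomial.coeff_C,
        if_neg (by omega), sub_zero]
      simp only [Polynomial.coeff_C_mul, Polynomial.taylor_coeff]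
      simp only [Polynomial.eval_eq_sum_range' hg, Finset.mul_sum]
      rw [Finset.sum_comm, Finset.sum_range_succ, Finset.sum_eq_zero, zero_add]
      · exact Finset.sum_congr rfl fun i _ => by ring
      · intro m hm
        have := hmin m (Finset.mem_range.1 hm)
        calc _ = (Polynomial.hasseDeriv (k - j) f).coeff m * ∑ i, h i * a i ^ m := by
              rw [Finset.mul_sum]
              exact Finset.sum_congr rfl fun i _ => by ring
          _ = 0 := by rw [this, mul_zero]
    rw [h1, Polynomial.hasseDeriv_coeff]
    have hjk : j + (k - j) = k := by omega
    rw [hjk]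
    have hf : f.coeff k ≠ 0 := by
      rw [← hdeg]
      have : f ≠ 0 := by
        rintro rfl
        simp at hdeg
        omega
      exact Polynomial.leadingCoeff_ne_zero.2 this
    have hc : ((k.choose (k - j) : ℕ) : ℤ) ≠ 0 := by
      exact_mod_cast (Nat.choose_pos (Nat.sub_le k j)).ne'
    exact mul_ne_zero (mul_ne_zero hc hf) hjne
  have hP0 : P ≠ 0 := by
    intro h0
    rw [h0] at hcoeff
    simp at hcoeff
  have hPdeg : P.natDegree ≤ k := by
    refine (Polynomial.natDegree_sub_le _ _).trans (max_le ?_ (by simp))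
    refine Polynomial.natDegree_sum_le_of_forall_le _ _ fun i _ => ?_
    refine (Polynomial.natDegree_C_mul_le _ _).trans ?_
    rw [Polynomial.natDegree_taylor, hdeg]
  refine ⟨P.roots.toFinset,
    (Multiset.toFinset_card_le _).trans ((Polynomial.card_roots' P).trans hPdeg), ?_⟩
  intro z hz
  rw [Multiset.mem_toFinset, Polynomial.mem_roots hP0, Polynomial.IsRoot.def, hP]
  simp [Polynomial.eval_finset_sum, Polynomial.taylor_eval, hz]
end
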